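/- arXiv:2204.04755 — 4 statements merged into one kernel-verified Lean document; each statement's English description precedes it below -/
import Mathlib

section
/- Let q ≥ 2. Let H be a distance-regular graph with intersection array {q²−1, q²−q, 1; 1, q, q²−1} such that the relation x ≈ y ⟺ (x = y or dist_H(x,y) = 3) is an equivalence relation on the vertices of H whose classes (fibres) each have exactly q elements. Let P be the set of fibres, and let 𝓛 be a family of subsets of P such that |P| = q², every member of 𝓛 has exactly q elements, and any two distinct elements of P lie in exactly one common member of 𝓛 (so that (P, 𝓛) is an affine plane of order q). Define a graph Γ on the disjoint union {v} ⊔ 𝓛 ⊔ V(H) by: v is adjacent to every element of 𝓛; two distinct elements ℓ, m of 𝓛 are adjacent iff ℓ ∩ m = ∅; ℓ ∈ 𝓛 is adjacent to x ∈ V(H) iff the fibre of x belongs to ℓ; and two vertices of V(H) are adjacent iff they are adjacent in H. Then Γ is a strongly regular graph with parameters (q³+q²+q+1, q²+q, q−1, q+1). -/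
open scoped Classical

/-- `H` is a connected distance-regular graph of diameter 3 with intersection array
`{b₀, b₁, b₂; c₁, c₂, c₃}`. -/
def IsDRG3 {V : Type*} (H : SimpleGraph V) (b0 b1 b2 c1 c2 c3 : ℕ) : Prop :=
  H.Connected ∧ (∀ u w : V, H.dist u w ≤ 3) ∧ (∃ u w : V, H.dist u w = 3) ∧
  (∀ x : V, (H.neighborSet x).ncard = b0) ∧
  (∀ u w : V, H.dist u w = 1 →
    {y | H.Adj w y ∧ H.dist u y = 0}.ncard = c1 ∧
    {y | H.Adj w y ∧ H.dist u y = 2}.ncard = b1) ∧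
  (∀ u w : V, H.dist u w = 2 →
    {y | H.Adj w y ∧ H.dist u y = 1}.ncard = c2 ∧
    {y | H.Adj w y ∧ H.dist u y = 3}.ncard = b2) ∧
  (∀ u w : V, H.dist u w = 3 →
    {y | H.Adj w y ∧ H.dist u y = 2}.ncard = c3 ∧
    {y | H.Adj w y ∧ H.dist u y = 4}.ncard = 0)

/-- The fibre of a vertex `x`: the set of vertices equal to `x` or at distance 3 from it. -/
def fibre {V : Type*} (H : SimpleGraph V) (x : V) : Set V :=
  {y | x = y ∨ H.dist x y = 3}

/-- The relation defining the graph `Γ` on `{v} ⊔ 𝓛 ⊔ V(H)`: `v` is adjacent to every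
line; two distinct lines are adjacent iff they are disjoint (parallel); a line `ℓ` is
adjacent to `x ∈ V(H)` iff the fibre of `x` belongs to `ℓ`; and vertices of `H` are
adjacent as in `H`. -/
def gammaRel {V : Type*} (H : SimpleGraph V) (L : Set (Set (Set V))) :
    (Unit ⊕ ↥L ⊕ V) → (Unit ⊕ ↥L ⊕ V) → Prop
  | Sum.inl _, Sum.inr (Sum.inl _) => True
  | Sum.inr (Sum.inl l), Sum.inr (Sum.inl l') =>
      (l : Set (Set V)) ∩ (l' : Set (Set V)) = ∅
  | Sum.inr (Sum.inl l), Sum.inr (Sum.inr x) => fibre H x ∈ (l : Set (Set V))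
  | Sum.inr (Sum.inr x), Sum.inr (Sum.inr y) => H.Adj x y
  | _, _ => False

noncomputable instance {V : Type*} [Finite V] (L : Set (Set (Set V))) :
    Fintype (Unit ⊕ ↥L ⊕ V) :=
  Fintype.ofFinite _

/-!
By the intersection array, the fibres of `H` turn it into a cover of the complete graph on the
`q²` points of the plane: two fibres are matched perfectly, since the `q² - 1` neighbours of a
vertex have pairwise distance at most 2 and so meet each of the other `q² - 1` fibres once.
For every pair of vertices of `Γ`, the common neighbours split into `∞`, lines, and vertices of
`H`. A count of lines is double counting in the plane, and a count of vertices of `H` reduces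
through the matchings to a count of points; in particular `c₂ = q` and the matchings determine the
number of common neighbours of two adjacent vertices of `H`.
-/

section Counting

variable {α β : Type*}

theorem ncard_setOf_eq_one_iff_existsUnique {p : α → Prop} :
    {a | p a}.ncard = 1 ↔ ∃! a, p a :=
  Set.ncard_eq_one.trans Set.singleton_iff_unique_mem

theorem ncard_mul_eq_ncard_mul (r : α → β → Prop) {s : Set α} {t : Set β} (hs : s.Finite)
    (ht : t.Finite) {m n : ℕ} (hm : ∀ a ∈ s, {b ∈ t | r a b}.ncard = m)
    (hn : ∀ b ∈ t, {a ∈ s | r a b}.ncard = n) : s.ncard * m = t.ncard * n := by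
  lift s to Finset α using hs
  lift t to Finset β using ht
  rw [Set.ncard_coe_finset, Set.ncard_coe_finset]
  refine Finset.card_mul_eq_card_mul r (fun a ha ↦ ?_) fun b hb ↦ ?_
  · rw [← hm a ha, ← Set.ncard_coe_finset, Finset.coe_bipartiteAbove]
    rfl
  · rw [← hn b hb, ← Set.ncard_coe_finset, Finset.coe_bipartiteBelow]
    rfl

theorem ncard_sum [Finite α] [Finite β] (s : Set (α ⊕ β)) :
    s.ncard = {a | Sum.inl a ∈ s}.ncard + {b | Sum.inr b ∈ s}.ncard := by
  rw [← Set.ncard_image_of_injective {a | _} Sum.inl_injective,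
    ← Set.ncard_image_of_injective {b | _} Sum.inr_injective,
    ← Set.ncard_union_eq (by simp [Set.disjoint_left])]
  exact congrArg Set.ncard s.image_preimage_inl_union_image_preimage_inr.symm

theorem isSRGWith_iff_ncard [Fintype α] {G : SimpleGraph α} [DecidableRel G.Adj]
    {n k ℓ μ : ℕ} :
    G.IsSRGWith n k ℓ μ ↔ Nat.card α = n ∧ (∀ v, (G.neighborSet v).ncard = k) ∧
      (∀ v w, G.Adj v w → (G.commonNeighbors v w).ncard = ℓ) ∧
      Pairwise fun v w ↦ ¬G.Adj v w → (G.commonNeighbors v w).ncard = μ := by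
  simp only [← Nat.card_coe_set_eq, Nat.card_eq_fintype_card,
    SimpleGraph.card_neighborSet_eq_degree]
  exact ⟨fun h ↦ ⟨h.card, h.regular, h.of_adj, h.of_not_adj⟩,
    fun ⟨hn, hk, hℓ, hμ⟩ ↦ ⟨hn, hk, hℓ, hμ⟩⟩

end Counting

/-- `𝓛` is the set of lines of an affine plane of order `q` with point set `P`. Points are the
elements of a set rather than of a type so that the fibres of a graph can serve as points. -/
structure IsAffinePlane {α : Type*} (P : Set α) (𝓛 : Set (Set α)) (q : ℕ) : Prop where
  two_le : 2 ≤ q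
  ncard_points : P.ncard = q ^ 2
  subset_points : ∀ l ∈ 𝓛, l ⊆ P
  ncard_line : ∀ l ∈ 𝓛, l.ncard = q
  existsUnique_line : ∀ p ∈ P, ∀ r ∈ P, p ≠ r → ∃! l, l ∈ 𝓛 ∧ p ∈ l ∧ r ∈ l

namespace IsAffinePlane

variable {α : Type*} {P : Set α} {𝓛 : Set (Set α)} {q : ℕ} {l m n : Set α} {p r : α}

theorem finite_points (h : IsAffinePlane P 𝓛 q) : P.Finite :=
  have := h.two_le
  Set.finite_of_ncard_pos (by rw [h.ncard_points]; positivity)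

theorem finite_line (h : IsAffinePlane P 𝓛 q) (hl : l ∈ 𝓛) : l.Finite :=
  h.finite_points.subset (h.subset_points l hl)

theorem finite_lines (h : IsAffinePlane P 𝓛 q) : 𝓛.Finite :=
  h.finite_points.finite_subsets.subset h.subset_points

theorem line_nonempty (h : IsAffinePlane P 𝓛 q) (hl : l ∈ 𝓛) : l.Nonempty :=
  Set.nonempty_of_ncard_ne_zero (by have := h.two_le; have := h.ncard_line l hl; omega)

theorem ne_of_disjoint (h : IsAffinePlane P 𝓛 q) (hl : l ∈ 𝓛) (hlm : Disjoint l m) : l ≠ m :=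
  fun e ↦ (h.line_nonempty hl).ne_empty (disjoint_self.mp (e ▸ hlm))

theorem eq_of_mem_of_mem (h : IsAffinePlane P 𝓛 q) (hl : l ∈ 𝓛) (hm : m ∈ 𝓛) (hpr : p ≠ r)
    (hpl : p ∈ l) (hrl : r ∈ l) (hpm : p ∈ m) (hrm : r ∈ m) : l = m :=
  (h.existsUnique_line p (h.subset_points l hl hpl) r (h.subset_points l hl hrl) hpr).unique
    ⟨hl, hpl, hrl⟩ ⟨hm, hpm, hrm⟩

theorem ncard_inter (h : IsAffinePlane P 𝓛 q) (hl : l ∈ 𝓛) (hm : m ∈ 𝓛) (hlm : l ≠ m)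
    (hmeet : ¬Disjoint l m) : (l ∩ m).ncard = 1 := by
  obtain ⟨p, hpl, hpm⟩ := Set.not_disjoint_iff.mp hmeet
  refine ncard_setOf_eq_one_iff_existsUnique.mpr ⟨p, ⟨hpl, hpm⟩, fun r ⟨hrl, hrm⟩ ↦ ?_⟩
  by_contra hrp
  exact hlm (h.eq_of_mem_of_mem hl hm hrp hrl hpl hrm hpm)

theorem ncard_lines_through_two (h : IsAffinePlane P 𝓛 q) (hp : p ∈ P) (hr : r ∈ P)
    (hpr : p ≠ r) : {l ∈ 𝓛 | p ∈ l ∧ r ∈ l}.ncard = 1 :=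
  ncard_setOf_eq_one_iff_existsUnique.mpr (h.existsUnique_line p hp r hr hpr)

theorem ncard_lines_through (h : IsAffinePlane P 𝓛 q) (hp : p ∈ P) :
    {l ∈ 𝓛 | p ∈ l}.ncard = q + 1 := by
  have flags : (P \ {p}).ncard * 1 = {l ∈ 𝓛 | p ∈ l}.ncard * (q - 1) := by
    refine ncard_mul_eq_ncard_mul (· ∈ ·) h.finite_points.sdiff (h.finite_lines.sep _) ?_ ?_
    · rintro r ⟨hr, hrp⟩
      rw [← h.ncard_lines_through_two hp hr (Ne.symm hrp)]
      simp only [Set.mem_ofPred_eq, and_assoc]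
    · rintro l ⟨hl, hpl⟩
      rw [← h.ncard_line l hl, ← Set.ncard_sdiff_singleton_of_mem hpl]
      congr 1
      ext r
      have := @h.subset_points l hl r
      simp only [Set.mem_ofPred_eq, Set.mem_sdiff, Set.mem_singleton_iff]
      tauto
  rw [Set.ncard_sdiff_singleton_of_mem hp, h.ncard_points, mul_one] at flags
  have := h.two_le
  apply Nat.eq_of_mul_eq_mul_right (show 0 < q - 1 by omega)
  rw [← flags, ← Nat.sq_sub_sq q 1, one_pow]

theorem ncard_lines (h : IsAffinePlane P 𝓛 q) : 𝓛.ncard = q ^ 2 + q := by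
  have flags : P.ncard * (q + 1) = 𝓛.ncard * q := by
    refine ncard_mul_eq_ncard_mul (· ∈ ·) h.finite_points h.finite_lines
      (fun p hp ↦ h.ncard_lines_through hp) fun l hl ↦ ?_
    rw [← h.ncard_line l hl]
    exact congrArg Set.ncard (Set.inter_eq_right.mpr (h.subset_points l hl))
  have := h.two_le
  apply Nat.eq_of_mul_eq_mul_right (show 0 < q by omega)
  rw [← flags, h.ncard_points]
  ring

theorem ncard_parallels_through (h : IsAffinePlane P 𝓛 q) (hl : l ∈ 𝓛) (hp : p ∈ P)
    (hpl : p ∉ l) : {m ∈ 𝓛 | Disjoint l m ∧ p ∈ m}.ncard = 1 := by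
  have transversals : l.ncard * 1 = {m ∈ 𝓛 | p ∈ m ∧ ¬Disjoint l m}.ncard * 1 := by
    refine ncard_mul_eq_ncard_mul (· ∈ ·) (h.finite_line hl) (h.finite_lines.sep _) ?_ ?_
    · intro r hr
      have hpr : p ≠ r := fun e ↦ hpl (e ▸ hr)
      rw [← h.ncard_lines_through_two hp (h.subset_points l hl hr) hpr]
      congr 1
      ext m
      have : r ∈ m → ¬Disjoint l m := fun hrm ↦ Set.not_disjoint_iff.mpr ⟨r, hr, hrm⟩
      simp only [Set.mem_ofPred_eq]
      tauto
    · rintro m ⟨hm, hpm, hmeet⟩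
      exact h.ncard_inter hl hm (fun e ↦ hpl (e ▸ hpm)) hmeet
  have split : {m ∈ 𝓛 | Disjoint l m ∧ p ∈ m}.ncard + {m ∈ 𝓛 | p ∈ m ∧ ¬Disjoint l m}.ncard =
      {m ∈ 𝓛 | p ∈ m}.ncard := by
    rw [← Set.ncard_inter_add_ncard_sdiff_eq_ncard {m ∈ 𝓛 | p ∈ m} {m | Disjoint l m}
      (h.finite_lines.sep _)]
    congr 2 <;> ext m <;>
      simp only [Set.mem_ofPred_eq, Set.mem_inter_iff, Set.mem_sdiff] <;> tauto
  rw [h.ncard_line l hl] at transversals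
  rw [h.ncard_lines_through hp] at split
  omega

theorem disjoint_trans (h : IsAffinePlane P 𝓛 q) (hl : l ∈ 𝓛) (hm : m ∈ 𝓛) (hn : n ∈ 𝓛)
    (hmn : m ≠ n) (hlm : Disjoint l m) (hln : Disjoint l n) : Disjoint m n := by
  refine Set.disjoint_left.mpr fun p hpm hpn ↦ hmn ?_
  have hpl : p ∉ l := Set.disjoint_right.mp hlm hpm
  have playfair := h.ncard_parallels_through hl (h.subset_points m hm hpm) hpl
  exact (ncard_setOf_eq_one_iff_existsUnique.mp playfair).unique ⟨hm, hlm, hpm⟩ ⟨hn, hln, hpn⟩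

theorem ncard_parallels (h : IsAffinePlane P 𝓛 q) (hl : l ∈ 𝓛) :
    {m ∈ 𝓛 | Disjoint l m}.ncard = q - 1 := by
  have flags : (P \ l).ncard * 1 = {m ∈ 𝓛 | Disjoint l m}.ncard * q := by
    refine ncard_mul_eq_ncard_mul (· ∈ ·) h.finite_points.sdiff (h.finite_lines.sep _) ?_ ?_
    · rintro p ⟨hp, hpl⟩
      rw [← h.ncard_parallels_through hl hp hpl]
      simp only [Set.mem_ofPred_eq, and_assoc]
    · rintro m ⟨hm, hlm⟩
      rw [← h.ncard_line m hm]
      exact congrArg Set.ncard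
        (Set.inter_eq_right.mpr (Set.subset_sdiff.mpr ⟨h.subset_points m hm, hlm.symm⟩))
  rw [Set.ncard_sdiff (h.subset_points l hl) (h.finite_line hl), h.ncard_points,
    h.ncard_line l hl, mul_one] at flags
  have := h.two_le
  apply Nat.eq_of_mul_eq_mul_right (show 0 < q by omega)
  rw [← flags, Nat.sub_mul, one_mul, sq]

theorem ncard_common_parallels_of_disjoint (h : IsAffinePlane P 𝓛 q) (hl : l ∈ 𝓛) (hm : m ∈ 𝓛)
    (hlm : Disjoint l m) : {n ∈ 𝓛 | Disjoint l n ∧ Disjoint m n}.ncard = q - 2 := by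
  have common_eq :
      {n ∈ 𝓛 | Disjoint l n ∧ Disjoint m n} = {n ∈ 𝓛 | Disjoint l n} \ {m} := by
    ext n
    constructor
    · rintro ⟨hn, hln, hmn⟩
      exact ⟨⟨hn, hln⟩, (h.ne_of_disjoint hm hmn).symm⟩
    · rintro ⟨⟨hn, hln⟩, hnm⟩
      exact ⟨hn, hln, h.disjoint_trans hl hm hn (Ne.symm hnm) hlm hln⟩
  have hm_mem : m ∈ {n ∈ 𝓛 | Disjoint l n} := ⟨hm, hlm⟩
  rw [common_eq, Set.ncard_sdiff_singleton_of_mem hm_mem, h.ncard_parallels hl, Nat.sub_sub]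

theorem common_parallels_of_not_disjoint (h : IsAffinePlane P 𝓛 q) (hl : l ∈ 𝓛) (hm : m ∈ 𝓛)
    (hlm : l ≠ m) (hmeet : ¬Disjoint l m) : {n ∈ 𝓛 | Disjoint l n ∧ Disjoint m n} = ∅ :=
  Set.eq_empty_iff_forall_notMem.mpr fun _ ⟨hn, hln, hmn⟩ ↦
    hmeet (h.disjoint_trans hn hl hm hlm hln.symm hmn.symm)

end IsAffinePlane

/-- `π` is the fibre map of an `(n, r, c)`-cover: `H` is an `r`-fold cover of the complete graph on
the `n` points of `Set.range π`, the edges between any two fibres forming a perfect matching, in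
which non-adjacent vertices of different fibres have `c` common neighbours. -/
structure IsCompleteCover {V α : Type*} (H : SimpleGraph V) (π : V → α) (n r c : ℕ) : Prop where
  ncard_range : (Set.range π).ncard = n
  ncard_fibre : ∀ x, {y | π y = π x}.ncard = r
  ne_of_adj : ∀ x y, H.Adj x y → π x ≠ π y
  existsUnique_adj : ∀ x y, π x ≠ π y → ∃! z, H.Adj x z ∧ π z = π y
  ncard_commonNeighbors_of_not_adj : ∀ x y, π x ≠ π y → ¬H.Adj x y →
    (H.commonNeighbors x y).ncard = c

namespace IsCompleteCover

variable {V α : Type*} {H : SimpleGraph V} {π : V → α} {n r c : ℕ} {Q : Set α}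

theorem commonNeighbors_of_same_fibre (h : IsCompleteCover H π n r c) {x y : V} (hxy : x ≠ y)
    (hπ : π x = π y) : H.commonNeighbors x y = ∅ :=
  Set.eq_empty_iff_forall_notMem.mpr fun z ⟨hxz, hyz⟩ ↦
    hxy <| (h.existsUnique_adj z x (h.ne_of_adj x z hxz).symm).unique ⟨hxz.symm, rfl⟩
      ⟨hyz.symm, hπ.symm⟩

variable [Finite V]

theorem ncard_preimage (h : IsCompleteCover H π n r c) (hQ : Q ⊆ Set.range π) :
    {x | π x ∈ Q}.ncard = Q.ncard * r := by
  rw [← mul_one {x | π x ∈ Q}.ncard]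
  refine ncard_mul_eq_ncard_mul (π · = ·) (Set.toFinite _) ((Set.finite_range π).subset hQ) ?_ ?_
  · intro x hx
    exact ncard_setOf_eq_one_iff_existsUnique.mpr ⟨π x, ⟨hx, rfl⟩, fun _ hp ↦ hp.2.symm⟩
  · intro p hp
    obtain ⟨x, rfl⟩ := hQ hp
    rw [← h.ncard_fibre x]
    exact congrArg Set.ncard (Set.inter_eq_right.mpr fun y (hy : π y = π x) ↦
      show π y ∈ Q from hy.symm ▸ hp)

theorem card_vertices (h : IsCompleteCover H π n r c) : Nat.card V = n * r := by
  rw [← h.ncard_range, ← h.ncard_preimage subset_rfl, ← Set.ncard_univ]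
  simp

theorem ncard_neighbors_over (h : IsCompleteCover H π n r c) (x : V) (hQ : Q ⊆ Set.range π) :
    {y | H.Adj x y ∧ π y ∈ Q}.ncard = (Q \ {π x}).ncard := by
  rw [← mul_one {y | H.Adj x y ∧ π y ∈ Q}.ncard, ← mul_one (Q \ {π x}).ncard]
  refine ncard_mul_eq_ncard_mul (π · = ·) (Set.toFinite _)
    ((Set.finite_range π).subset hQ).sdiff ?_ ?_
  · rintro y ⟨hxy, hy⟩
    exact ncard_setOf_eq_one_iff_existsUnique.mpr
      ⟨π y, ⟨⟨hy, (h.ne_of_adj x y hxy).symm⟩, rfl⟩, fun _ hp ↦ hp.2.symm⟩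
  · rintro p ⟨hp, hpx⟩
    obtain ⟨y, rfl⟩ := hQ hp
    obtain ⟨z, ⟨hxz, hz⟩, huniq⟩ := h.existsUnique_adj x y (Ne.symm hpx)
    exact ncard_setOf_eq_one_iff_existsUnique.mpr
      ⟨z, ⟨⟨hxz, hz.symm ▸ hp⟩, hz⟩, fun w hw ↦ huniq w ⟨hw.1.1, hw.2⟩⟩

theorem ncard_neighborSet (h : IsCompleteCover H π n r c) (x : V) :
    (H.neighborSet x).ncard = n - 1 := by
  rw [← h.ncard_range, ← Set.ncard_sdiff_singleton_of_mem (Set.mem_range_self x),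
    ← h.ncard_neighbors_over x subset_rfl]
  simp [SimpleGraph.neighborSet]

theorem ncard_neighborSet_sdiff_commonNeighbors (h : IsCompleteCover H π n r c) {x y : V}
    (hxy : H.Adj x y) :
    ((H.neighborSet x \ {y}) \ H.commonNeighbors x y).ncard = (r - 1) * c := by
  -- Each neighbour `z ≠ y` of `x` has exactly one neighbour in the fibre of `y`: either `y`
  -- itself, or one of the other `r - 1` vertices, each of which has `c` common neighbours with `x`.
  have hπ := h.ne_of_adj x y hxy
  have hy : y ∈ {w | π w = π y} := rfl
  rw [← h.ncard_fibre y, ← Set.ncard_sdiff_singleton_of_mem hy, ← mul_one (Set.ncard (_ \ _))]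
  refine ncard_mul_eq_ncard_mul H.Adj (Set.toFinite _) (Set.toFinite _) ?_ ?_
  · rintro z ⟨⟨hxz, hzy⟩, hz⟩
    have hzπ : π z ≠ π y := fun e ↦
      hzy ((h.existsUnique_adj x y hπ).unique ⟨hxz, e⟩ ⟨hxy, rfl⟩)
    have hyz : ¬H.Adj y z := fun hyz ↦ hz ⟨hxz, hyz⟩
    obtain ⟨w, ⟨hzw, hw⟩, huniq⟩ := h.existsUnique_adj z y hzπ
    exact ncard_setOf_eq_one_iff_existsUnique.mpr
      ⟨w, ⟨⟨hw, fun hwy ↦ hyz (hwy ▸ hzw).symm⟩, hzw⟩, fun u hu ↦ huniq u ⟨hu.2, hu.1.1⟩⟩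
  · rintro w ⟨hw, hwy⟩
    have hxw : ¬H.Adj x w := fun hxw ↦
      hwy ((h.existsUnique_adj x y hπ).unique ⟨hxw, hw⟩ ⟨hxy, rfl⟩)
    rw [← h.ncard_commonNeighbors_of_not_adj x w (fun e ↦ hπ (e.trans hw)) hxw]
    congr 1
    ext z
    refine ⟨fun ⟨⟨⟨hxz, _⟩, _⟩, hzw⟩ ↦ ⟨hxz, hzw.symm⟩, fun ⟨hxz, hwz⟩ ↦ ?_⟩
    refine ⟨⟨⟨hxz, fun hzy ↦ ?_⟩, fun hz ↦ ?_⟩, hwz.symm⟩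
    · exact h.ne_of_adj w y (hzy ▸ hwz) hw
    · exact (h.commonNeighbors_of_same_fibre hwy hw).subset ⟨hwz, hz.2⟩

theorem ncard_commonNeighbors_of_adj (h : IsCompleteCover H π n r c) {x y : V}
    (hxy : H.Adj x y) : (H.commonNeighbors x y).ncard = n - 2 - (r - 1) * c := by
  have common_subset : H.commonNeighbors x y ⊆ H.neighborSet x \ {y} :=
    fun z ⟨hxz, hyz⟩ ↦ ⟨hxz, hyz.ne'⟩
  have hy : y ∈ H.neighborSet x := hxy
  rw [← h.ncard_neighborSet_sdiff_commonNeighbors hxy, Set.ncard_sdiff common_subset,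
    ← Nat.sub_sub n 1 1, ← h.ncard_neighborSet x, ← Set.ncard_sdiff_singleton_of_mem hy,
    Nat.sub_sub_self (Set.ncard_le_ncard common_subset)]

end IsCompleteCover

section Fibre

variable {V : Type*} {H : SimpleGraph V}

theorem fibre_eq_fibre_iff
    (hEq : Equivalence fun x y : V ↦ x = y ∨ H.dist x y = 3) {x y : V} :
    fibre H x = fibre H y ↔ x = y ∨ H.dist x y = 3 := by
  have hy : y ∈ fibre H y := Or.inl rfl
  exact ⟨fun h ↦ h.superset hy, fun h ↦ Set.ext fun _ ↦ ⟨hEq.trans (hEq.symm h), hEq.trans h⟩⟩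

theorem fibre_ne_fibre_of_adj
    (hEq : Equivalence fun x y : V ↦ x = y ∨ H.dist x y = 3) {x y : V} (hxy : H.Adj x y) :
    fibre H x ≠ fibre H y := by
  rw [Ne, fibre_eq_fibre_iff hEq, SimpleGraph.dist_eq_one_iff_adj.mpr hxy]
  simpa using hxy.ne

theorem injOn_fibre_neighborSet
    (hEq : Equivalence fun x y : V ↦ x = y ∨ H.dist x y = 3) (x : V) :
    Set.InjOn (fibre H) (H.neighborSet x) := by
  intro y (hxy : H.Adj x y) z hxz hyz
  have : H.dist y z ≤ 2 := SimpleGraph.dist_le (.cons hxy.symm (.cons hxz .nil))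
  exact ((fibre_eq_fibre_iff hEq).mp hyz).resolve_right (by omega)

end Fibre

namespace IsDRG3

variable {V : Type*} {H : SimpleGraph V} {n r c b₀ b₁ b₂ c₁ c₃ : ℕ}

theorem ncard_commonNeighbors_of_dist_eq_two (hH : IsDRG3 H b₀ b₁ b₂ c₁ c c₃) {x y : V}
    (hxy : H.dist x y = 2) : (H.commonNeighbors x y).ncard = c := by
  obtain ⟨-, -, -, -, -, dist_two, -⟩ := hH
  rw [← (dist_two x y hxy).1]
  congr 1
  ext z
  simp only [SimpleGraph.mem_commonNeighbors, Set.mem_ofPred_eq, SimpleGraph.dist_eq_one_iff_adj,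
    and_comm]

variable [Finite V]

theorem image_fibre_neighborSet (hH : IsDRG3 H (n - 1) b₁ b₂ c₁ c c₃)
    (hEq : Equivalence fun x y : V ↦ x = y ∨ H.dist x y = 3)
    (hn : (Set.range (fibre H)).ncard = n) (x : V) :
    fibre H '' H.neighborSet x = Set.range (fibre H) \ {fibre H x} := by
  obtain ⟨-, -, -, degree_eq, -⟩ := hH
  refine Set.eq_of_subset_of_ncard_le ?_ ?_
  · rintro - ⟨y, hxy, rfl⟩
    exact ⟨⟨y, rfl⟩, (fibre_ne_fibre_of_adj hEq hxy).symm⟩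
  · rw [(injOn_fibre_neighborSet hEq x).ncard_image, degree_eq,
      Set.ncard_sdiff_singleton_of_mem (Set.mem_range_self x), hn]

theorem isCompleteCover_fibre (hH : IsDRG3 H (n - 1) b₁ b₂ c₁ c c₃)
    (hEq : Equivalence fun x y : V ↦ x = y ∨ H.dist x y = 3)
    (hr : ∀ x, (fibre H x).ncard = r) (hn : (Set.range (fibre H)).ncard = n) :
    IsCompleteCover H (fibre H) n r c where
  ncard_range := hn
  ncard_fibre x := by
    rw [← hr x]
    congr 1
    ext y
    exact eq_comm.trans (fibre_eq_fibre_iff hEq)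
  ne_of_adj x y := fibre_ne_fibre_of_adj hEq
  existsUnique_adj x y hxy := by
    have hy : fibre H y ∈ fibre H '' H.neighborSet x := by
      rw [hH.image_fibre_neighborSet hEq hn]
      exact ⟨⟨y, rfl⟩, hxy.symm⟩
    obtain ⟨z, hxz, hzy⟩ := hy
    exact ⟨z, ⟨hxz, hzy⟩, fun w hw ↦ injOn_fibre_neighborSet hEq x hw.1 hxz (hw.2.trans hzy.symm)⟩
  ncard_commonNeighbors_of_not_adj x y hxy hadj := by
    obtain ⟨connected, dist_le_three, -⟩ := id hH
    rw [Ne, fibre_eq_fibre_iff hEq, not_or] at hxy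
    have := connected.one_lt_dist_of_ne_of_not_adj hxy.1 hadj
    have := dist_le_three x y
    exact hH.ncard_commonNeighbors_of_dist_eq_two (by omega)

end IsDRG3

/-- The graph `Γ` on `{∞} ⊔ 𝓛 ⊔ V(H)` for lines `𝓛` and an arbitrary map `π` from vertices of `H`
to points: `∞` is joined to all lines, distinct disjoint lines are joined, and a vertex of `H` is
joined to its neighbours in `H` and to the lines through its image. -/
def planeCoverGraph {V α : Type*} (𝓛 : Set (Set α)) (π : V → α) (H : SimpleGraph V) :
    SimpleGraph (Unit ⊕ 𝓛 ⊕ V) where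
  Adj
    | .inl _, .inr (.inl _) => True
    | .inr (.inl _), .inl _ => True
    | .inr (.inl l), .inr (.inl m) => l ≠ m ∧ Disjoint (l : Set α) m
    | .inr (.inl l), .inr (.inr x) => π x ∈ (l : Set α)
    | .inr (.inr x), .inr (.inl l) => π x ∈ (l : Set α)
    | .inr (.inr x), .inr (.inr y) => H.Adj x y
    | _, _ => False
  symm := ⟨by
    rintro (_ | l | x) (_ | m | y) h
    exacts [h, h, h, h, ⟨h.1.symm, h.2.symm⟩, h, h, h, h.symm]⟩
  loopless := ⟨by
    rintro (_ | l | x) h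
    exacts [h, h.1 rfl, H.irrefl h]⟩

theorem fromRel_gammaRel {V : Type*} (H : SimpleGraph V) (L : Set (Set (Set V))) :
    SimpleGraph.fromRel (gammaRel H L) = planeCoverGraph L (fibre H) H := by
  ext (_ | l | x) (_ | m | y) <;>
    simp +contextual [planeCoverGraph, gammaRel, SimpleGraph.Adj.ne (G := H),
      Set.disjoint_iff_inter_eq_empty, Set.inter_comm, SimpleGraph.adj_comm]

namespace planeCoverGraph

variable {V α : Type*} {𝓛 : Set (Set α)} {π : V → α} {H : SimpleGraph V} {P : Set α}
  {n r c q : ℕ} {u u' : Unit} {l m : 𝓛} {x y : V}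

@[simp]
theorem not_adj_infty_infty : ¬(planeCoverGraph 𝓛 π H).Adj (.inl u) (.inl u') := id

@[simp]
theorem adj_infty_line : (planeCoverGraph 𝓛 π H).Adj (.inl u) (.inr (.inl l)) := trivial

@[simp]
theorem adj_line_infty : (planeCoverGraph 𝓛 π H).Adj (.inr (.inl l)) (.inl u) := trivial

@[simp]
theorem not_adj_infty_vertex : ¬(planeCoverGraph 𝓛 π H).Adj (.inl u) (.inr (.inr x)) := id

@[simp]
theorem not_adj_vertex_infty : ¬(planeCoverGraph 𝓛 π H).Adj (.inr (.inr x)) (.inl u) := id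

@[simp]
theorem adj_line_vertex :
    (planeCoverGraph 𝓛 π H).Adj (.inr (.inl l)) (.inr (.inr x)) ↔ π x ∈ (l : Set α) := Iff.rfl

@[simp]
theorem adj_vertex_line :
    (planeCoverGraph 𝓛 π H).Adj (.inr (.inr x)) (.inr (.inl l)) ↔ π x ∈ (l : Set α) := Iff.rfl

@[simp]
theorem adj_vertex_vertex :
    (planeCoverGraph 𝓛 π H).Adj (.inr (.inr x)) (.inr (.inr y)) ↔ H.Adj x y := Iff.rfl

theorem adj_line_line (plane : IsAffinePlane P 𝓛 q) :
    (planeCoverGraph 𝓛 π H).Adj (.inr (.inl l)) (.inr (.inl m)) ↔ Disjoint (l : Set α) m :=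
  and_iff_right_of_imp fun h e ↦ plane.ne_of_disjoint l.2 h (congrArg _ e)

variable [Finite V]

theorem ncard_vertexSet (plane : IsAffinePlane P 𝓛 q) (S : Set (Unit ⊕ 𝓛 ⊕ V)) :
    S.ncard = {u | .inl u ∈ S}.ncard + {l | ∃ hl : l ∈ 𝓛, .inr (.inl ⟨l, hl⟩) ∈ S}.ncard +
      {x | .inr (.inr x) ∈ S}.ncard := by
  have := plane.finite_lines.to_subtype
  rw [ncard_sum, ncard_sum {b | _}, ← add_assoc,
    ← Set.ncard_image_of_injective {l : 𝓛 | _} Subtype.val_injective]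
  congr 3
  ext l
  simp

theorem card_vertices (plane : IsAffinePlane (Set.range π) 𝓛 q)
    (cover : IsCompleteCover H π (q ^ 2) q c) :
    Nat.card (Unit ⊕ 𝓛 ⊕ V) = q ^ 3 + q ^ 2 + q + 1 := by
  have := plane.finite_lines.to_subtype
  rw [Nat.card_sum, Nat.card_sum, Nat.card_unique, Nat.card_coe_set_eq, plane.ncard_lines,
    cover.card_vertices]
  ring

theorem ncard_neighborSet (plane : IsAffinePlane (Set.range π) 𝓛 q)
    (cover : IsCompleteCover H π (q ^ 2) q c) (v : Unit ⊕ 𝓛 ⊕ V) :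
    ((planeCoverGraph 𝓛 π H).neighborSet v).ncard = q ^ 2 + q := by
  have := plane.two_le
  rcases v with u | l | x
  · simp [ncard_vertexSet plane, plane.ncard_lines]
  · have parallels : {m | m ∈ 𝓛 ∧ Disjoint (l : Set α) m}.ncard = q - 1 := plane.ncard_parallels l.2
    have vertices : {x | π x ∈ (l : Set α)}.ncard = q * q := by
      rw [cover.ncard_preimage (plane.subset_points l l.2), plane.ncard_line l l.2]
    simp only [ncard_vertexSet plane, SimpleGraph.mem_neighborSet, adj_line_infty, Set.ofPred_true,
      Set.ncard_univ, Nat.card_unique, adj_line_line plane, exists_prop, adj_line_vertex, parallels,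
      vertices, sq]
    omega
  · have lines : {l | l ∈ 𝓛 ∧ π x ∈ l}.ncard = q + 1 :=
      plane.ncard_lines_through (Set.mem_range_self x)
    have vertices : {y | H.Adj x y}.ncard = q ^ 2 - 1 := cover.ncard_neighborSet x
    have : 0 < q ^ 2 := by positivity
    simp only [ncard_vertexSet plane, SimpleGraph.mem_neighborSet, not_adj_vertex_infty,
      Set.ofPred_false, Set.ncard_empty, adj_vertex_line, exists_prop, adj_vertex_vertex, lines,
      vertices]
    omega

theorem ncard_commonNeighbors_infty_line (plane : IsAffinePlane P 𝓛 q) :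
    ((planeCoverGraph 𝓛 π H).commonNeighbors (.inl u) (.inr (.inl l))).ncard = q - 1 := by
  simp [ncard_vertexSet plane, SimpleGraph.mem_commonNeighbors, adj_line_line plane,
    plane.ncard_parallels l.2]

theorem ncard_commonNeighbors_infty_vertex (plane : IsAffinePlane (Set.range π) 𝓛 q) :
    ((planeCoverGraph 𝓛 π H).commonNeighbors (.inl u) (.inr (.inr x))).ncard = q + 1 := by
  simp [ncard_vertexSet plane, SimpleGraph.mem_commonNeighbors,
    plane.ncard_lines_through (Set.mem_range_self x)]

theorem ncard_commonNeighbors_line_line (plane : IsAffinePlane P 𝓛 q) :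
    ((planeCoverGraph 𝓛 π H).commonNeighbors (.inr (.inl l)) (.inr (.inl m))).ncard =
      1 + {n ∈ 𝓛 | Disjoint (l : Set α) n ∧ Disjoint (m : Set α) n}.ncard +
        {x | π x ∈ (l ∩ m : Set α)}.ncard := by
  simp [ncard_vertexSet plane, SimpleGraph.mem_commonNeighbors, adj_line_line plane, and_left_comm]

theorem ncard_commonNeighbors_line_vertex (plane : IsAffinePlane P 𝓛 q) :
    ((planeCoverGraph 𝓛 π H).commonNeighbors (.inr (.inl l)) (.inr (.inr x))).ncard =
      {m ∈ 𝓛 | Disjoint (l : Set α) m ∧ π x ∈ m}.ncard +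
        {y | H.Adj x y ∧ π y ∈ (l : Set α)}.ncard := by
  simp [ncard_vertexSet plane, SimpleGraph.mem_commonNeighbors, adj_line_line plane,
    and_comm, and_assoc]

theorem ncard_commonNeighbors_vertex_vertex (plane : IsAffinePlane P 𝓛 q) :
    ((planeCoverGraph 𝓛 π H).commonNeighbors (.inr (.inr x)) (.inr (.inr y))).ncard =
      {l ∈ 𝓛 | π x ∈ l ∧ π y ∈ l}.ncard + (H.commonNeighbors x y).ncard := by
  simp [ncard_vertexSet plane, SimpleGraph.commonNeighbors_eq, SimpleGraph.neighborSet,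
    Set.inter_def, and_left_comm]

theorem ncard_commonNeighbors_line_line_of_disjoint (plane : IsAffinePlane P 𝓛 q)
    (hlm : Disjoint (l : Set α) m) :
    ((planeCoverGraph 𝓛 π H).commonNeighbors (.inr (.inl l)) (.inr (.inl m))).ncard = q - 1 := by
  have := plane.two_le
  rw [ncard_commonNeighbors_line_line plane,
    plane.ncard_common_parallels_of_disjoint l.2 m.2 hlm, hlm.inter_eq]
  simp only [Set.mem_empty_iff_false, Set.ofPred_false, Set.ncard_empty]
  omega

theorem ncard_commonNeighbors_line_line_of_not_disjoint
    (plane : IsAffinePlane (Set.range π) 𝓛 q) (cover : IsCompleteCover H π n q c) (hne : l ≠ m)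
    (hlm : ¬Disjoint (l : Set α) m) :
    ((planeCoverGraph 𝓛 π H).commonNeighbors (.inr (.inl l)) (.inr (.inl m))).ncard = q + 1 := by
  have hne' : (l : Set α) ≠ m := Subtype.coe_ne_coe.mpr hne
  rw [ncard_commonNeighbors_line_line plane,
    plane.common_parallels_of_not_disjoint l.2 m.2 hne' hlm, Set.ncard_empty,
    cover.ncard_preimage (Set.inter_subset_left.trans (plane.subset_points l l.2)),
    plane.ncard_inter l.2 m.2 hne' hlm]
  ring

theorem ncard_commonNeighbors_line_vertex_of_mem (plane : IsAffinePlane (Set.range π) 𝓛 q)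
    (cover : IsCompleteCover H π n r c) (hx : π x ∈ (l : Set α)) :
    ((planeCoverGraph 𝓛 π H).commonNeighbors (.inr (.inl l)) (.inr (.inr x))).ncard = q - 1 := by
  have no_parallel : {m ∈ 𝓛 | Disjoint (l : Set α) m ∧ π x ∈ m} = ∅ :=
    Set.eq_empty_iff_forall_notMem.mpr fun _ ⟨_, hlm, hxm⟩ ↦ Set.disjoint_left.mp hlm hx hxm
  rw [ncard_commonNeighbors_line_vertex plane, no_parallel, Set.ncard_empty,
    cover.ncard_neighbors_over x (plane.subset_points l l.2),
    Set.ncard_sdiff_singleton_of_mem hx, plane.ncard_line l l.2, zero_add]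

theorem ncard_commonNeighbors_line_vertex_of_notMem (plane : IsAffinePlane (Set.range π) 𝓛 q)
    (cover : IsCompleteCover H π n r c) (hx : π x ∉ (l : Set α)) :
    ((planeCoverGraph 𝓛 π H).commonNeighbors (.inr (.inl l)) (.inr (.inr x))).ncard = q + 1 := by
  rw [ncard_commonNeighbors_line_vertex plane,
    plane.ncard_parallels_through l.2 (Set.mem_range_self x) hx,
    cover.ncard_neighbors_over x (plane.subset_points l l.2), Set.sdiff_singleton_eq_self hx,
    plane.ncard_line l l.2, add_comm]

theorem ncard_commonNeighbors_vertex_vertex_of_adj (plane : IsAffinePlane (Set.range π) 𝓛 q)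
    (cover : IsCompleteCover H π (q ^ 2) q q) (hxy : H.Adj x y) :
    ((planeCoverGraph 𝓛 π H).commonNeighbors (.inr (.inr x)) (.inr (.inr y))).ncard = q - 1 := by
  rw [ncard_commonNeighbors_vertex_vertex plane, cover.ncard_commonNeighbors_of_adj hxy,
    plane.ncard_lines_through_two (Set.mem_range_self x) (Set.mem_range_self y)
      (cover.ne_of_adj x y hxy)]
  have := plane.two_le
  have : q ^ 2 - (q - 1) * q = q := by
    rw [Nat.sub_mul, one_mul, ← sq, Nat.sub_sub_self (Nat.le_self_pow two_ne_zero q)]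
  omega

theorem ncard_commonNeighbors_vertex_vertex_of_not_adj (plane : IsAffinePlane (Set.range π) 𝓛 q)
    (cover : IsCompleteCover H π n r q) (hne : x ≠ y) (hxy : ¬H.Adj x y) :
    ((planeCoverGraph 𝓛 π H).commonNeighbors (.inr (.inr x)) (.inr (.inr y))).ncard = q + 1 := by
  rw [ncard_commonNeighbors_vertex_vertex plane]
  by_cases hπ : π x = π y
  · rw [cover.commonNeighbors_of_same_fibre hne hπ, Set.ncard_empty, add_zero, hπ]
    simpa only [and_self] using plane.ncard_lines_through (Set.mem_range_self y)
  · rw [cover.ncard_commonNeighbors_of_not_adj x y hπ hxy,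
      plane.ncard_lines_through_two (Set.mem_range_self x) (Set.mem_range_self y) hπ, add_comm]

theorem ncard_commonNeighbors_of_adj (plane : IsAffinePlane (Set.range π) 𝓛 q)
    (cover : IsCompleteCover H π (q ^ 2) q q) {v w : Unit ⊕ 𝓛 ⊕ V}
    (hvw : (planeCoverGraph 𝓛 π H).Adj v w) :
    ((planeCoverGraph 𝓛 π H).commonNeighbors v w).ncard = q - 1 := by
  rcases v with _ | l | x <;> rcases w with _ | m | y
  · exact (not_adj_infty_infty hvw).elim
  · exact ncard_commonNeighbors_infty_line plane
  · exact (not_adj_infty_vertex hvw).elim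
  · rw [SimpleGraph.commonNeighbors_symm, ncard_commonNeighbors_infty_line plane]
  · exact ncard_commonNeighbors_line_line_of_disjoint plane ((adj_line_line plane).mp hvw)
  · exact ncard_commonNeighbors_line_vertex_of_mem plane cover hvw
  · exact (not_adj_vertex_infty hvw).elim
  · rw [SimpleGraph.commonNeighbors_symm]
    exact ncard_commonNeighbors_line_vertex_of_mem plane cover hvw
  · exact ncard_commonNeighbors_vertex_vertex_of_adj plane cover hvw

theorem ncard_commonNeighbors_of_not_adj (plane : IsAffinePlane (Set.range π) 𝓛 q)
    (cover : IsCompleteCover H π n q q) {v w : Unit ⊕ 𝓛 ⊕ V} (hne : v ≠ w)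
    (hvw : ¬(planeCoverGraph 𝓛 π H).Adj v w) :
    ((planeCoverGraph 𝓛 π H).commonNeighbors v w).ncard = q + 1 := by
  rcases v with _ | l | x <;> rcases w with _ | m | y
  · exact (hne rfl).elim
  · exact (hvw adj_infty_line).elim
  · exact ncard_commonNeighbors_infty_vertex plane
  · exact (hvw adj_line_infty).elim
  · rw [adj_line_line plane] at hvw
    exact ncard_commonNeighbors_line_line_of_not_disjoint plane cover
      (ne_of_apply_ne (Sum.inr ∘ Sum.inl) hne) hvw
  · exact ncard_commonNeighbors_line_vertex_of_notMem plane cover hvw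
  · rw [SimpleGraph.commonNeighbors_symm, ncard_commonNeighbors_infty_vertex plane]
  · rw [SimpleGraph.commonNeighbors_symm]
    exact ncard_commonNeighbors_line_vertex_of_notMem plane cover hvw
  · exact ncard_commonNeighbors_vertex_vertex_of_not_adj plane cover
      (ne_of_apply_ne (Sum.inr ∘ Sum.inr) hne) hvw

end planeCoverGraph

theorem gamma_isSRGWith_general {V α : Type*} {𝓛 : Set (Set α)} {π : V → α} {H : SimpleGraph V}
    {q : ℕ} [Fintype (Unit ⊕ 𝓛 ⊕ V)] [DecidableRel (planeCoverGraph 𝓛 π H).Adj]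
    (plane : IsAffinePlane (Set.range π) 𝓛 q) (cover : IsCompleteCover H π (q ^ 2) q q) :
    (planeCoverGraph 𝓛 π H).IsSRGWith (q ^ 3 + q ^ 2 + q + 1) (q ^ 2 + q) (q - 1) (q + 1) := by
  have : Finite (𝓛 ⊕ V) := Finite.sum_right Unit
  have : Finite V := Finite.sum_right 𝓛
  exact isSRGWith_iff_ncard.mpr ⟨planeCoverGraph.card_vertices plane cover,
    planeCoverGraph.ncard_neighborSet plane cover,
    fun _ _ ↦ planeCoverGraph.ncard_commonNeighbors_of_adj plane cover,
    fun _ _ ↦ planeCoverGraph.ncard_commonNeighbors_of_not_adj plane cover⟩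

/-- given a distance-regular graph `H` with intersection array
`{q²−1, q²−q, 1; 1, q, q²−1}` whose fibres (classes of the relation `x = y ∨ dist = 3`,
assumed to be an equivalence) all have `q` elements, and an affine plane of order `q` on
the `q²` fibres (lines `𝓛 = L`, each of `q` points, any two distinct fibres on a unique
common line), the graph `Γ` built on `{v} ⊔ 𝓛 ⊔ V(H)` as in `gammaRel` is strongly
regular with parameters `(q³+q²+q+1, q²+q, q−1, q+1)`. -/
theorem gamma_isSRGWith {V : Type} [Fintype V] (q : ℕ) (hq : 2 ≤ q)
    (H : SimpleGraph V)
    (hH : IsDRG3 H (q ^ 2 - 1) (q ^ 2 - q) 1 1 q (q ^ 2 - 1))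
    (hEq : Equivalence (fun x y : V => x = y ∨ H.dist x y = 3))
    (hfib : ∀ x : V, (fibre H x).ncard = q)
    (hP : {S : Set V | ∃ x : V, S = fibre H x}.ncard = q ^ 2)
    (L : Set (Set (Set V)))
    (hLsub : ∀ l ∈ L, ∀ S ∈ l, ∃ x : V, S = fibre H x)
    (hLcard : ∀ l ∈ L, l.ncard = q)
    (hlines : ∀ S T : Set V, (∃ x : V, S = fibre H x) → (∃ x : V, T = fibre H x) →
      S ≠ T → ∃! l, l ∈ L ∧ S ∈ l ∧ T ∈ l) :
    (SimpleGraph.fromRel (gammaRel H L)).IsSRGWith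
      (q ^ 3 + q ^ 2 + q + 1) (q ^ 2 + q) (q - 1) (q + 1) := by
  have range_fibre : {S : Set V | ∃ x : V, S = fibre H x} = Set.range (fibre H) := by
    ext S
    simp only [Set.mem_ofPred_eq, Set.mem_range, eq_comm]
  rw [range_fibre] at hP
  have plane : IsAffinePlane (Set.range (fibre H)) L q := {
    two_le := hq
    ncard_points := hP
    subset_points := fun l hl S hS ↦ range_fibre.subset (hLsub l hl S hS)
    ncard_line := hLcard
    existsUnique_line := fun S hS T hT ↦
      hlines S T (range_fibre.superset hS) (range_fibre.superset hT) }
  have cover := hH.isCompleteCover_fibre hEq hfib hP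
  simpa only [isSRGWith_iff_ncard, fromRel_gammaRel] using gamma_isSRGWith_general plane cover
end

section
/- Let q ≥ 2, let Γ be a strongly regular graph with parameters (q³+q²+q+1, q²+q, q−1, q+1), and let v be a regular point of Γ (with s = t = q). Then the subgraph induced on the set of vertices distinct from v and not adjacent to v is a distance-regular graph with intersection array {q²−1, q²−q, 1; 1, q, q²−1}. -/
open scoped Classical

/-- For a graph `G` and a set `X` of vertices, `X^⊥` is the set of vertices `w` such that
for every `x ∈ X`, either `w = x` or `w` is adjacent to `x`. -/
def perp {V : Type*} (G : SimpleGraph V) (X : Set V) : Set V :=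
  {w | ∀ x ∈ X, w = x ∨ G.Adj w x}

/-- A vertex `v` of a strongly regular graph with parameters
`((s+1)(st+1), s(t+1), s−1, t+1)` is a regular point if (i) the subgraph induced on `N(v)`
is a disjoint union of cliques, and (ii) for every vertex `x ≠ v` not adjacent to `v`, the
span `{v,x}^{⊥⊥}` has exactly `t + 1` elements and is a coclique. -/
def IsRegularPoint {V : Type*} (G : SimpleGraph V) (t : ℕ) (v : V) : Prop :=
  Equivalence (fun x y : G.neighborSet v => x = y ∨ G.Adj ↑x ↑y) ∧
  ∀ x : V, x ≠ v → ¬ G.Adj v x →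
    (perp G (perp G {v, x})).ncard = t + 1 ∧
    ∀ y ∈ perp G (perp G {v, x}), ∀ z ∈ perp G (perp G {v, x}), ¬ G.Adj y z

/-!
Write `D` for the second subconstituent of `v`, and call `G.commonNeighbors v x` the trace of
`x ∈ D`; it has `q + 1` elements. Regularity of `v` says that each class of vertices of `D` with
the same trace is a coclique with `q` elements. Fix `x ∈ D`. Each of the `q + 1` vertices of its
trace is adjacent to `q² - q` vertices of `D` outside the class of `x`, and no vertex outside that
class is counted twice; since there are `q³ - q = (q + 1)(q² - q)` vertices to be reached, distinct
traces meet in exactly one vertex. Hence non-adjacent vertices of `D` in distinct classes have `q`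
common neighbours in `D`, while vertices in the same class have none. A second count of the same
kind shows that every vertex of `D` has exactly one neighbour in each class other than its own, so
`D` is an antipodal cover of the complete graph on `q²` vertices, which yields the intersection
array.
-/

section Counting

variable {α β : Type*}

theorem ncard_biUnion_of_ncard_eq {t : Set β} (ht : t.Finite) {s : β → Set α}
    (hs : ∀ b ∈ t, (s b).Finite) (hdisj : t.PairwiseDisjoint s) {d : ℕ}
    (hd : ∀ b ∈ t, (s b).ncard = d) : (⋃ b ∈ t, s b).ncard = t.ncard * d := by
  rw [ht.ncard_biUnion hs hdisj, finsum_mem_congr rfl hd, finsum_mem_eq_finite_toFinset_sum _ ht,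
    Finset.sum_const, smul_eq_mul, Set.ncard_eq_toFinset_card _ ht]

theorem exists_rel_of_ncard_le_mul {r : α → β → Prop} {s : Set α} {t : Set β} (hs : s.Finite)
    (ht : t.Finite) {d : ℕ} (hd : ∀ b ∈ t, {a ∈ s | r a b}.ncard = d)
    (hr : ∀ a ∈ s, {b ∈ t | r a b}.Subsingleton) (hcard : s.ncard ≤ t.ncard * d) :
    ∀ a ∈ s, ∃ b ∈ t, r a b := by
  have hdisj : t.PairwiseDisjoint fun b ↦ {a ∈ s | r a b} := fun b hb c hc hbc ↦
    Set.disjoint_left.2 fun a hab hac ↦ hbc (hr a hab.1 ⟨hb, hab.2⟩ ⟨hc, hac.2⟩)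
  have hsub : ⋃ b ∈ t, {a ∈ s | r a b} ⊆ s := Set.iUnion₂_subset fun b _ ↦ Set.sep_subset _ _
  have hunion : ⋃ b ∈ t, {a ∈ s | r a b} = s := by
    refine Set.eq_of_subset_of_ncard_le hsub ?_ hs
    rwa [ncard_biUnion_of_ncard_eq ht (fun b _ ↦ hs.subset (Set.sep_subset _ _)) hdisj hd]
  intro a ha
  rw [← hunion] at ha
  obtain ⟨b, hb, -, hab⟩ := Set.mem_iUnion₂.1 ha
  exact ⟨b, hb, hab⟩

end Counting

theorem dist_eq_two_iff_commonNeighbors_nonempty {W : Type*} {H : SimpleGraph W} {x y : W} :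
    H.dist x y = 2 ↔ x ≠ y ∧ ¬ H.Adj x y ∧ (H.commonNeighbors x y).Nonempty := by
  rw [SimpleGraph.dist, ENat.toNat_eq_iff two_ne_zero, Nat.cast_ofNat,
    SimpleGraph.edist_eq_two_iff]

theorem setOf_adj_dist_eq_zero {W : Type*} {H : SimpleGraph W} {u w : W} (hH : H.Preconnected)
    (huw : H.Adj u w) : {y | H.Adj w y ∧ H.dist u y = 0} = {u} := by
  ext y
  rw [Set.mem_ofPred_eq, (hH u y).dist_eq_zero_iff]
  exact ⟨fun hy ↦ hy.2.symm, by rintro rfl; exact ⟨huw.symm, rfl⟩⟩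

section CompleteCover

variable {W : Type*} {H : SimpleGraph W} {s : Setoid W} {k m c : ℕ} {x y u w : W}

/-- `H` is a cover of a complete graph whose fibres are the classes of `s`: the fibres are
cocliques, and the edges between two distinct fibres form a perfect matching. -/
structure IsCompleteCover_s12 (H : SimpleGraph W) (s : Setoid W) : Prop where
  not_adj_of_rel : ∀ ⦃x y⦄, s x y → ¬ H.Adj x y
  existsUnique_adj : ∀ ⦃x y⦄, ¬ s x y → ∃! z, s y z ∧ H.Adj x z

theorem isCompleteCover_of_ncard [Finite W] (hdeg : ∀ x, (H.neighborSet x).ncard = k)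
    (hfib : ∀ x, {y | s x y}.ncard = m) (hcard : Nat.card W = m * (k + 1))
    (hadj : ∀ ⦃x y⦄, s x y → ¬ H.Adj x y)
    (hcn : ∀ ⦃x y⦄, x ≠ y → s x y → H.commonNeighbors x y = ∅) : IsCompleteCover_s12 H s where
  not_adj_of_rel := hadj
  existsUnique_adj := by
    intro x y hxy
    have hsub : ∀ z, {a | s y a ∧ H.Adj z a}.Subsingleton := fun z a ha b hb ↦ by
      by_contra hab
      exact Set.eq_empty_iff_forall_notMem.1 (hcn hab (s.trans' (s.symm' ha.1) hb.1)) z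
        ⟨ha.2.symm, hb.2.symm⟩
    have hnbr : ∀ a ∈ {a | s y a}, {z ∈ {z | s y z}ᶜ | H.Adj z a}.ncard = k := fun a ha ↦ by
      rw [← hdeg a]
      congr 1
      ext z
      exact ⟨fun hz ↦ hz.2.symm, fun hz ↦ ⟨fun hyz ↦ hadj (s.trans' (s.symm' ha) hyz) hz, hz.symm⟩⟩
    have hcompl : {z | s y z}ᶜ.ncard ≤ {a | s y a}.ncard * k := by
      have := Set.ncard_add_ncard_compl {z | s y z}
      rw [hfib, hcard] at this
      rw [hfib]
      linarith
    obtain ⟨a, hya, hxa⟩ := exists_rel_of_ncard_le_mul (Set.toFinite _) (Set.toFinite _) hnbr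
      (fun z _ ↦ hsub z) hcompl x fun h ↦ hxy (s.symm' h)
    exact ⟨a, ⟨hya, hxa⟩, fun b hb ↦ hsub x hb ⟨hya, hxa⟩⟩

namespace IsCompleteCover_s12

theorem not_rel_of_adj (h : IsCompleteCover_s12 H s) (hxy : H.Adj x y) : ¬ s x y :=
  fun hs ↦ h.not_adj_of_rel hs hxy

theorem eq_of_adj_of_adj (h : IsCompleteCover_s12 H s) (hxy : s x y) (hwx : H.Adj w x)
    (hwy : H.Adj w y) : x = y :=
  (h.existsUnique_adj (h.not_rel_of_adj hwx)).unique ⟨s.refl' x, hwx⟩ ⟨hxy, hwy⟩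

variable (hcn : ∀ ⦃x y⦄, ¬ s x y → ¬ H.Adj x y → (H.commonNeighbors x y).Nonempty)
include hcn

theorem dist_eq_two_iff (h : IsCompleteCover_s12 H s) :
    H.dist x y = 2 ↔ ¬ s x y ∧ ¬ H.Adj x y := by
  rw [dist_eq_two_iff_commonNeighbors_nonempty]
  constructor
  · rintro ⟨hne, hadj, z, hxz, hyz⟩
    exact ⟨fun hxy ↦ hne (h.eq_of_adj_of_adj hxy hxz.symm hyz.symm), hadj⟩
  · rintro ⟨hxy, hadj⟩
    exact ⟨fun e ↦ hxy (e ▸ s.refl' x), hadj, hcn hxy hadj⟩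

theorem dist_eq_one_or_two_of_not_rel (h : IsCompleteCover_s12 H s) (hxy : ¬ s x y) :
    H.dist x y = 1 ∨ H.dist x y = 2 := by
  rw [SimpleGraph.dist_eq_one_iff_adj, h.dist_eq_two_iff hcn]
  tauto

theorem setOf_adj_dist_eq_two (h : IsCompleteCover_s12 H s) :
    {y | H.Adj w y ∧ H.dist u y = 2} = ⋃ z ∈ {z | s u z} \ {u}, H.commonNeighbors w z := by
  ext y
  rw [Set.mem_ofPred_eq, h.dist_eq_two_iff hcn, Set.mem_iUnion₂]
  constructor
  · rintro ⟨hwy, huy, hadj⟩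
    obtain ⟨z, ⟨huz, hyz⟩, -⟩ := h.existsUnique_adj fun hyu ↦ huy (s.symm' hyu)
    exact ⟨z, ⟨huz, fun e ↦ hadj (e ▸ hyz.symm)⟩, hwy, hyz.symm⟩
  · rintro ⟨z, ⟨huz, hne⟩, hwy, hzy⟩
    refine ⟨hwy, fun huy ↦ ?_, fun hadj ↦ ?_⟩
    · exact h.not_rel_of_adj hzy (s.trans' (s.symm' huz) huy)
    · exact hne (h.eq_of_adj_of_adj huz hadj.symm hzy.symm).symm

theorem setOf_adj_dist_eq_two_of_rel (h : IsCompleteCover_s12 H s) (hne : u ≠ w) (huw : s u w) :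
    {y | H.Adj w y ∧ H.dist u y = 2} = H.neighborSet w := by
  ext y
  rw [Set.mem_ofPred_eq, h.dist_eq_two_iff hcn, SimpleGraph.mem_neighborSet]
  refine ⟨And.left, fun hwy ↦ ⟨hwy, fun huy ↦ ?_, fun huy ↦ ?_⟩⟩
  · exact h.not_rel_of_adj hwy (s.trans' (s.symm' huw) huy)
  · exact hne (h.eq_of_adj_of_adj huw huy.symm hwy.symm)

variable (hnbr : ∀ x, (H.neighborSet x).Nonempty)
include hnbr

theorem preconnected (h : IsCompleteCover_s12 H s) : H.Preconnected := by
  have reachable_of_not_rel {x y} (hxy : ¬ s x y) : H.Reachable x y := .of_dist_ne_zero <| by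
    rcases h.dist_eq_one_or_two_of_not_rel hcn hxy with hd | hd <;> simp [hd]
  intro x y
  obtain ⟨z, hxz⟩ := hnbr x
  by_cases hzy : s z y
  · exact reachable_of_not_rel fun hxy ↦ h.not_rel_of_adj hxz (s.trans' hxy (s.symm' hzy))
  · exact hxz.reachable.trans (reachable_of_not_rel hzy)

theorem dist_le_three (h : IsCompleteCover_s12 H s) : H.dist x y ≤ 3 := by
  by_cases hxy : s x y
  · obtain ⟨z, hxz⟩ := hnbr x
    have hzy : ¬ s z y := fun hzy ↦ h.not_rel_of_adj hxz (s.trans' hxy (s.symm' hzy))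
    have htri := hxz.reachable.dist_triangle_left y
    have := SimpleGraph.dist_eq_one_iff_adj.2 hxz
    rcases h.dist_eq_one_or_two_of_not_rel hcn hzy with hd | hd <;> omega
  · rcases h.dist_eq_one_or_two_of_not_rel hcn hxy with hd | hd <;> omega

theorem dist_eq_three_iff (h : IsCompleteCover_s12 H s) :
    H.dist x y = 3 ↔ x ≠ y ∧ s x y := by
  constructor
  · refine fun hd ↦ ⟨fun e ↦ by simp [e] at hd, by_contra fun hxy ↦ ?_⟩
    rcases h.dist_eq_one_or_two_of_not_rel hcn hxy with hd' | hd' <;> omega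
  · rintro ⟨hne, hxy⟩
    have h0 := (h.preconnected hcn hnbr x y).pos_dist_of_ne hne
    have h1 := mt SimpleGraph.dist_eq_one_iff_adj.1 (h.not_adj_of_rel hxy)
    have h2 : H.dist x y ≠ 2 := fun hd ↦ ((h.dist_eq_two_iff hcn).1 hd).1 hxy
    have := h.dist_le_three hcn hnbr (x := x) (y := y)
    omega

theorem ncard_adj_dist_eq_three (h : IsCompleteCover_s12 H s) (huw : ¬ s u w) (hadj : ¬ H.Adj u w) :
    {y | H.Adj w y ∧ H.dist u y = 3}.ncard = 1 := by
  obtain ⟨z, ⟨huz, hwz⟩, huniq⟩ := h.existsUnique_adj fun hwu ↦ huw (s.symm' hwu)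
  simp only [h.dist_eq_three_iff hcn hnbr]
  refine Set.ncard_eq_one.2 ⟨z, Set.eq_singleton_iff_unique_mem.2 ⟨⟨hwz, ?_, huz⟩, ?_⟩⟩
  · rintro rfl
    exact hadj hwz.symm
  · exact fun y hy ↦ huniq y ⟨hy.2.2, hy.1⟩

end IsCompleteCover_s12

theorem IsCompleteCover_s12.ncard_adj_dist_eq_two (h : IsCompleteCover_s12 H s) (hm : m ≠ 0) (hc : c ≠ 0)
    (hfib : ∀ x, {y | s x y}.ncard = m)
    (hcn : ∀ ⦃x y⦄, ¬ s x y → ¬ H.Adj x y → (H.commonNeighbors x y).ncard = c)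
    (huw : H.Adj u w) : {y | H.Adj w y ∧ H.dist u y = 2}.ncard = (m - 1) * c := by
  have hfin : {z | s u z}.Finite := Set.finite_of_ncard_ne_zero (hfib u ▸ hm)
  have hcard : ∀ z ∈ {z | s u z} \ {u}, (H.commonNeighbors w z).ncard = c := by
    rintro z ⟨huz, hne⟩
    refine hcn (fun hwz ↦ ?_) fun hwz ↦ ?_
    · exact h.not_rel_of_adj huw (s.trans' huz (s.symm' hwz))
    · exact hne (h.eq_of_adj_of_adj huz huw.symm hwz).symm
  rw [h.setOf_adj_dist_eq_two fun x y hxy hadj ↦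
      Set.nonempty_of_ncard_ne_zero (hcn hxy hadj ▸ hc),
    ncard_biUnion_of_ncard_eq hfin.sdiff
      (fun z hz ↦ Set.finite_of_ncard_ne_zero (hcard z hz ▸ hc)) ?_ hcard,
    Set.ncard_sdiff_singleton_of_mem (s := {z | s u z}) (s.refl' u), hfib]
  intro z hz z' hz' hne
  refine Set.disjoint_left.2 fun y hy hy' ↦ hne ?_
  exact h.eq_of_adj_of_adj (s.trans' (s.symm' hz.1) hz'.1) hy.2.symm hy'.2.symm

theorem IsCompleteCover_s12.isDRG3 [Nonempty W] (h : IsCompleteCover_s12 H s)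
    (hk : k ≠ 0) (hm : 2 ≤ m) (hc : c ≠ 0) (hdeg : ∀ x, (H.neighborSet x).ncard = k)
    (hfib : ∀ x, {y | s x y}.ncard = m)
    (hcn : ∀ ⦃x y⦄, ¬ s x y → ¬ H.Adj x y → (H.commonNeighbors x y).ncard = c) :
    IsDRG3 H k ((m - 1) * c) 1 1 c k := by
  have hnbr x : (H.neighborSet x).Nonempty := Set.nonempty_of_ncard_ne_zero (hdeg x ▸ hk)
  have hcn' ⦃x y⦄ (hxy : ¬ s x y) (hadj : ¬ H.Adj x y) : (H.commonNeighbors x y).Nonempty :=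
    Set.nonempty_of_ncard_ne_zero (hcn hxy hadj ▸ hc)
  refine ⟨⟨h.preconnected hcn' hnbr⟩, fun _ _ ↦ h.dist_le_three hcn' hnbr, ?_, hdeg, ?_, ?_, ?_⟩
  · let x : W := Classical.arbitrary W
    obtain ⟨y, hxy, hne⟩ := Set.exists_ne_of_one_lt_ncard (hfib x ▸ hm) x
    exact ⟨x, y, (h.dist_eq_three_iff hcn' hnbr).2 ⟨hne.symm, hxy⟩⟩
  · intro u w huw
    rw [SimpleGraph.dist_eq_one_iff_adj] at huw
    rw [setOf_adj_dist_eq_zero (h.preconnected hcn' hnbr) huw]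
    exact ⟨Set.ncard_singleton u, h.ncard_adj_dist_eq_two (by omega) hc hfib hcn huw⟩
  · intro u w huw
    rw [h.dist_eq_two_iff hcn'] at huw
    refine ⟨?_, h.ncard_adj_dist_eq_three hcn' hnbr huw.1 huw.2⟩
    simp only [SimpleGraph.dist_eq_one_iff_adj]
    rw [← hcn huw.1 huw.2, H.commonNeighbors_symm]
    rfl
  · intro u w huw
    rw [h.dist_eq_three_iff hcn' hnbr] at huw
    rw [h.setOf_adj_dist_eq_two_of_rel hcn' huw.1 huw.2]
    refine ⟨hdeg w, ?_⟩
    have hempty : {y | H.Adj w y ∧ H.dist u y = 4} = ∅ := Set.eq_empty_of_forall_notMem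
      fun y hy ↦ by linarith [hy.2, h.dist_le_three hcn' hnbr (x := u) (y := y)]
    rw [hempty, Set.ncard_empty]

end CompleteCover

section SecondSubconstituent

variable {V : Type*} {G : SimpleGraph V} {n k ℓ μ t : ℕ} {v x y a : V}

/-- The second subconstituent of `G` at `v`: the vertices distinct from and not adjacent to `v`. -/
abbrev secondSubconstituent (G : SimpleGraph V) (v : V) : Set V :=
  {x | x ≠ v ∧ ¬ G.Adj v x}

/-- The trace fibre of `x`: the vertices of the second subconstituent with the same trace
`G.commonNeighbors v` as `x`. For a regular point `v` it is the span of `{v, x}` without `v`. -/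
def traceFiber (G : SimpleGraph V) (v x : V) : Set V :=
  {y | y ∈ secondSubconstituent G v ∧ G.commonNeighbors v y = G.commonNeighbors v x}

/-- Equality of traces on the second subconstituent; its classes are the trace fibres. -/
def traceSetoid (G : SimpleGraph V) (v : V) : Setoid (secondSubconstituent G v) :=
  Setoid.ker fun x ↦ G.commonNeighbors v x

theorem perp_pair_of_mem_secondSubconstituent (hx : x ∈ secondSubconstituent G v) :
    perp G {v, x} = G.commonNeighbors v x := by
  ext w
  simp only [perp, Set.mem_ofPred_eq, Set.mem_insert_iff, Set.mem_singleton_iff,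
    forall_eq_or_imp, forall_eq, SimpleGraph.mem_commonNeighbors]
  constructor
  · rintro ⟨rfl | hwv, rfl | hwx⟩
    · exact absurd rfl hx.1
    · exact absurd hwx hx.2
    · exact absurd hwv.symm hx.2
    · exact ⟨hwv.symm, hwx.symm⟩
  · exact fun hw ↦ ⟨Or.inr hw.1.symm, Or.inr hw.2.symm⟩

theorem insert_traceFiber_subset_commonNeighbors {b : V} (ha : a ∈ G.commonNeighbors v x)
    (hb : b ∈ G.commonNeighbors v x) : insert v (traceFiber G v x) ⊆ G.commonNeighbors a b := by
  rintro z (rfl | ⟨-, hz⟩)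
  · exact ⟨ha.1.symm, hb.1.symm⟩
  · rw [← hz] at ha hb
    exact ⟨ha.2.symm, hb.2.symm⟩

theorem neighborSet_sdiff_secondSubconstituent (hx : x ∈ secondSubconstituent G v) :
    G.neighborSet x \ secondSubconstituent G v = G.commonNeighbors v x := by
  ext z
  have : G.Adj x z → z ≠ v := fun hxz e ↦ hx.2 (e ▸ hxz.symm)
  simp only [Set.mem_sdiff, SimpleGraph.mem_neighborSet, Set.mem_ofPred_eq,
    SimpleGraph.mem_commonNeighbors]
  tauto

theorem commonNeighbors_sdiff_secondSubconstituent (hx : x ∈ secondSubconstituent G v) :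
    G.commonNeighbors x y \ secondSubconstituent G v =
      G.commonNeighbors v x ∩ G.commonNeighbors v y := by
  rw [← neighborSet_sdiff_secondSubconstituent hx]
  ext z
  have : G.Adj x z → z ≠ v := fun hxz e ↦ hx.2 (e ▸ hxz.symm)
  simp only [Set.mem_sdiff, Set.mem_inter_iff, SimpleGraph.mem_neighborSet, Set.mem_ofPred_eq,
    SimpleGraph.mem_commonNeighbors]
  tauto

theorem neighborSet_sdiff_secondSubconstituent_of_adj (ha : G.Adj v a) :
    G.neighborSet a \ secondSubconstituent G v = insert v (G.commonNeighbors v a) := by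
  ext z
  have : z = v → G.Adj a z := fun e ↦ e ▸ ha.symm
  simp only [Set.mem_sdiff, SimpleGraph.mem_neighborSet, Set.mem_ofPred_eq, Set.mem_insert_iff,
    SimpleGraph.mem_commonNeighbors]
  tauto

theorem ncard_neighborSet_induce (S : Set V) (x : S) :
    ((G.induce S).neighborSet x).ncard = (G.neighborSet x ∩ S).ncard :=
  Set.ncard_subtype (· ∈ S) (G.neighborSet x)

theorem ncard_commonNeighbors_induce (S : Set V) (x y : S) :
    ((G.induce S).commonNeighbors x y).ncard = (G.commonNeighbors x y ∩ S).ncard :=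
  Set.ncard_subtype (· ∈ S) (G.commonNeighbors x y)

theorem ncard_setOf_traceSetoid (x : secondSubconstituent G v) :
    {y | traceSetoid G v x y}.ncard = (traceFiber G v x).ncard := by
  have h := Set.ncard_subtype (· ∈ secondSubconstituent G v) (traceFiber G v x)
  rw [Set.inter_eq_self_of_subset_left fun y hy ↦ hy.1] at h
  rw [← h]
  congr 1
  ext y
  exact ⟨fun hy ↦ ⟨y.2, hy.symm⟩, fun hy ↦ hy.2.symm⟩

theorem ncard_insert_traceFiber [Finite V] (x : V) :
    (insert v (traceFiber G v x)).ncard = (traceFiber G v x).ncard + 1 :=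
  Set.ncard_insert_of_notMem fun hv ↦ hv.1.1 rfl

variable [Fintype V]

theorem ncard_neighborSet_of_isSRGWith (hG : G.IsSRGWith n k ℓ μ) (x : V) :
    (G.neighborSet x).ncard = k := by
  rw [← hG.regular x, Set.ncard_eq_toFinset_card', ← SimpleGraph.neighborFinset,
    SimpleGraph.card_neighborFinset_eq_degree]

theorem ncard_commonNeighbors_of_adj (hG : G.IsSRGWith n k ℓ μ) (hxy : G.Adj x y) :
    (G.commonNeighbors x y).ncard = ℓ := by
  rw [← hG.of_adj x y hxy, Fintype.card_eq_nat_card, Nat.card_coe_set_eq]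

theorem ncard_commonNeighbors_of_not_adj (hG : G.IsSRGWith n k ℓ μ) (hne : x ≠ y)
    (hxy : ¬ G.Adj x y) : (G.commonNeighbors x y).ncard = μ := by
  rw [← hG.of_not_adj hne hxy, Fintype.card_eq_nat_card, Nat.card_coe_set_eq]

theorem ncard_trace (hG : G.IsSRGWith n k ℓ μ) (hx : x ∈ secondSubconstituent G v) :
    (G.commonNeighbors v x).ncard = μ :=
  ncard_commonNeighbors_of_not_adj hG hx.1.symm hx.2

theorem ncard_secondSubconstituent_add (hG : G.IsSRGWith n k ℓ μ) (v : V) :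
    (secondSubconstituent G v).ncard + (k + 1) = n := by
  have hcompl : (secondSubconstituent G v)ᶜ = insert v (G.neighborSet v) := by
    ext z
    simp only [Set.mem_compl_iff, Set.mem_ofPred_eq, Set.mem_insert_iff,
      SimpleGraph.mem_neighborSet]
    tauto
  rw [← hG.card, Fintype.card_eq_nat_card, ← Set.ncard_add_ncard_compl (secondSubconstituent G v),
    hcompl, Set.ncard_insert_of_notMem (s := G.neighborSet v) (G.loopless.irrefl v),
    ncard_neighborSet_of_isSRGWith hG]

theorem ncard_neighborSet_inter_secondSubconstituent_add (hG : G.IsSRGWith n k ℓ μ)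
    (hx : x ∈ secondSubconstituent G v) :
    (G.neighborSet x ∩ secondSubconstituent G v).ncard + μ = k := by
  rw [← ncard_neighborSet_of_isSRGWith hG x, ← ncard_trace hG hx,
    ← neighborSet_sdiff_secondSubconstituent hx, Set.ncard_inter_add_ncard_sdiff_eq_ncard]

theorem ncard_neighborSet_inter_secondSubconstituent_add_of_adj (hG : G.IsSRGWith n k ℓ μ)
    (ha : G.Adj v a) : (G.neighborSet a ∩ secondSubconstituent G v).ncard + (ℓ + 1) = k := by
  rw [← ncard_neighborSet_of_isSRGWith hG a, ← ncard_commonNeighbors_of_adj hG ha,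
    ← Set.ncard_insert_of_notMem (G.notMem_commonNeighbors_left v a),
    ← neighborSet_sdiff_secondSubconstituent_of_adj ha, Set.ncard_inter_add_ncard_sdiff_eq_ncard]

theorem commonNeighbors_eq_trace (hG : G.IsSRGWith n k ℓ μ) (hx : x ∈ secondSubconstituent G v)
    (hne : x ≠ y) (hadj : ¬ G.Adj x y) (htr : G.commonNeighbors v x = G.commonNeighbors v y) :
    G.commonNeighbors x y = G.commonNeighbors v x := by
  have hsub : G.commonNeighbors v x ⊆ G.commonNeighbors x y := fun z hz ↦ ⟨hz.2, (htr ▸ hz).2⟩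
  refine (Set.eq_of_subset_of_ncard_le hsub ?_).symm
  rw [ncard_commonNeighbors_of_not_adj hG hne hadj, ncard_trace hG hx]

theorem perp_perp_pair_eq_insert_traceFiber (hG : G.IsSRGWith n k ℓ μ)
    (hx : x ∈ secondSubconstituent G v)
    (hspan : ∀ y ∈ perp G (perp G {v, x}), ∀ z ∈ perp G (perp G {v, x}), ¬ G.Adj y z) :
    perp G (perp G {v, x}) = insert v (traceFiber G v x) := by
  rw [perp_pair_of_mem_secondSubconstituent hx] at hspan ⊢
  have hv : v ∈ perp G (G.commonNeighbors v x) := fun a ha ↦ Or.inr ha.1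
  refine Set.Subset.antisymm (fun w hw ↦ ?_) ?_
  · refine or_iff_not_imp_left.2 fun hwv ↦ ?_
    have hwD : w ∈ secondSubconstituent G v := ⟨hwv, hspan v hv w hw⟩
    have hsub : G.commonNeighbors v x ⊆ G.commonNeighbors v w := fun a ha ↦
      ⟨ha.1, (hw a ha).resolve_left fun e ↦ hwD.2 (e ▸ ha.1)⟩
    refine ⟨hwD, (Set.eq_of_subset_of_ncard_le hsub ?_).symm⟩
    rw [ncard_trace hG hwD, ncard_trace hG hx]
  · rintro w (rfl | ⟨-, hw⟩) a ha
    · exact hv a ha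
    · rw [← hw] at ha
      exact Or.inr ha.2

/-- Two common vertices of the traces would have the `t + 1` vertices of `{v} ∪ traceFiber G v x`
and also `y` as common neighbours. -/
theorem subsingleton_trace_inter_trace (hG : G.IsSRGWith n k ℓ (t + 1)) (hℓ : ℓ ≤ t + 1)
    (hfib : (traceFiber G v x).ncard = t) (hy : y ∈ secondSubconstituent G v)
    (htr : G.commonNeighbors v x ≠ G.commonNeighbors v y) :
    (G.commonNeighbors v x ∩ G.commonNeighbors v y).Subsingleton := by
  rintro a ⟨hax, hay⟩ b ⟨hbx, hby⟩
  by_contra hab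
  have hcard : (G.commonNeighbors a b).ncard ≤ t + 1 := by
    by_cases hadj : G.Adj a b
    · exact (ncard_commonNeighbors_of_adj hG hadj).trans_le hℓ
    · exact (ncard_commonNeighbors_of_not_adj hG hab hadj).le
  rw [← hfib, ← ncard_insert_traceFiber] at hcard
  have heq := Set.eq_of_subset_of_ncard_le (insert_traceFiber_subset_commonNeighbors hax hbx) hcard
  have hyab : y ∈ insert v (traceFiber G v x) := heq ▸ ⟨hay.2.symm, hby.2.symm⟩
  rcases hyab with rfl | ⟨-, hyx⟩
  · exact hy.1 rfl
  · exact htr hyx.symm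

section EqualParameters

variable {q : ℕ} (hG : G.IsSRGWith (q ^ 3 + q ^ 2 + q + 1) (q ^ 2 + q) (q - 1) (q + 1))
include hG

theorem ncard_secondSubconstituent (v : V) : (secondSubconstituent G v).ncard = q ^ 3 := by
  have := ncard_secondSubconstituent_add hG v
  omega

theorem ncard_neighborSet_induce_secondSubconstituent (x : secondSubconstituent G v) :
    ((G.induce (secondSubconstituent G v)).neighborSet x).ncard = q ^ 2 - 1 := by
  have := ncard_neighborSet_inter_secondSubconstituent_add hG x.2
  rw [ncard_neighborSet_induce]
  omega

theorem ncard_adj_sdiff_traceFiber (hfib : (traceFiber G v x).ncard = q)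
    (ha : a ∈ G.commonNeighbors v x) :
    {z ∈ secondSubconstituent G v \ traceFiber G v x | G.Adj z a}.ncard = q ^ 2 - q := by
  have hsub : traceFiber G v x ⊆ G.neighborSet a ∩ secondSubconstituent G v :=
    fun z hz ↦ ⟨(hz.2 ▸ ha : a ∈ G.commonNeighbors v z).2.symm, hz.1⟩
  have heq : {z ∈ secondSubconstituent G v \ traceFiber G v x | G.Adj z a} =
      (G.neighborSet a ∩ secondSubconstituent G v) \ traceFiber G v x := by
    ext z
    simp only [Set.mem_ofPred_eq, Set.mem_sdiff, Set.mem_inter_iff, SimpleGraph.mem_neighborSet,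
      G.adj_comm z a]
    tauto
  have := ncard_neighborSet_inter_secondSubconstituent_add_of_adj hG ha.1
  have hq : q ≠ 0 := by
    rintro rfl
    omega
  rw [heq, Set.ncard_sdiff hsub, hfib]
  omega

theorem ncard_trace_inter_trace (hfib : (traceFiber G v x).ncard = q)
    (hx : x ∈ secondSubconstituent G v) (hy : y ∈ secondSubconstituent G v)
    (htr : G.commonNeighbors v x ≠ G.commonNeighbors v y) :
    (G.commonNeighbors v x ∩ G.commonNeighbors v y).ncard = 1 := by
  have hsub z (hz : z ∈ secondSubconstituent G v \ traceFiber G v x) :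
      (G.commonNeighbors v x ∩ G.commonNeighbors v z).Subsingleton :=
    subsingleton_trace_inter_trace hG (by omega) hfib hz.1 fun e ↦ hz.2 ⟨hz.1, e.symm⟩
  have hcard : (secondSubconstituent G v \ traceFiber G v x).ncard ≤
      (G.commonNeighbors v x).ncard * (q ^ 2 - q) := by
    rw [Set.ncard_sdiff fun z hz ↦ hz.1, hfib, ncard_trace hG hx, ncard_secondSubconstituent hG,
      Nat.mul_sub]
    have : (q + 1) * q ^ 2 = q ^ 3 + q ^ 2 := by ring
    have : (q + 1) * q = q ^ 2 + q := by ring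
    omega
  have hyS : y ∈ secondSubconstituent G v \ traceFiber G v x := ⟨hy, fun h ↦ htr h.2.symm⟩
  obtain ⟨a, hax, hya⟩ := exists_rel_of_ncard_le_mul (Set.toFinite _) (Set.toFinite _)
    (fun a ha ↦ ncard_adj_sdiff_traceFiber hG hfib ha)
    (fun z hz a ha b hb ↦ hsub z hz ⟨ha.1, ha.1.1, ha.2⟩ ⟨hb.1, hb.1.1, hb.2⟩) hcard y hyS
  exact Set.ncard_eq_one.2 ⟨a, (hsub y hyS).eq_singleton_of_mem ⟨hax, hax.1, hya⟩⟩

theorem ncard_commonNeighbors_inter_secondSubconstituent (hfib : (traceFiber G v x).ncard = q)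
    (hx : x ∈ secondSubconstituent G v) (hy : y ∈ secondSubconstituent G v)
    (htr : G.commonNeighbors v x ≠ G.commonNeighbors v y) (hadj : ¬ G.Adj x y) :
    (G.commonNeighbors x y ∩ secondSubconstituent G v).ncard = q := by
  have hne : x ≠ y := by
    rintro rfl
    exact htr rfl
  have hsplit := Set.ncard_inter_add_ncard_sdiff_eq_ncard (G.commonNeighbors x y)
    (secondSubconstituent G v)
  rw [commonNeighbors_sdiff_secondSubconstituent hx,
    ncard_trace_inter_trace hG hfib hx hy htr,
    ncard_commonNeighbors_of_not_adj hG hne hadj] at hsplit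
  omega

theorem isCompleteCover_secondSubconstituent
    (hfib : ∀ x ∈ secondSubconstituent G v, (traceFiber G v x).ncard = q)
    (hadj : ∀ x ∈ secondSubconstituent G v, ∀ y ∈ traceFiber G v x, ¬ G.Adj x y) :
    IsCompleteCover_s12 (G.induce (secondSubconstituent G v)) (traceSetoid G v) := by
  have hnot_adj ⦃x y⦄ (hxy : traceSetoid G v x y) :
      ¬ (G.induce (secondSubconstituent G v)).Adj x y := hadj x x.2 y ⟨y.2, hxy.symm⟩
  refine isCompleteCover_of_ncard (ncard_neighborSet_induce_secondSubconstituent hG)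
    (fun x ↦ (ncard_setOf_traceSetoid x).trans (hfib x x.2)) ?_ hnot_adj fun x y hne hxy ↦ ?_
  · rw [Nat.card_coe_set_eq, ncard_secondSubconstituent hG]
    rcases q.eq_zero_or_pos with rfl | hq
    · rfl
    · rw [Nat.sub_add_cancel (Nat.one_le_pow _ _ hq), pow_succ']
  · have hxy_cn := commonNeighbors_eq_trace hG x.2 (Subtype.coe_ne_coe.2 hne) (hnot_adj hxy) hxy
    refine Set.eq_empty_of_forall_notMem fun z hz ↦ z.2.2 ?_
    have hz' : (z : V) ∈ G.commonNeighbors x y := hz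
    exact (hxy_cn ▸ hz').1

end EqualParameters

end SecondSubconstituent

theorem secondSubconstituent_of_regularPoint_DRG_general {V : Type*} [Fintype V]
    (q : ℕ) (hq : 2 ≤ q) (G : SimpleGraph V)
    (hG : G.IsSRGWith (q ^ 3 + q ^ 2 + q + 1) (q ^ 2 + q) (q - 1) (q + 1))
    (v : V) (hspan : ∀ x : V, x ≠ v → ¬ G.Adj v x →
      (perp G (perp G {v, x})).ncard = q + 1 ∧
      ∀ y ∈ perp G (perp G {v, x}), ∀ z ∈ perp G (perp G {v, x}), ¬ G.Adj y z) :
    IsDRG3 (G.induce {x : V | x ≠ v ∧ ¬ G.Adj v x})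
      (q ^ 2 - 1) (q ^ 2 - q) 1 1 q (q ^ 2 - 1) := by
  have hspan_eq x (hx : x ∈ secondSubconstituent G v) :
      perp G (perp G {v, x}) = insert v (traceFiber G v x) :=
    perp_perp_pair_eq_insert_traceFiber hG hx (hspan x hx.1 hx.2).2
  have hfib x (hx : x ∈ secondSubconstituent G v) : (traceFiber G v x).ncard = q := by
    have hcard := (hspan x hx.1 hx.2).1
    rwa [hspan_eq x hx, ncard_insert_traceFiber, Nat.add_right_cancel_iff] at hcard
  have hadj x (hx : x ∈ secondSubconstituent G v) y (hy : y ∈ traceFiber G v x) :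
      ¬ G.Adj x y := by
    have hcoclique := (hspan x hx.1 hx.2).2
    rw [hspan_eq x hx] at hcoclique
    exact hcoclique x (Or.inr ⟨hx, rfl⟩) y (Or.inr hy)
  have hq_sq : 2 ^ 2 ≤ q ^ 2 := Nat.pow_le_pow_left hq 2
  have hcover := isCompleteCover_secondSubconstituent hG hfib hadj
  have : Nonempty (secondSubconstituent G v) := Set.Nonempty.to_subtype <|
    Set.nonempty_of_ncard_ne_zero (by rw [ncard_secondSubconstituent hG]; positivity)
  rw [show q ^ 2 - q = (q - 1) * q by rw [Nat.sub_one_mul, sq]]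
  refine hcover.isDRG3 (by omega) hq (by omega) (ncard_neighborSet_induce_secondSubconstituent hG)
    (fun x ↦ (ncard_setOf_traceSetoid x).trans (hfib x x.2)) fun x y hxy hnadj ↦ ?_
  rw [ncard_commonNeighbors_induce]
  exact ncard_commonNeighbors_inter_secondSubconstituent hG (hfib x x.2) x.2 y.2 hxy hnadj

/-- Let `q ≥ 2`, `Γ` strongly regular with parameters
`(q³+q²+q+1, q²+q, q−1, q+1)`, and `v` a regular point (with `s = t = q`). Then the
subgraph induced on the vertices distinct from `v` and not adjacent to `v` is
distance-regular with intersection array `{q²−1, q²−q, 1; 1, q, q²−1}`. -/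
theorem secondSubconstituent_of_regularPoint_DRG {V : Type} [Fintype V]
    (q : ℕ) (hq : 2 ≤ q) (G : SimpleGraph V)
    (hG : G.IsSRGWith (q ^ 3 + q ^ 2 + q + 1) (q ^ 2 + q) (q - 1) (q + 1))
    (v : V) (hreg : IsRegularPoint G q v) :
    IsDRG3 (G.induce {x : V | x ≠ v ∧ ¬ G.Adj v x})
      (q ^ 2 - 1) (q ^ 2 - q) 1 1 q (q ^ 2 - 1) := by
  exact secondSubconstituent_of_regularPoint_DRG_general q hq G hG v hreg.2
end

section
/- Let q ≥ 2, let Γ be a strongly regular graph with parameters (q³+q²+q+1, q²+q, q−1, q+1), and let v be a regular point of Γ (with s = t = q). Let a, b be vertices distinct from v and not adjacent to v with N(v) ∩ N(a) ≠ N(v) ∩ N(b). Define a graph Γ' on the same vertex set as follows: for u ∈ N(v) and a vertex w ∉ N(v) ∪ {v} with N(v) ∩ N(w) = N(v) ∩ N(a), let u and w be adjacent in Γ' iff u ∈ N(v) ∩ N(b); for u ∈ N(v) and w ∉ N(v) ∪ {v} with N(v) ∩ N(w) = N(v) ∩ N(b), let u and w be adjacent in Γ' iff u ∈ N(v) ∩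 N(a); all other pairs of vertices are adjacent in Γ' iff they are adjacent in Γ. Then Γ' is a strongly regular graph with parameters (q³+q²+q+1, q²+q, q−1, q+1). -/
open scoped Classical

/-- The pair `(x, w)` is a switched pair (with respect to `v`, `a`, `b`): `x ∈ N(v)` and
`w` is a vertex of the second subconstituent of `v` lying in the fibre of `a` or of `b`. -/
def SwitchedPair {V : Type*} (G : SimpleGraph V) (v a b : V) (x w : V) : Prop :=
  x ∈ G.neighborSet v ∧ w ≠ v ∧ ¬ G.Adj v w ∧
    (G.neighborSet v ∩ G.neighborSet w = G.neighborSet v ∩ G.neighborSet a ∨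
     G.neighborSet v ∩ G.neighborSet w = G.neighborSet v ∩ G.neighborSet b)

/-!
Let `N` be the neighbourhood of the regular point `v`, let `O` be the set of vertices at distance
two from `v`, and call `T w = N ∩ N(w)`, for `w ∈ O`, the trace of `w`. Double counting shows that
the traces form the blocks of a dual affine plane on `N`: each has `q + 1` points, each is the trace
of exactly `q` vertices of `O`, two different ones meet in exactly one point, and each meets every
maximal clique of `N` exactly once. A further count shows that a vertex `w ∈ O` has exactly one
neighbour with trace `T` for every trace `T ≠ T w`, and none with trace `T w`.

These numbers do not depend on which trace is which. Hence, if `σ` is *any* permutation of the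
traces and the neighbours of `w ∈ O` in `N` are changed from `T w` to `σ (T w)`, all common
neighbour counts persist. For `u ∈ N` and `w ∈ O`, for instance, `σ (T w)` contains
`1 - [u ∈ σ (T w)]` neighbours of `u`, while the common neighbours of `u` and `w` in `O` correspond
to the `q - [u ∈ σ (T w)]` traces `T ≠ T w` with `u ∈ σ T`. The theorem is the case where `σ` is the
transposition of the traces of `a` and `b`.
-/

open Finset

section Counting

variable {α ι : Type*}

lemma sum_card_inter_eq_sum_card_filter_mem (s : Finset α) (t : Finset ι) (f : ι → Finset α) :
    ∑ i ∈ t, #(s ∩ f i) = ∑ a ∈ s, #{i ∈ t | a ∈ f i} := by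
  simp_rw [← filter_mem_eq_inter]
  exact (sum_card_bipartiteAbove_eq_sum_card_bipartiteBelow (fun a i ↦ a ∈ f i)).symm

lemma eq_one_of_le_one_of_sum_eq_card {s : Finset ι} {f : ι → ℕ} (hf : ∀ i ∈ s, f i ≤ 1)
    (hsum : ∑ i ∈ s, f i = #s) {i : ι} (hi : i ∈ s) : f i = 1 :=
  (sum_eq_sum_iff_of_le hf).1 (by rw [hsum, card_eq_sum_ones]) i hi

lemma card_filter_perm {s : Finset α} {σ : Equiv.Perm α} (hσ : ∀ a, σ a ∈ s ↔ a ∈ s)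
    (p : α → Prop) [DecidablePred p] : #{a ∈ s | p (σ a)} = #{a ∈ s | p a} :=
  card_equiv σ (by simp [hσ])

end Counting

section CommonNeighbours

variable {V : Type*} [Fintype V] {G : SimpleGraph V} {v w x y z : V}

/-- The common neighbours of `x` and `y`, as a finset. When `x` and `y` are distinct and
non-adjacent, this is the trace `{x, y}^⊥`. -/
noncomputable def commonNbrs (G : SimpleGraph V) (x y : V) : Finset V :=
  G.neighborFinset x ∩ G.neighborFinset y

@[simp]
lemma mem_commonNbrs : z ∈ commonNbrs G x y ↔ G.Adj x z ∧ G.Adj y z := by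
  simp [commonNbrs]

lemma commonNbrs_comm (G : SimpleGraph V) (x y : V) : commonNbrs G x y = commonNbrs G y x :=
  inter_comm _ _

lemma coe_commonNbrs (G : SimpleGraph V) (x y : V) :
    (commonNbrs G x y : Set V) = G.neighborSet x ∩ G.neighborSet y := by
  simp [commonNbrs]

lemma commonNbrs_eq_iff :
    commonNbrs G v x = commonNbrs G v y ↔
      G.neighborSet v ∩ G.neighborSet x = G.neighborSet v ∩ G.neighborSet y := by
  rw [← coe_commonNbrs, ← coe_commonNbrs, coe_inj]

lemma card_commonNbrs_self (G : SimpleGraph V) (x : V) : #(commonNbrs G x x) = G.degree x := by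
  simp [commonNbrs]

lemma card_commonNbrs (G : SimpleGraph V) (x y : V) :
    #(commonNbrs G x y) = Fintype.card (G.commonNeighbors x y) := by
  rw [← Set.toFinset_card]
  congr 1
  ext z
  simp [SimpleGraph.mem_commonNeighbors]

lemma isSRGWith_iff_card_commonNbrs {n k l m : ℕ} :
    G.IsSRGWith n k l m ↔ Fintype.card V = n ∧
      ∀ x y, #(commonNbrs G x y) = if x = y then k else if G.Adj x y then l else m := by
  refine ⟨fun h ↦ ⟨h.card, fun x y ↦ ?_⟩, fun ⟨hn, h⟩ ↦ ⟨hn, fun x ↦ ?_, fun x y hxy ↦ ?_,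
    fun x y hne hxy ↦ ?_⟩⟩
  · split_ifs with hxy hadj
    · rw [hxy, card_commonNbrs_self, h.regular y]
    · rw [card_commonNbrs, h.of_adj x y hadj]
    · rw [card_commonNbrs, h.of_not_adj hxy hadj]
  · rw [← card_commonNbrs_self, h, if_pos rfl]
  · rw [← card_commonNbrs, h, if_neg hxy.ne, if_pos hxy]
  · rw [← card_commonNbrs, h, if_neg hne, if_neg hxy]

lemma card_eq_add_card_inter_neighborFinset (G : SimpleGraph V) (v : V) (s : Finset V) :
    #s = (if v ∈ s then 1 else 0) + #(G.neighborFinset v ∩ s) + #(Gᶜ.neighborFinset v ∩ s) := by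
  have hnbr : {x ∈ s.erase v | G.Adj v x} = G.neighborFinset v ∩ s := by
    ext x
    simp only [mem_filter, mem_erase, mem_inter, SimpleGraph.mem_neighborFinset]
    exact ⟨fun h ↦ ⟨h.2, h.1.2⟩, fun h ↦ ⟨⟨h.1.ne', h.2⟩, h.1⟩⟩
  have hfar : {x ∈ s.erase v | ¬ G.Adj v x} = Gᶜ.neighborFinset v ∩ s := by
    ext x
    simp only [mem_filter, mem_erase, mem_inter, SimpleGraph.mem_neighborFinset,
      SimpleGraph.compl_adj]
    tauto
  rw [add_assoc, ← hnbr, ← hfar, card_filter_add_card_filter_not]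
  split_ifs with hv
  · rw [add_comm, card_erase_add_one hv]
  · rw [erase_eq_of_notMem hv, zero_add]

lemma filter_mem_commonNbrs {u : V} (hu : G.Adj v u) (s : Finset V) :
    {z ∈ s | u ∈ commonNbrs G v z} = s ∩ G.neighborFinset u := by
  ext z
  simp [hu, G.adj_comm z u]

lemma neighborFinset_inter_commonNbrs (G : SimpleGraph V) (v x y : V) :
    G.neighborFinset v ∩ commonNbrs G x y = commonNbrs G v x ∩ commonNbrs G v y :=
  inter_inter_distrib_left _ _ _

/-- The traces `{v, w}^⊥`, where `w` runs over the vertices at distance two from `v`. -/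
noncomputable def traces (G : SimpleGraph V) (v : V) : Finset (Finset V) :=
  (Gᶜ.neighborFinset v).image (commonNbrs G v)

lemma commonNbrs_mem_traces (hw : Gᶜ.Adj v w) : commonNbrs G v w ∈ traces G v :=
  mem_image_of_mem _ (by simpa using hw)

lemma exists_of_mem_traces {T : Finset V} (hT : T ∈ traces G v) :
    ∃ w, Gᶜ.Adj v w ∧ commonNbrs G v w = T := by
  simpa [traces] using hT

lemma subset_of_mem_traces {T : Finset V} (hT : T ∈ traces G v) : T ⊆ G.neighborFinset v := by
  obtain ⟨w, -, rfl⟩ := exists_of_mem_traces hT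
  exact inter_subset_left

lemma card_filter_trace_eq_sum {s : Finset V} (hs : s ⊆ Gᶜ.neighborFinset v)
    (p : Finset V → Prop) [DecidablePred p] :
    #{z ∈ s | p (commonNbrs G v z)} =
      ∑ T ∈ traces G v with p T, #{z ∈ s | commonNbrs G v z = T} := by
  rw [card_eq_sum_card_fiberwise (f := commonNbrs G v) (t := {T ∈ traces G v | p T})]
  · refine sum_congr rfl fun T hT ↦ congrArg card ?_
    rw [filter_filter]
    exact filter_congr fun z _ ↦ and_iff_right_of_imp fun hz ↦ hz ▸ (mem_filter.1 hT).2
  · intro z hz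
    rw [mem_coe, mem_filter] at hz ⊢
    exact ⟨mem_image_of_mem _ (hs hz.1), hz.2⟩

lemma perp_pair (hw : Gᶜ.Adj v w) : perp G {v, w} = commonNbrs G v w := by
  ext u
  simp only [perp, Set.mem_ofPred_eq, Set.mem_insert_iff, Set.mem_singleton_iff,
    forall_eq_or_imp, forall_eq, mem_coe, mem_commonNbrs, G.adj_comm u]
  refine ⟨?_, fun h ↦ ⟨.inr h.1, .inr h.2⟩⟩
  rintro ⟨rfl | hv, rfl | hw'⟩
  · exact absurd rfl hw.1
  · exact absurd hw'.symm hw.2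
  · exact absurd hv hw.2
  · exact ⟨hv, hw'⟩

end CommonNeighbours

/-- `G` has the strongly regular parameters of the collinearity graph of a generalized quadrangle
of order `(s, t)`. The graph need not come from a generalized quadrangle. -/
def HasGQParams {V : Type*} [Fintype V] (G : SimpleGraph V) (s t : ℕ) : Prop :=
  G.IsSRGWith ((s + 1) * (s * t + 1)) (s * (t + 1)) (s - 1) (t + 1)

namespace HasGQParams

variable {V : Type*} [Fintype V] {G : SimpleGraph V} {s t q : ℕ} {u v w x y : V}

lemma self_iff : HasGQParams G q q ↔
    G.IsSRGWith (q ^ 3 + q ^ 2 + q + 1) (q ^ 2 + q) (q - 1) (q + 1) := by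
  rw [HasGQParams, show (q + 1) * (q * q + 1) = q ^ 3 + q ^ 2 + q + 1 by ring,
    show q * (q + 1) = q ^ 2 + q by ring]

lemma card_neighborFinset (hG : HasGQParams G s t) (x : V) :
    #(G.neighborFinset x) = s * (t + 1) := by
  rw [SimpleGraph.card_neighborFinset_eq_degree, hG.regular x]

lemma card_commonNbrs_of_adj (hG : HasGQParams G s t) (h : G.Adj x y) :
    #(commonNbrs G x y) = s - 1 := by
  rw [card_commonNbrs, hG.of_adj x y h]

lemma card_commonNbrs_of_compl_adj (hG : HasGQParams G s t) (h : Gᶜ.Adj x y) :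
    #(commonNbrs G x y) = t + 1 := by
  rw [card_commonNbrs, hG.of_not_adj h.1 h.2]

lemma pos_of_adj (hG : HasGQParams G s t) (h : G.Adj x y) : 0 < s := by
  have hpos : 0 < #(G.neighborFinset x) := card_pos.2 ⟨y, by simpa using h⟩
  rw [hG.card_neighborFinset] at hpos
  exact Nat.pos_of_mul_pos_right hpos

lemma card_compl_neighborFinset (hG : HasGQParams G s t) (v : V) :
    #(Gᶜ.neighborFinset v) = s ^ 2 * t := by
  have h := card_eq_add_card_inter_neighborFinset G v univ
  rw [card_univ, hG.card, if_pos (mem_univ v), inter_univ, inter_univ,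
    hG.card_neighborFinset] at h
  linarith

lemma card_compl_neighborFinset_inter_of_adj (hG : HasGQParams G s t) (hu : G.Adj v u) :
    #(Gᶜ.neighborFinset v ∩ G.neighborFinset u) = s * t := by
  have h := card_eq_add_card_inter_neighborFinset G v (G.neighborFinset u)
  have hnbr : #(G.neighborFinset v ∩ G.neighborFinset u) = s - 1 := hG.card_commonNbrs_of_adj hu
  rw [hG.card_neighborFinset, if_pos (by simpa using hu.symm), hnbr, mul_add_one] at h
  have := hG.pos_of_adj hu
  omega

lemma card_compl_neighborFinset_inter_of_compl_adj (hG : HasGQParams G s t) (hw : Gᶜ.Adj v w) :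
    #(Gᶜ.neighborFinset v ∩ G.neighborFinset w) + (t + 1) = s * (t + 1) := by
  have h := card_eq_add_card_inter_neighborFinset G v (G.neighborFinset w)
  have hnbr : #(G.neighborFinset v ∩ G.neighborFinset w) = t + 1 :=
    hG.card_commonNbrs_of_compl_adj hw
  rw [hG.card_neighborFinset, if_neg (by simpa using fun h ↦ hw.2 h.symm), hnbr] at h
  omega

end HasGQParams

namespace IsRegularPoint

variable {V : Type*} {G : SimpleGraph V} {s t q : ℕ} {u v w x y z : V}

lemma adj_trans (hv : IsRegularPoint G t v) (hx : G.Adj v x) (hy : G.Adj v y) (hz : G.Adj v z)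
    (hxy : G.Adj x y) (hyz : G.Adj y z) (hxz : x ≠ z) : G.Adj x z :=
  (hv.1.trans (x := ⟨x, hx⟩) (y := ⟨y, hy⟩) (z := ⟨z, hz⟩) (.inr hxy) (.inr hyz)).resolve_left
    fun h ↦ hxz (congrArg Subtype.val h)

variable [Fintype V]

lemma perp_perp_pair (hv : IsRegularPoint G t v) (hG : HasGQParams G s t) (hw : Gᶜ.Adj v w) :
    perp G (perp G {v, w}) =
      insert v {z ∈ Gᶜ.neighborFinset v | commonNbrs G v z = commonNbrs G v w} := by
  have hcoclique := (hv.2 w hw.1.symm hw.2).2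
  rw [perp_pair hw] at hcoclique ⊢
  have hvmem : v ∈ perp G (commonNbrs G v w) := fun u hu ↦ .inr (mem_commonNbrs.1 hu).1
  ext z
  simp only [coe_insert, Set.mem_insert_iff, mem_coe, mem_filter, SimpleGraph.mem_neighborFinset]
  constructor
  · intro hz
    refine or_iff_not_imp_left.2 fun hzv ↦ ?_
    have hvz : Gᶜ.Adj v z := ⟨Ne.symm hzv, hcoclique v hvmem z hz⟩
    have hsub : commonNbrs G v w ⊆ commonNbrs G v z := fun u hu ↦ by
      have hvu := (mem_commonNbrs.1 hu).1
      exact mem_commonNbrs.2 ⟨hvu, (hz u hu).resolve_left fun h ↦ hvz.2 (h ▸ hvu)⟩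
    refine ⟨hvz, (eq_of_subset_of_card_le hsub ?_).symm⟩
    rw [hG.card_commonNbrs_of_compl_adj hvz, hG.card_commonNbrs_of_compl_adj hw]
  · rintro (rfl | ⟨-, hz⟩)
    · exact hvmem
    · exact hz ▸ fun u hu ↦ .inr (mem_commonNbrs.1 hu).2

lemma card_fibre (hv : IsRegularPoint G t v) (hG : HasGQParams G s t) {T : Finset V}
    (hT : T ∈ traces G v) : #{z ∈ Gᶜ.neighborFinset v | commonNbrs G v z = T} = t := by
  obtain ⟨w, hw, rfl⟩ := exists_of_mem_traces hT
  have h := (hv.2 w hw.1.symm hw.2).1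
  rw [hv.perp_perp_pair hG hw, Set.ncard_coe_finset, card_insert_of_notMem (by simp)] at h
  omega

lemma not_adj_of_commonNbrs_eq (hv : IsRegularPoint G t v) (hG : HasGQParams G s t)
    (hy : Gᶜ.Adj v y) (hz : Gᶜ.Adj v z) (h : commonNbrs G v y = commonNbrs G v z) :
    ¬ G.Adj y z := by
  have hspan : ∀ x, Gᶜ.Adj v x → commonNbrs G v x = commonNbrs G v z →
      x ∈ perp G (perp G {v, z}) := fun x hx hxz ↦ by
    rw [hv.perp_perp_pair hG hz, mem_coe]
    exact mem_insert_of_mem (mem_filter.2 ⟨by simpa only [SimpleGraph.mem_neighborFinset], hxz⟩)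
  exact (hv.2 z hz.1.symm hz.2).2 y (hspan y hy h) z (hspan z hz rfl)

lemma not_adj_of_mem_commonNbrs (hv : IsRegularPoint G t v) (hG : HasGQParams G s t)
    (hw : Gᶜ.Adj v w) (hx : x ∈ commonNbrs G v w) (hy : y ∈ commonNbrs G v w) :
    ¬ G.Adj x y := by
  intro hxy
  rw [mem_commonNbrs] at hx hy
  have hsub : insert w (insert v ((commonNbrs G v x).erase y)) ⊆ commonNbrs G x y := by
    intro z
    simp only [mem_insert, mem_erase, mem_commonNbrs]
    rintro (rfl | rfl | ⟨hzy, hvz, hxz⟩)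
    · exact ⟨hx.2.symm, hy.2.symm⟩
    · exact ⟨hx.1.symm, hy.1.symm⟩
    · exact ⟨hxz, hv.adj_trans hy.1 hx.1 hvz hxy.symm hxz hzy.symm⟩
  have hcard := card_le_card hsub
  have hmem : y ∈ commonNbrs G v x := mem_commonNbrs.2 ⟨hy.1, hxy⟩
  rw [card_insert_of_notMem (by simp [hw.1.symm, hw.2]), card_insert_of_notMem (by simp),
    card_erase_add_one hmem, hG.card_commonNbrs_of_adj hx.1, hG.card_commonNbrs_of_adj hxy] at hcard
  omega

lemma card_compl_neighborFinset_inter_commonNbrs_of_compl_adj (hv : IsRegularPoint G t v)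
    (hG : HasGQParams G s t) (hx : G.Adj v x) (hy : G.Adj v y) (hxy : Gᶜ.Adj x y) :
    #(Gᶜ.neighborFinset v ∩ commonNbrs G x y) = t := by
  have h := card_eq_add_card_inter_neighborFinset G v (commonNbrs G x y)
  have hnbr : G.neighborFinset v ∩ commonNbrs G x y = ∅ := by
    refine eq_empty_of_forall_notMem fun z hz ↦ ?_
    simp only [mem_inter, SimpleGraph.mem_neighborFinset, mem_commonNbrs] at hz
    exact hxy.2 (hv.adj_trans hx hz.1 hy hz.2.1 hz.2.2.symm hxy.1)
  rw [hG.card_commonNbrs_of_compl_adj hxy, if_pos (by simp [hx.symm, hy.symm]), hnbr,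
    card_empty] at h
  omega

lemma card_inter_commonNbrs_le_one (hv : IsRegularPoint G t v) (hG : HasGQParams G s t)
    (hy : Gᶜ.Adj v y) (hz : Gᶜ.Adj v z) (hne : commonNbrs G v z ≠ commonNbrs G v y) :
    #(commonNbrs G v y ∩ commonNbrs G v z) ≤ 1 := by
  rw [card_le_one]
  by_contra! ⟨x, hx, x', hx', hxx'⟩
  rw [mem_inter] at hx hx'
  obtain ⟨hvx, hzx⟩ := mem_commonNbrs.1 hx.2
  obtain ⟨hvx', hzx'⟩ := mem_commonNbrs.1 hx'.2
  have hadj : Gᶜ.Adj x x' := ⟨hxx', hv.not_adj_of_mem_commonNbrs hG hy hx.1 hx'.1⟩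
  -- The fibre of `y` exhausts the common neighbours of `x` and `x'` at distance two from `v`.
  have hfibre : {w ∈ Gᶜ.neighborFinset v | commonNbrs G v w = commonNbrs G v y} =
      Gᶜ.neighborFinset v ∩ commonNbrs G x x' := by
    refine eq_of_subset_of_card_le (fun w hw ↦ ?_) ?_
    · obtain ⟨hwfar, hw⟩ := mem_filter.1 hw
      rw [← hw] at hx hx'
      exact mem_inter.2 ⟨hwfar, mem_commonNbrs.2
        ⟨(mem_commonNbrs.1 hx.1).2.symm, (mem_commonNbrs.1 hx'.1).2.symm⟩⟩
    · rw [hv.card_fibre hG (commonNbrs_mem_traces hy),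
        hv.card_compl_neighborFinset_inter_commonNbrs_of_compl_adj hG hvx hvx' hadj]
  have hzmem : z ∈ Gᶜ.neighborFinset v ∩ commonNbrs G x x' := by
    simpa only [mem_inter, SimpleGraph.mem_neighborFinset, mem_commonNbrs] using
      ⟨hz, hzx.symm, hzx'.symm⟩
  rw [← hfibre, mem_filter] at hzmem
  exact hne hzmem.2

lemma card_clique_inter_commonNbrs (hv : IsRegularPoint G t v) (hG : HasGQParams G s t)
    (hu : G.Adj v u) (hw : Gᶜ.Adj v w) :
    #(insert u (commonNbrs G v u) ∩ commonNbrs G v w) = 1 := by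
  have hclique : ∀ x ∈ insert u (commonNbrs G v u), ∀ y ∈ insert u (commonNbrs G v u),
      x ≠ y → G.Adj x y := by
    simp only [mem_insert, mem_commonNbrs]
    rintro x (rfl | hx) y (rfl | hy) hxy
    · exact absurd rfl hxy
    · exact hy.2
    · exact hx.2.symm
    · exact hv.adj_trans hx.1 hu hy.1 hx.2.symm hy.2 hxy
  refine eq_one_of_le_one_of_sum_eq_card (s := Gᶜ.neighborFinset v)
    (f := fun w ↦ #(insert u (commonNbrs G v u) ∩ commonNbrs G v w)) (fun z hz ↦ ?_) ?_
    (by simpa using hw)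
  · refine card_le_one.2 fun x hx y hy ↦ ?_
    rw [mem_inter] at hx hy
    by_contra hxy
    exact hv.not_adj_of_mem_commonNbrs hG (by simpa using hz) hx.2 hy.2 (hclique x hx.1 y hy.1 hxy)
  · have hdeg : ∀ x ∈ insert u (commonNbrs G v u),
        #{z ∈ Gᶜ.neighborFinset v | x ∈ commonNbrs G v z} = s * t := by
      intro x hx
      have hvx : G.Adj v x := by
        rcases mem_insert.1 hx with rfl | hx
        exacts [hu, (mem_commonNbrs.1 hx).1]
      rw [filter_mem_commonNbrs hvx, hG.card_compl_neighborFinset_inter_of_adj hvx]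
    rw [sum_card_inter_eq_sum_card_filter_mem, sum_congr rfl hdeg, sum_const,
      card_insert_of_notMem (by simp), hG.card_commonNbrs_of_adj hu,
      Nat.sub_add_cancel (hG.pos_of_adj hu), hG.card_compl_neighborFinset, smul_eq_mul]
    ring

lemma card_commonNbrs_inter_add_ite (hv : IsRegularPoint G t v) (hG : HasGQParams G s t)
    (hu : G.Adj v u) {T : Finset V} (hT : T ∈ traces G v) :
    #(commonNbrs G v u ∩ T) + (if u ∈ T then 1 else 0) = 1 := by
  obtain ⟨w, hw, rfl⟩ := exists_of_mem_traces hT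
  have h := hv.card_clique_inter_commonNbrs hG hu hw
  split_ifs with huw
  · rwa [insert_inter_of_mem huw, card_insert_of_notMem (by simp)] at h
  · rwa [insert_inter_of_notMem huw] at h

lemma card_filter_trace (hv : IsRegularPoint G t v) (hG : HasGQParams G s t)
    (p : Finset V → Prop) [DecidablePred p] :
    #{z ∈ Gᶜ.neighborFinset v | p (commonNbrs G v z)} = t * #{T ∈ traces G v | p T} := by
  rw [card_filter_trace_eq_sum Subset.rfl, sum_const_nat (m := t), mul_comm]
  exact fun T hT ↦ hv.card_fibre hG (mem_filter.1 hT).1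

lemma card_filter_mem_traces (hv : IsRegularPoint G t v) (hG : HasGQParams G s t) (ht : 0 < t)
    (hu : G.Adj v u) : #{T ∈ traces G v | u ∈ T} = s := by
  have h := hv.card_filter_trace hG (u ∈ ·)
  rw [filter_mem_commonNbrs hu, hG.card_compl_neighborFinset_inter_of_adj hu, mul_comm] at h
  exact (Nat.eq_of_mul_eq_mul_left ht h).symm

lemma pos_of_compl_adj (hv : IsRegularPoint G t v) (hG : HasGQParams G s t) (hw : Gᶜ.Adj v w) :
    0 < t := by
  rw [← hv.card_fibre hG (commonNbrs_mem_traces hw)]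
  exact card_pos.2 ⟨w, by simpa using hw⟩

lemma card_inter_commonNbrs (hv : IsRegularPoint G q v) (hG : HasGQParams G q q)
    (hy : Gᶜ.Adj v y) (hz : Gᶜ.Adj v z) :
    #(commonNbrs G v y ∩ commonNbrs G v z) =
      1 + if commonNbrs G v z = commonNbrs G v y then q else 0 := by
  set T := commonNbrs G v y
  have hTcard : #T = q + 1 := hG.card_commonNbrs_of_compl_adj hy
  split_ifs with h
  · rw [h, inter_self, hTcard, add_comm]
  -- The other traces meet `T` in at most one point each, and in one point on average.
  refine eq_one_of_le_one_of_sum_eq_card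
    (s := {z ∈ Gᶜ.neighborFinset v | commonNbrs G v z ≠ T}) (f := fun z ↦ #(T ∩ commonNbrs G v z))
    (fun z hz ↦ ?_) ?_ (by simpa [h] using hz)
  · rw [mem_filter, SimpleGraph.mem_neighborFinset] at hz
    exact hv.card_inter_commonNbrs_le_one hG hy hz.1 hz.2
  have hfibre := hv.card_fibre hG (commonNbrs_mem_traces hy)
  have hcard := card_filter_add_card_filter_not (s := Gᶜ.neighborFinset v)
    (fun z ↦ commonNbrs G v z = T)
  rw [hfibre, hG.card_compl_neighborFinset] at hcard
  have htotal : ∑ z ∈ Gᶜ.neighborFinset v, #(T ∩ commonNbrs G v z) = (q + 1) * (q * q) := by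
    rw [sum_card_inter_eq_sum_card_filter_mem, sum_const_nat (m := q * q), hTcard]
    intro u hu
    have hvu := (mem_commonNbrs.1 hu).1
    rw [filter_mem_commonNbrs hvu, hG.card_compl_neighborFinset_inter_of_adj hvu]
  rw [← sum_filter_add_sum_filter_not _ (fun z ↦ commonNbrs G v z = T),
    sum_const_nat (m := q + 1) (fun z hz ↦ by rw [(mem_filter.1 hz).2, inter_self, hTcard]),
    hfibre] at htotal
  simp only [ne_eq]
  linarith

lemma card_compl_neighborFinset_inter_commonNbrs_add_ite (hv : IsRegularPoint G q v)
    (hG : HasGQParams G q q) (hu : G.Adj v u) (hw : Gᶜ.Adj v w) :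
    #(Gᶜ.neighborFinset v ∩ commonNbrs G u w) + (if u ∈ commonNbrs G v w then 1 else 0) = q := by
  have hsplit := card_eq_add_card_inter_neighborFinset G v (commonNbrs G u w)
  have hnbr := hv.card_commonNbrs_inter_add_ite hG hu (commonNbrs_mem_traces hw)
  have hq := hG.pos_of_adj hu
  have hwv : ¬ G.Adj w v := fun h ↦ hw.2 h.symm
  rw [neighborFinset_inter_commonNbrs, if_neg (by simp [hwv])] at hsplit
  by_cases huw : G.Adj u w
  · rw [hG.card_commonNbrs_of_adj huw] at hsplit
    rw [if_pos (mem_commonNbrs.2 ⟨hu, huw.symm⟩)] at hnbr ⊢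
    omega
  · have hne : u ≠ w := fun h ↦ hw.2 (h ▸ hu)
    have hmem : u ∉ commonNbrs G v w := fun h ↦ huw (mem_commonNbrs.1 h).2.symm
    rw [hG.card_commonNbrs_of_compl_adj ⟨hne, huw⟩] at hsplit
    rw [if_neg hmem] at hnbr ⊢
    omega

lemma sum_card_inter_commonNbrs_add_one (hv : IsRegularPoint G q v) (hG : HasGQParams G q q)
    (hw : Gᶜ.Adj v w) (hy : Gᶜ.Adj v y) (hne : commonNbrs G v w ≠ commonNbrs G v y) :
    ∑ z ∈ Gᶜ.neighborFinset v ∩ G.neighborFinset w, #(commonNbrs G v y ∩ commonNbrs G v z) + 1 =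
      (q + 1) * q := by
  have hmeet := hv.card_inter_commonNbrs hG hy hw
  rw [if_neg hne, ← filter_mem_eq_inter, card_filter, add_zero] at hmeet
  have hterm : ∀ u ∈ commonNbrs G v y,
      #{z ∈ Gᶜ.neighborFinset v ∩ G.neighborFinset w | u ∈ commonNbrs G v z} +
        (if u ∈ commonNbrs G v w then 1 else 0) = q := by
    intro u hu
    have hvu := (mem_commonNbrs.1 hu).1
    rw [filter_mem_commonNbrs hvu, inter_assoc, inter_comm (G.neighborFinset w)]
    exact hv.card_compl_neighborFinset_inter_commonNbrs_add_ite hG hvu hw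
  have hsum := sum_congr rfl hterm
  rw [sum_add_distrib, hmeet, sum_const, hG.card_commonNbrs_of_compl_adj hy, smul_eq_mul] at hsum
  rwa [sum_card_inter_eq_sum_card_filter_mem]

lemma card_neighbors_in_fibre (hv : IsRegularPoint G q v) (hG : HasGQParams G q q)
    (hw : Gᶜ.Adj v w) {T : Finset V} (hT : T ∈ traces G v) :
    #{z ∈ Gᶜ.neighborFinset v ∩ G.neighborFinset w | commonNbrs G v z = T} =
      if T = commonNbrs G v w then 0 else 1 := by
  obtain ⟨y, hy, rfl⟩ := exists_of_mem_traces hT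
  split_ifs with h
  · refine card_eq_zero.2 (filter_eq_empty_iff.2 fun z hz hzy ↦ ?_)
    simp only [mem_inter, SimpleGraph.mem_neighborFinset] at hz
    exact hv.not_adj_of_commonNbrs_eq hG hw hz.1 (hzy.trans h).symm hz.2
  have hsum := hv.sum_card_inter_commonNbrs_add_one hG hw hy (Ne.symm h)
  have hcard := hG.card_compl_neighborFinset_inter_of_compl_adj hw
  rw [sum_congr rfl fun z hz ↦ hv.card_inter_commonNbrs hG hy (by simpa using (mem_inter.1 hz).1),
    sum_add_distrib, ← card_eq_sum_ones, ← sum_filter, sum_const, smul_eq_mul] at hsum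
  refine Nat.eq_of_mul_eq_mul_right (hv.pos_of_compl_adj hG hw) ?_
  linarith

end IsRegularPoint

/-- `H` arises from `G` by replacing, for each vertex `w` at distance two from `v`, the trace `T` of
`w` by `σ T` as the set of neighbours of `w` in the neighbourhood of `v`. -/
structure IsTraceSwitch {V : Type*} [Fintype V] (G H : SimpleGraph V) (v : V)
    (σ : Finset V → Finset V) : Prop where
  adj_iff : ∀ x y, ¬ (G.Adj v x ∧ Gᶜ.Adj v y) → ¬ (G.Adj v y ∧ Gᶜ.Adj v x) →
    (H.Adj x y ↔ G.Adj x y)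
  adj_iff_mem : ∀ u w, G.Adj v u → Gᶜ.Adj v w → (H.Adj u w ↔ u ∈ σ (commonNbrs G v w))

namespace IsTraceSwitch

variable {V : Type*} [Fintype V] {G H : SimpleGraph V} {s t q : ℕ} {u v w x y : V}

section Function

variable {σ : Finset V → Finset V}

lemma adj_left_iff (h : IsTraceSwitch G H v σ) : H.Adj v x ↔ G.Adj v x :=
  h.adj_iff v x (by simp) (by simp)

lemma adj_iff_of_adj (h : IsTraceSwitch G H v σ) (hx : G.Adj v x) (hy : G.Adj v y) :
    H.Adj x y ↔ G.Adj x y :=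
  h.adj_iff x y (by simp [hy]) (by simp [hx])

lemma adj_iff_of_compl_adj (h : IsTraceSwitch G H v σ) (hx : Gᶜ.Adj v x) (hy : Gᶜ.Adj v y) :
    H.Adj x y ↔ G.Adj x y :=
  h.adj_iff x y (fun h ↦ hx.2 h.1) (fun h ↦ hy.2 h.1)

lemma neighborFinset_inter (h : IsTraceSwitch G H v σ)
    (hσ : σ (commonNbrs G v w) ∈ traces G v) (hw : Gᶜ.Adj v w) :
    G.neighborFinset v ∩ H.neighborFinset w = σ (commonNbrs G v w) := by
  ext u
  rw [mem_inter, SimpleGraph.mem_neighborFinset, SimpleGraph.mem_neighborFinset, H.adj_comm]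
  refine ⟨fun hu ↦ (h.adj_iff_mem u w hu.1 hw).1 hu.2, fun hu ↦ ?_⟩
  have hvu : G.Adj v u := by simpa using subset_of_mem_traces hσ hu
  exact ⟨hvu, (h.adj_iff_mem u w hvu hw).2 hu⟩

end Function

variable {σ : Equiv.Perm (Finset V)}

lemma commonNbrs_left (h : IsTraceSwitch G H v σ) (hx : G.Adj v x) :
    commonNbrs H v x = commonNbrs G v x := by
  ext z
  rw [mem_commonNbrs, mem_commonNbrs, h.adj_left_iff]
  exact and_congr_right fun hz ↦ h.adj_iff_of_adj hx hz

lemma card_commonNbrs_of_adj_of_adj (h : IsTraceSwitch G H v σ) (hG : HasGQParams G s t)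
    (hv : IsRegularPoint G t v) (hσ : ∀ T, σ T ∈ traces G v ↔ T ∈ traces G v)
    (hx : G.Adj v x) (hy : G.Adj v y) : #(commonNbrs H x y) = #(commonNbrs G x y) := by
  have hnbr : G.neighborFinset v ∩ commonNbrs H x y = G.neighborFinset v ∩ commonNbrs G x y := by
    ext z
    simp only [mem_inter, SimpleGraph.mem_neighborFinset, mem_commonNbrs]
    exact and_congr_right fun hz ↦
      and_congr (h.adj_iff_of_adj hx hz) (h.adj_iff_of_adj hy hz)
  have hfarG : Gᶜ.neighborFinset v ∩ commonNbrs G x y =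
      {z ∈ Gᶜ.neighborFinset v | x ∈ commonNbrs G v z ∧ y ∈ commonNbrs G v z} := by
    rw [← filter_filter, filter_mem_commonNbrs hx, filter_mem_commonNbrs hy, inter_assoc]
    rfl
  have hfarH : Gᶜ.neighborFinset v ∩ commonNbrs H x y =
      {z ∈ Gᶜ.neighborFinset v | x ∈ σ (commonNbrs G v z) ∧ y ∈ σ (commonNbrs G v z)} := by
    rw [← filter_mem_eq_inter]
    refine filter_congr fun z hz ↦ ?_
    rw [SimpleGraph.mem_neighborFinset] at hz
    rw [mem_commonNbrs, h.adj_iff_mem x z hx hz, h.adj_iff_mem y z hy hz]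
  rw [card_eq_add_card_inter_neighborFinset G v (commonNbrs H x y),
    card_eq_add_card_inter_neighborFinset G v (commonNbrs G x y), hnbr, hfarG, hfarH,
    hv.card_filter_trace hG (fun T ↦ x ∈ T ∧ y ∈ T),
    hv.card_filter_trace hG (fun T ↦ x ∈ σ T ∧ y ∈ σ T),
    card_filter_perm hσ (fun T ↦ x ∈ T ∧ y ∈ T)]
  simp [H.adj_comm _ v, G.adj_comm _ v, h.adj_left_iff]

lemma card_perm_inter_perm (hG : HasGQParams G q q) (hv : IsRegularPoint G q v)
    (hσ : ∀ T, σ T ∈ traces G v ↔ T ∈ traces G v) {S T : Finset V}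
    (hS : S ∈ traces G v) (hT : T ∈ traces G v) : #(σ S ∩ σ T) = #(S ∩ T) := by
  have hcard : ∀ A ∈ traces G v, ∀ B ∈ traces G v, #(A ∩ B) = 1 + if B = A then q else 0 := by
    intro A hA B hB
    obtain ⟨a, ha, rfl⟩ := exists_of_mem_traces hA
    obtain ⟨b, hb, rfl⟩ := exists_of_mem_traces hB
    exact hv.card_inter_commonNbrs hG ha hb
  rw [hcard _ hS _ hT, hcard _ ((hσ S).2 hS) _ ((hσ T).2 hT)]
  simp only [σ.injective.eq_iff]

lemma card_commonNbrs_of_compl_adj_of_compl_adj (h : IsTraceSwitch G H v σ)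
    (hG : HasGQParams G q q) (hv : IsRegularPoint G q v)
    (hσ : ∀ T, σ T ∈ traces G v ↔ T ∈ traces G v) (hx : Gᶜ.Adj v x) (hy : Gᶜ.Adj v y) :
    #(commonNbrs H x y) = #(commonNbrs G x y) := by
  have hTx := commonNbrs_mem_traces hx
  have hTy := commonNbrs_mem_traces hy
  have hnbr : #(G.neighborFinset v ∩ commonNbrs H x y) =
      #(G.neighborFinset v ∩ commonNbrs G x y) := by
    rw [commonNbrs, inter_inter_distrib_left, h.neighborFinset_inter ((hσ _).2 hTx) hx,
      h.neighborFinset_inter ((hσ _).2 hTy) hy, card_perm_inter_perm hG hv hσ hTx hTy,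
      neighborFinset_inter_commonNbrs]
  have hfar : Gᶜ.neighborFinset v ∩ commonNbrs H x y =
      Gᶜ.neighborFinset v ∩ commonNbrs G x y := by
    ext z
    simp only [mem_inter, SimpleGraph.mem_neighborFinset, mem_commonNbrs]
    exact and_congr_right fun hz ↦
      and_congr (h.adj_iff_of_compl_adj hx hz) (h.adj_iff_of_compl_adj hy hz)
  rw [card_eq_add_card_inter_neighborFinset G v (commonNbrs H x y),
    card_eq_add_card_inter_neighborFinset G v (commonNbrs G x y), hnbr, hfar]
  simp [H.adj_comm _ v, G.adj_comm _ v, h.adj_left_iff]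

lemma card_commonNbrs_left_of_compl_adj (h : IsTraceSwitch G H v σ)
    (hG : HasGQParams G s t) (hσ : ∀ T, σ T ∈ traces G v ↔ T ∈ traces G v) (hw : Gᶜ.Adj v w) :
    #(commonNbrs H v w) = #(commonNbrs G v w) := by
  have hσw := (hσ _).2 (commonNbrs_mem_traces hw)
  obtain ⟨z, hz, hzw⟩ := exists_of_mem_traces hσw
  have hleft : H.neighborFinset v = G.neighborFinset v := by
    ext x
    simpa only [SimpleGraph.mem_neighborFinset] using h.adj_left_iff
  rw [commonNbrs, hleft, h.neighborFinset_inter hσw hw, ← hzw,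
    hG.card_commonNbrs_of_compl_adj hz, hG.card_commonNbrs_of_compl_adj hw]

lemma card_filter_perm_neighbors_add_ite (hG : HasGQParams G q q) (hv : IsRegularPoint G q v)
    (hσ : ∀ T, σ T ∈ traces G v ↔ T ∈ traces G v) (hu : G.Adj v u) (hw : Gᶜ.Adj v w) :
    #{z ∈ Gᶜ.neighborFinset v ∩ G.neighborFinset w | u ∈ σ (commonNbrs G v z)} +
      (if u ∈ σ (commonNbrs G v w) then 1 else 0) = q := by
  have hTw := commonNbrs_mem_traces hw
  calc
    _ = #({T ∈ traces G v | u ∈ σ T}.erase (commonNbrs G v w)) +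
        (if u ∈ σ (commonNbrs G v w) then 1 else 0) := by
      rw [card_filter_trace_eq_sum inter_subset_left (fun T ↦ u ∈ σ T),
        sum_congr rfl fun T hT ↦ hv.card_neighbors_in_fibre hG hw (mem_filter.1 hT).1,
        ← filter_ne', card_filter]
      simp only [ne_eq, ite_not]
    _ = #{T ∈ traces G v | u ∈ σ T} := by
      split_ifs with huw
      · exact card_erase_add_one (mem_filter.2 ⟨hTw, huw⟩)
      · rw [erase_eq_of_notMem (by simp [huw]), add_zero]
    _ = #{T ∈ traces G v | u ∈ T} := card_filter_perm hσ (u ∈ ·)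
    _ = q := hv.card_filter_mem_traces hG (hG.pos_of_adj hu) hu

lemma card_commonNbrs_of_adj_of_compl_adj (h : IsTraceSwitch G H v σ) (hG : HasGQParams G q q)
    (hv : IsRegularPoint G q v) (hσ : ∀ T, σ T ∈ traces G v ↔ T ∈ traces G v)
    (hu : G.Adj v u) (hw : Gᶜ.Adj v w) :
    #(commonNbrs H u w) = if H.Adj u w then q - 1 else q + 1 := by
  have hσw := (hσ _).2 (commonNbrs_mem_traces hw)
  have hvmem : v ∉ commonNbrs H u w := fun hmem ↦
    hw.2 (h.adj_left_iff.1 (mem_commonNbrs.1 hmem).2.symm)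
  have hnbr : G.neighborFinset v ∩ commonNbrs H u w =
      commonNbrs G v u ∩ σ (commonNbrs G v w) := by
    rw [← h.neighborFinset_inter hσw hw]
    ext z
    simp only [mem_inter, SimpleGraph.mem_neighborFinset, mem_commonNbrs]
    have := fun hz ↦ h.adj_iff_of_adj (y := z) hu hz
    tauto
  have hfar : Gᶜ.neighborFinset v ∩ commonNbrs H u w =
      {z ∈ Gᶜ.neighborFinset v ∩ G.neighborFinset w | u ∈ σ (commonNbrs G v z)} := by
    ext z
    simp only [mem_inter, mem_filter, SimpleGraph.mem_neighborFinset, mem_commonNbrs]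
    rw [and_assoc, and_comm (a := H.Adj u z)]
    exact and_congr_right fun hz ↦
      and_congr (h.adj_iff_of_compl_adj hw hz) (h.adj_iff_mem u z hu hz)
  have hcard := card_eq_add_card_inter_neighborFinset G v (commonNbrs H u w)
  rw [if_neg hvmem, hnbr, hfar] at hcard
  have hcardN := hv.card_commonNbrs_inter_add_ite hG hu hσw
  have hcardO := card_filter_perm_neighbors_add_ite hG hv hσ hu hw
  rw [h.adj_iff_mem u w hu hw]
  split_ifs at hcardN hcardO ⊢ <;> omega

lemma card_commonNbrs_eq (h : IsTraceSwitch G H v σ) (hG : HasGQParams G q q)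
    (hv : IsRegularPoint G q v) (hσ : ∀ T, σ T ∈ traces G v ↔ T ∈ traces G v)
    (hxy : ¬ (G.Adj v x ∧ Gᶜ.Adj v y)) (hyx : ¬ (G.Adj v y ∧ Gᶜ.Adj v x)) :
    #(commonNbrs H x y) = #(commonNbrs G x y) := by
  have hleft : ∀ z, #(commonNbrs H v z) = #(commonNbrs G v z) := by
    intro z
    by_cases hz : G.Adj v z
    · rw [h.commonNbrs_left hz]
    rcases eq_or_ne v z with rfl | hvz
    · congr 1
      ext z
      simp [h.adj_left_iff]
    · exact h.card_commonNbrs_left_of_compl_adj hG hσ ⟨hvz, hz⟩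
  rcases eq_or_ne v x with rfl | hvx
  · exact hleft y
  rcases eq_or_ne v y with rfl | hvy
  · rw [commonNbrs_comm H, commonNbrs_comm G, hleft]
  by_cases hx : G.Adj v x
  · have hy : G.Adj v y := by_contra fun hy ↦ hxy ⟨hx, hvy, hy⟩
    exact h.card_commonNbrs_of_adj_of_adj hG hv hσ hx hy
  · have hy : ¬ G.Adj v y := fun hy ↦ hyx ⟨hy, hvx, hx⟩
    exact h.card_commonNbrs_of_compl_adj_of_compl_adj hG hv hσ ⟨hvx, hx⟩ ⟨hvy, hy⟩

end IsTraceSwitch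

theorem switched_graph_isSRGWith_general {V : Type*} [Fintype V] {q : ℕ} {G H : SimpleGraph V}
    (hG : G.IsSRGWith (q ^ 3 + q ^ 2 + q + 1) (q ^ 2 + q) (q - 1) (q + 1))
    {v : V} (hreg : IsRegularPoint G q v) {σ : Equiv.Perm (Finset V)}
    (hσ : ∀ T, σ T ∈ traces G v ↔ T ∈ traces G v) (hH : IsTraceSwitch G H v σ) :
    H.IsSRGWith (q ^ 3 + q ^ 2 + q + 1) (q ^ 2 + q) (q - 1) (q + 1) := by
  have hGQ := HasGQParams.self_iff.2 hG
  rw [isSRGWith_iff_card_commonNbrs] at hG ⊢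
  refine ⟨hG.1, fun x y ↦ ?_⟩
  by_cases hxy : G.Adj v x ∧ Gᶜ.Adj v y
  · have hne : x ≠ y := fun h ↦ hxy.2.2 (h ▸ hxy.1)
    rw [if_neg hne, hH.card_commonNbrs_of_adj_of_compl_adj hGQ hreg hσ hxy.1 hxy.2]
  by_cases hyx : G.Adj v y ∧ Gᶜ.Adj v x
  · have hne : x ≠ y := fun h ↦ hyx.2.2 (h ▸ hyx.1)
    rw [if_neg hne, commonNbrs_comm, H.adj_comm,
      hH.card_commonNbrs_of_adj_of_compl_adj hGQ hreg hσ hyx.1 hyx.2]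
  rw [hH.card_commonNbrs_eq hGQ hreg hσ hxy hyx, hH.adj_iff x y hxy hyx]
  exact hG.2 x y

section Transposition

variable {V : Type*} [Fintype V] {G G' : SimpleGraph V} {v a b : V}

lemma swap_mem_traces_iff (ha : Gᶜ.Adj v a) (hb : Gᶜ.Adj v b) (T : Finset V) :
    Equiv.swap (commonNbrs G v a) (commonNbrs G v b) T ∈ traces G v ↔ T ∈ traces G v := by
  rw [Equiv.swap_apply_def]
  split_ifs with hTa hTb
  · simp [hTa, commonNbrs_mem_traces ha, commonNbrs_mem_traces hb]
  · simp [hTb, commonNbrs_mem_traces ha, commonNbrs_mem_traces hb]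
  · rfl

lemma isTraceSwitch_swap
    (hGa : ∀ u ∈ G.neighborSet v, ∀ w : V, w ≠ v → ¬ G.Adj v w →
      G.neighborSet v ∩ G.neighborSet w = G.neighborSet v ∩ G.neighborSet a →
      (G'.Adj u w ↔ u ∈ G.neighborSet v ∩ G.neighborSet b))
    (hGb : ∀ u ∈ G.neighborSet v, ∀ w : V, w ≠ v → ¬ G.Adj v w →
      G.neighborSet v ∩ G.neighborSet w = G.neighborSet v ∩ G.neighborSet b →
      (G'.Adj u w ↔ u ∈ G.neighborSet v ∩ G.neighborSet a))
    (hGrest : ∀ x y : V, ¬ SwitchedPair G v a b x y → ¬ SwitchedPair G v a b y x →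
      (G'.Adj x y ↔ G.Adj x y)) :
    IsTraceSwitch G G' v (Equiv.swap (commonNbrs G v a) (commonNbrs G v b)) where
  adj_iff x y hxy hyx := hGrest x y (fun h ↦ hxy ⟨h.1, h.2.1.symm, h.2.2.1⟩)
    (fun h ↦ hyx ⟨h.1, h.2.1.symm, h.2.2.1⟩)
  adj_iff_mem u w hu hw := by
    rw [Equiv.swap_apply_def]
    split_ifs with hwa hwb
    · rw [hGa u hu w hw.1.symm hw.2 (commonNbrs_eq_iff.1 hwa), ← coe_commonNbrs, mem_coe]
    · rw [hGb u hu w hw.1.symm hw.2 (commonNbrs_eq_iff.1 hwb), ← coe_commonNbrs, mem_coe]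
    · rw [hGrest u w, mem_commonNbrs, G.adj_comm w, and_iff_right hu]
      · rintro ⟨-, -, -, h | h⟩
        exacts [hwa (commonNbrs_eq_iff.2 h), hwb (commonNbrs_eq_iff.2 h)]
      · exact fun h ↦ hw.2 h.1

end Transposition

/-- switching the edges towards `N(v)` of the two fibres (of a regular point
`v`) containing `a` and `b` produces again a strongly regular graph with parameters
`(q³+q²+q+1, q²+q, q−1, q+1)`. The graph `Γ'` (= `G'`) is described by: for `u ∈ N(v)` and
`w` in the fibre of `a`, `u ~ w` in `Γ'` iff `u ∈ N(v) ∩ N(b)`; for `u ∈ N(v)` and `w` in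
the fibre of `b`, `u ~ w` in `Γ'` iff `u ∈ N(v) ∩ N(a)`; all other adjacencies are as in
`Γ`. -/
theorem switched_graph_isSRGWith {V : Type} [Fintype V]
    (q : ℕ) (hq : 2 ≤ q) (G : SimpleGraph V)
    (hG : G.IsSRGWith (q ^ 3 + q ^ 2 + q + 1) (q ^ 2 + q) (q - 1) (q + 1))
    (v : V) (hreg : IsRegularPoint G q v)
    (a b : V) (hav : a ≠ v) (hbv : b ≠ v) (haa : ¬ G.Adj v a) (hba : ¬ G.Adj v b)
    (hab : G.neighborSet v ∩ G.neighborSet a ≠ G.neighborSet v ∩ G.neighborSet b)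
    (G' : SimpleGraph V)
    (hGa : ∀ u ∈ G.neighborSet v, ∀ w : V, w ≠ v → ¬ G.Adj v w →
      G.neighborSet v ∩ G.neighborSet w = G.neighborSet v ∩ G.neighborSet a →
      (G'.Adj u w ↔ u ∈ G.neighborSet v ∩ G.neighborSet b))
    (hGb : ∀ u ∈ G.neighborSet v, ∀ w : V, w ≠ v → ¬ G.Adj v w →
      G.neighborSet v ∩ G.neighborSet w = G.neighborSet v ∩ G.neighborSet b →
      (G'.Adj u w ↔ u ∈ G.neighborSet v ∩ G.neighborSet a))
    (hGrest : ∀ x y : V, ¬ SwitchedPair G v a b x y → ¬ SwitchedPair G v a b y x →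
      (G'.Adj x y ↔ G.Adj x y)) :
    G'.IsSRGWith (q ^ 3 + q ^ 2 + q + 1) (q ^ 2 + q) (q - 1) (q + 1) := by
  exact switched_graph_isSRGWith_general hG hreg
    (swap_mem_traces_iff ⟨hav.symm, haa⟩ ⟨hbv.symm, hba⟩) (isTraceSwitch_swap hGa hGb hGrest)
end

section
/- Let F be a finite field with |F| = q ≥ 3. There exist graphs G₁, …, G_q, each on q³+q²+q+1 vertices, which are pairwise non-isomorphic, each strongly regular with parameters (q³+q²+q+1, q²+q, q−1, q+1) (hence each cospectral with the symplectic graph Sp(4,q)), and none of which is isomorphic to the collinearity graph of any generalized quadrangle of order (q,q) (in particular, none is isomorphic to Sp(4,q)). -/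
open scoped Classical LinearAlgebra.Projectivization

/-- A generalized quadrangle of order `(s, t)`. -/
structure GenQuadrangle (s t : ℕ) where
  P : Type
  L : Type
  fintypeP : Fintype P
  fintypeL : Fintype L
  Incid : P → L → Prop
  point_lines : ∀ p : P, {l : L | Incid p l}.ncard = t + 1
  line_points : ∀ l : L, {p : P | Incid p l}.ncard = s + 1
  two_points : ∀ p q : P, p ≠ q → ∀ l m : L,
    Incid p l → Incid q l → Incid p m → Incid q m → l = m
  gq_axiom : ∀ (x : P) (l : L), ¬ Incid x l →
    ∃! ym : P × L, Incid x ym.2 ∧ Incid ym.1 ym.2 ∧ Incid ym.1 l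

/-- The collinearity graph of a generalized quadrangle. -/
def GenQuadrangle.collinearityGraph {s t : ℕ} (Q : GenQuadrangle s t) : SimpleGraph Q.P :=
  SimpleGraph.fromRel (fun p q => ∃ l : Q.L, Q.Incid p l ∧ Q.Incid q l)

/-- The symplectic form on `F^4` given by `u₀w₁ − u₁w₀ + u₂w₃ − u₃w₂`. -/
def sympForm {F : Type} [Field F] (u w : Fin 4 → F) : F :=
  u 0 * w 1 - u 1 * w 0 + u 2 * w 3 - u 3 * w 2

/-- The symplectic graph `Sp(4,q)`. -/
def spGraph (F : Type) [Field F] : SimpleGraph (ℙ F (Fin 4 → F)) :=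
  SimpleGraph.fromRel (fun x y => sympForm x.rep y.rep = 0)

/-!
Fon-Der-Flaass' construction produces a graph on `q³ + q² + q + 1` vertices from an affine plane of
order `q` together with a permutation of the line labels for every pair of parallel classes. Two
lines from different classes always meet in exactly one point, so these permutations do not affect
the counts of common neighbours, and the graph is strongly regular for every choice of them.

The neighbourhood of a point in the collinearity graph of a generalized quadrangle is a disjoint
union of cliques. Over the field plane the twisted graphs violate this: a twist by a permutation `τ`
with `f` fixed points along one pair of classes leaves exactly `q + 1 + 2qf` vertices with a
cluster neighbourhood. Taking `f = 0, …, q - 2` gives `q - 1` pairwise non-isomorphic graphs. The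
last graph is twisted along two disjoint pairs of classes: it contains a `(q + 1)`-clique none of
whose vertices has a cluster neighbourhood, which does not happen for a single pair.
-/

section ClusterVertex

variable {V W : Type*} {G : SimpleGraph V} {H : SimpleGraph W}

/-- A vertex is a *cluster vertex* if its neighbourhood induces a cluster graph, that is, a disjoint
union of cliques; this is encoded as transitivity of adjacency among the neighbours. Having only
cluster vertices is the local property of collinearity graphs that the twisted graphs violate. -/
def IsClusterVertex (G : SimpleGraph V) (v : V) : Prop :=
  ∀ ⦃a b c : V⦄, G.Adj v a → G.Adj v b → G.Adj v c → G.Adj a b → G.Adj b c → a ≠ c → G.Adj a c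

lemma IsClusterVertex.of_iso {v : V} (φ : G ≃g H) (h : IsClusterVertex H (φ v)) :
    IsClusterVertex G v := by
  intro a b c ha hb hc hab hbc hac
  rw [← φ.map_adj_iff] at *
  exact h ha hb hc hab hbc (φ.injective.ne hac)

lemma isClusterVertex_iso_iff {v : V} (φ : G ≃g H) :
    IsClusterVertex H (φ v) ↔ IsClusterVertex G v :=
  ⟨.of_iso φ, fun h => .of_iso φ.symm (by simpa using h)⟩

lemma natCard_isClusterVertex_congr (φ : G ≃g H) :
    Nat.card {v // IsClusterVertex G v} = Nat.card {w // IsClusterVertex H w} :=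
  Nat.card_congr (φ.toEquiv.subtypeEquiv fun _ => (isClusterVertex_iso_iff φ).symm)

/-- `G` contains a clique, with vertices indexed by `I`, none of whose vertices is a cluster
vertex. A homomorphism from a complete graph is automatically injective. -/
def HasClusterFreeClique (I : Type*) (G : SimpleGraph V) : Prop :=
  ∃ K : (⊤ : SimpleGraph I) →g G, ∀ i, ¬ IsClusterVertex G (K i)

lemma HasClusterFreeClique.of_iso {I : Type*} (φ : G ≃g H) :
    HasClusterFreeClique I G → HasClusterFreeClique I H := by
  rintro ⟨K, hK⟩
  exact ⟨φ.toHom.comp K, fun i hi => hK i (.of_iso φ hi)⟩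

end ClusterVertex

namespace GenQuadrangle

variable {s t : ℕ} (Q : GenQuadrangle s t)

lemma collinearityGraph_adj {p r : Q.P} :
    Q.collinearityGraph.Adj p r ↔ p ≠ r ∧ ∃ l, Q.Incid p l ∧ Q.Incid r l := by
  simp only [collinearityGraph, SimpleGraph.fromRel_adj, and_comm (a := Q.Incid r _), or_self]

lemma incid_of_triangle {x y z : Q.P} {l : Q.L} (hxy : Q.collinearityGraph.Adj x y)
    (hxz : Q.collinearityGraph.Adj x z) (hyz : Q.collinearityGraph.Adj y z)
    (hx : Q.Incid x l) (hy : Q.Incid y l) : Q.Incid z l := by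
  by_contra hz
  obtain ⟨-, m, hxm, hzm⟩ := Q.collinearityGraph_adj.1 hxz
  obtain ⟨-, n, hyn, hzn⟩ := Q.collinearityGraph_adj.1 hyz
  have : (x, m) = (y, n) := (gq_axiom Q z l hz).unique ⟨hzm, hxm, hx⟩ ⟨hzn, hyn, hy⟩
  exact hxy.ne (congrArg Prod.fst this)

lemma isClusterVertex_collinearityGraph (v : Q.P) : IsClusterVertex Q.collinearityGraph v := by
  intro a b c hva hvb hvc hab hbc hac
  obtain ⟨-, l, hv, ha⟩ := Q.collinearityGraph_adj.1 hva
  have hb := Q.incid_of_triangle hva hvb hab hv ha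
  have hc := Q.incid_of_triangle hvb hvc hbc hv hb
  exact Q.collinearityGraph_adj.2 ⟨hac, l, ha, hc⟩

end GenQuadrangle

section Symplectic

lemma bilinForm_apply_eq_zero_of_lagrangian {K V : Type*} [Field K] [AddCommGroup V] [Module K V]
    [FiniteDimensional K V] {B : LinearMap.BilinForm K V} (hB : B.Nondegenerate)
    {W : Submodule K V} (hW : W ≤ B.orthogonal W)
    (hdim : Module.finrank K V = 2 * Module.finrank K W) {a c : V}
    (ha : a ∈ B.orthogonal W) (hc : c ∈ B.orthogonal W) : B a c = 0 := by
  have hWW : W = B.orthogonal W :=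
    Submodule.eq_of_le_of_finrank_eq hW (by rw [B.finrank_orthogonal hB]; lia)
  exact hc a (hWW ▸ ha)

lemma mem_orthogonal_span_pair {K V : Type*} [Field K] [AddCommGroup V] [Module K V]
    {B : LinearMap.BilinForm K V} {v b a : V} (hv : B v a = 0) (hb : B b a = 0) :
    a ∈ B.orthogonal (Submodule.span K {v, b}) := by
  intro w hw
  obtain ⟨r, s, rfl⟩ := Submodule.mem_span_pair.1 hw
  simp [hv, hb]

variable {F : Type} [Field F]

/-- The symplectic form as a bilinear form, to which Mathlib's theory of orthogonal complements
applies. -/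
def sympBilin (F : Type) [Field F] : LinearMap.BilinForm F (Fin 4 → F) :=
  LinearMap.mk₂ F sympForm
    (fun _ _ _ => by simp only [sympForm, Pi.add_apply]; ring)
    (fun _ _ _ => by simp only [sympForm, Pi.smul_apply, smul_eq_mul]; ring)
    (fun _ _ _ => by simp only [sympForm, Pi.add_apply]; ring)
    (fun _ _ _ => by simp only [sympForm, Pi.smul_apply, smul_eq_mul]; ring)

lemma sympBilin_apply (u w : Fin 4 → F) : sympBilin F u w = sympForm u w := rfl

lemma sympForm_self (u : Fin 4 → F) : sympForm u u = 0 := by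
  unfold sympForm; ring

lemma sympForm_neg_swap (u w : Fin 4 → F) : -sympForm u w = sympForm w u := by
  unfold sympForm; ring

lemma sympBilin_nondegenerate : (sympBilin F).Nondegenerate := by
  have hrefl : (sympBilin F).IsRefl := fun u w h => by
    rw [sympBilin_apply] at h ⊢
    rw [← sympForm_neg_swap, h, neg_zero]
  refine hrefl.nondegenerate_iff_separatingLeft.2 fun u hu => ?_
  have h (k : Fin 4) : sympForm u (Pi.single k 1) = 0 := hu _
  ext i
  fin_cases i
  · simpa [sympForm] using h 1
  · simpa [sympForm] using h 0
  · simpa [sympForm] using h 3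
  · simpa [sympForm] using h 2

lemma spGraph_adj {x y : ℙ F (Fin 4 → F)} :
    (spGraph F).Adj x y ↔ x ≠ y ∧ sympForm x.rep y.rep = 0 := by
  rw [spGraph, SimpleGraph.fromRel_adj, ← sympForm_neg_swap x.rep y.rep, neg_eq_zero, or_self]

/-- If `v, b` are adjacent then they span a Lagrangian plane, and any common neighbours `a, c` are
represented in it. -/
lemma isClusterVertex_spGraph (v : ℙ F (Fin 4 → F)) : IsClusterVertex (spGraph F) v := by
  intro a b c hva hvb hvc hab hbc hac
  rw [spGraph_adj] at *
  have hba : sympForm b.rep a.rep = 0 := by rw [← sympForm_neg_swap, hab.2, neg_zero]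
  have hbv : sympForm b.rep v.rep = 0 := by rw [← sympForm_neg_swap, hvb.2, neg_zero]
  have hind : LinearIndependent F ![v.rep, b.rep] := by
    have hrep : ![v.rep, b.rep] = Projectivization.rep ∘ ![v, b] := by
      ext i : 1
      fin_cases i <;> rfl
    rw [hrep, ← Projectivization.independent_iff]
    exact (Projectivization.independent_pair_iff_ne v b).2 hvb.1
  set W := Submodule.span F {v.rep, b.rep}
  have hW : W ≤ (sympBilin F).orthogonal W := Submodule.span_le.2 <| by
    rintro _ (rfl | rfl)
    · exact mem_orthogonal_span_pair (sympForm_self _) hbv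
    · exact mem_orthogonal_span_pair hvb.2 (sympForm_self _)
  have hdim : Module.finrank F W = 2 := by
    have h := finrank_span_eq_card hind
    rwa [Matrix.range_cons_cons_empty, Fintype.card_fin] at h
  refine ⟨hac, bilinForm_apply_eq_zero_of_lagrangian sympBilin_nondegenerate hW
    (by simp [hdim]) ?_ ?_⟩
  · exact mem_orthogonal_span_pair hva.2 hba
  · exact mem_orthogonal_span_pair hvc.2 hbc.2

end Symplectic

section IsSRGWith

variable {V W : Type*} [Fintype V] [Fintype W]

lemma isSRGWith_of_adj_iff {G : SimpleGraph V} [DecidableRel G.Adj] {R : V → V → Prop}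
    (hadj : ∀ {v w}, G.Adj v w ↔ v ≠ w ∧ R v w) (hrefl : ∀ v, R v v) {k c : ℕ}
    (hdeg : ∀ v, {w | R v w}.ncard = k + 1)
    (hcommon : ∀ v w, v ≠ w → {u | R v u ∧ R w u}.ncard = c) :
    G.IsSRGWith (Fintype.card V) k (c - 2) c := by
  have hcn (v w : V) :
      Fintype.card (G.commonNeighbors v w) = ({u | R v u ∧ R w u} \ {v, w}).ncard := by
    rw [← Nat.card_eq_fintype_card, Nat.card_coe_set_eq]
    congr 1
    ext u
    rw [SimpleGraph.mem_commonNeighbors, hadj, hadj]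
    grind
  refine ⟨rfl, fun v => ?_, fun v w hvw => ?_, fun v w hvw hnadj => ?_⟩
  · have : G.neighborSet v = {w | R v w} \ {v} := by
      ext w
      rw [SimpleGraph.mem_neighborSet, hadj]
      grind
    rw [← SimpleGraph.card_neighborSet_eq_degree, ← Nat.card_eq_fintype_card,
      Nat.card_coe_set_eq, this, Set.ncard_sdiff_singleton_of_mem (by exact hrefl v), hdeg,
      Nat.add_sub_cancel]
  · obtain ⟨hne, hR⟩ := hadj.1 hvw
    obtain ⟨-, hR'⟩ := hadj.1 hvw.symm
    have hsub : {v, w} ⊆ {u | R v u ∧ R w u} := Set.pair_subset ⟨hrefl v, hR'⟩ ⟨hR, hrefl w⟩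
    rw [hcn, Set.ncard_sdiff hsub, hcommon v w hne, Set.ncard_pair hne]
  · have hR : ¬ R v w := fun h => hnadj (hadj.2 ⟨hvw, h⟩)
    have hR' : ¬ R w v := fun h => hnadj (hadj.2 ⟨hvw.symm, h⟩).symm
    have hdisj : Disjoint {u | R v u ∧ R w u} {v, w} := by
      rw [Set.disjoint_insert_right, Set.disjoint_singleton_right]
      exact ⟨fun h => hR' h.2, fun h => hR h.1⟩
    rw [hcn, sdiff_eq_left.2 hdisj, hcommon v w hvw]

lemma isSRGWith_of_iso {G : SimpleGraph V} {H : SimpleGraph W} [DecidableRel G.Adj]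
    [DecidableRel H.Adj] (φ : G ≃g H) {n k a c : ℕ} (h : G.IsSRGWith n k a c) :
    H.IsSRGWith n k a c := by
  have hcn (v w : V) : Fintype.card (G.commonNeighbors v w)
      = Fintype.card (H.commonNeighbors (φ v) (φ w)) :=
    Fintype.card_congr <| φ.toEquiv.subtypeEquiv fun u => by
      exact and_congr φ.map_adj_iff.symm φ.map_adj_iff.symm
  refine ⟨φ.card_eq.symm.trans h.card, fun v => ?_, fun v w hvw => ?_, fun v w hvw hnadj => ?_⟩
  · obtain ⟨v, rfl⟩ := φ.surjective v
    rw [φ.degree_eq, h.regular v]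
  all_goals
    obtain ⟨v, rfl⟩ := φ.surjective v
    obtain ⟨w, rfl⟩ := φ.surjective w
    rw [← hcn]
  · exact h.of_adj v w (φ.map_adj_iff.1 hvw)
  · exact h.of_not_adj (ne_of_apply_ne φ hvw) (mt φ.map_adj_iff.2 hnadj)

end IsSRGWith

section AffinePlane

variable {I X S : Type*} [Fintype I] [Fintype S] {ℓ : I → X → S}

/-- `ℓ` describes a finite affine plane with point set `X`: its parallel classes are indexed by `I`,
the lines of each class are labelled by `S`, and `ℓ i x` is the label of the line of class `i`
through the point `x`. Lines of different classes meet in a unique point. -/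
structure IsAffinePlane_s14 (ℓ : I → X → S) : Prop where
  card_index : Fintype.card I = Fintype.card S + 1
  bijective_pair : ∀ ⦃i j⦄, i ≠ j → Function.Bijective fun x => (ℓ i x, ℓ j x)

namespace IsAffinePlane_s14

lemma ext_of_ne (h : IsAffinePlane_s14 ℓ) {i j : I} (hij : i ≠ j) {x y : X} (hi : ℓ i x = ℓ i y)
    (hj : ℓ j x = ℓ j y) : x = y :=
  (h.bijective_pair hij).injective (Prod.ext hi hj)

lemma exists_label_eq_pair (h : IsAffinePlane_s14 ℓ) {i j : I} (hij : i ≠ j) (u w : S) :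
    ∃ x, ℓ i x = u ∧ ℓ j x = w := by
  simpa only [Prod.mk.injEq] using (h.bijective_pair hij).surjective (u, w)

lemma exists_index_ne [Nonempty S] (h : IsAffinePlane_s14 ℓ) (i : I) : ∃ j, j ≠ i := by
  have hcard : 1 < Fintype.card I := by
    rw [h.card_index]
    exact Nat.succ_lt_succ Fintype.card_pos
  exact Fintype.exists_ne_of_one_lt_card hcard i

lemma ncard_setOf_label (h : IsAffinePlane_s14 ℓ) (i : I) (p : S → Prop) :
    {x | p (ℓ i x)}.ncard = {w | p w}.ncard * Fintype.card S := by
  rcases isEmpty_or_nonempty S with hS | hS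
  · have := Function.isEmpty (ℓ i)
    rw [Set.eq_empty_of_isEmpty {x | _}, Set.ncard_empty, Fintype.card_eq_zero, mul_zero]
  obtain ⟨j, hj⟩ := h.exists_index_ne i
  let e : X ≃ S × S := .ofBijective _ (h.bijective_pair hj.symm)
  calc {x | p (ℓ i x)}.ncard = ({w | p w} ×ˢ Set.univ : Set (S × S)).ncard :=
        Nat.card_congr (e.subtypeEquiv fun x => by simp [e])
    _ = {w | p w}.ncard * Fintype.card S := by
        rw [Set.ncard_prod, Set.ncard_univ, Nat.card_eq_fintype_card]

lemma ncard_line (h : IsAffinePlane_s14 ℓ) (i : I) (w : S) :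
    {x | ℓ i x = w}.ncard = Fintype.card S := by
  simpa using h.ncard_setOf_label i (· = w)

lemma ncard_line_inter_line (h : IsAffinePlane_s14 ℓ) {i j : I} (hij : i ≠ j) (u w : S) :
    {x | ℓ i x = u ∧ ℓ j x = w}.ncard = 1 := by
  obtain ⟨x, hx, hx'⟩ := h.exists_label_eq_pair hij u w
  refine Set.ncard_eq_one.2 ⟨x, Set.eq_singleton_iff_unique_mem.2 ⟨⟨hx, hx'⟩, fun y hy => ?_⟩⟩
  exact h.ext_of_ne hij (hy.1.trans hx.symm) (hy.2.trans hx'.symm)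

lemma natCard_points [Nonempty I] (h : IsAffinePlane_s14 ℓ) : Nat.card X = Fintype.card S ^ 2 := by
  obtain ⟨i⟩ := ‹Nonempty I›
  simpa [sq] using h.ncard_setOf_label i fun _ => True

/-- Were `x` and `y` not collinear, the lines through `x` outside class `i` would meet the line of
class `i` through `y` in `card S` distinct points, one of which is `y`. -/
lemma exists_label_eq [Nonempty I] [Finite X] (h : IsAffinePlane_s14 ℓ) (x y : X) :
    ∃ i, ℓ i x = ℓ i y := by
  obtain ⟨i⟩ := ‹Nonempty I›
  by_contra! hxy
  have hz (j : {j // j ≠ i}) : ∃ z, ℓ i z = ℓ i y ∧ ℓ j z = ℓ j x :=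
    h.exists_label_eq_pair j.2.symm _ _
  choose z hzi hzj using hz
  have hinj : Function.Injective fun j => (⟨z j, hzi j⟩ : {z // ℓ i z = ℓ i y}) := by
    intro j k hjk
    have hzjk : z j = z k := congrArg Subtype.val hjk
    by_contra hne
    have : z j = x := h.ext_of_ne (Subtype.coe_injective.ne hne) (hzj j) (hzjk ▸ hzj k)
    exact hxy i (this ▸ hzi j)
  have hcard : Nat.card {j // j ≠ i} = Nat.card {z // ℓ i z = ℓ i y} := by
    rw [Nat.card_eq_fintype_card, Fintype.card_subtype_compl, Fintype.card_subtype_eq,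
      h.card_index, Nat.add_sub_cancel]
    exact (h.ncard_line i _).symm
  obtain ⟨j, hj⟩ := ((Nat.bijective_iff_injective_and_card _).2 ⟨hinj, hcard⟩).2 ⟨y, rfl⟩
  have hjy : z j = y := congrArg Subtype.val hj
  exact hxy j (by rw [← hzj j, hjy])

end IsAffinePlane_s14

end AffinePlane

/-- A *twist* is a system of permutations of the line labels, one for each pair of parallel classes,
by which the adjacency between affine vertices of these two classes is modified. -/
structure Twist (I S : Type*) where
  perm : I → I → Equiv.Perm S
  perm_self : ∀ i, perm i i = 1
  perm_swap : ∀ i j, perm j i = (perm i j)⁻¹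

section TwistedGraph

variable {I X S : Type*}

/-- The reflexive closure of adjacency in the twisted graph. The vertex `(i, some x)` is a copy of
the affine point `x` belonging to the `i`-th parallel class, and `(i, none)` is the point at
infinity of that class. -/
def twistedRel (ℓ : I → X → S) (T : Twist I S) : I × Option X → I × Option X → Prop
  | (_, none), (_, none) => True
  | (i, none), (j, some _) => i = j
  | (i, some _), (j, none) => i = j
  | (i, some x), (j, some y) => ℓ i y = T.perm i j (ℓ j x)

/-- The graph obtained from an affine plane and a twist by Fon-Der-Flaass' construction. -/
def twistedGraph (ℓ : I → X → S) (T : Twist I S) : SimpleGraph (I × Option X) :=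
  .fromRel (twistedRel ℓ T)

variable {ℓ : I → X → S} {T : Twist I S}

lemma twistedRel_refl (v : I × Option X) : twistedRel ℓ T v v := by
  rcases v with ⟨i, _ | x⟩ <;> simp [twistedRel, T.perm_self]

lemma twistedRel_symm ⦃v w : I × Option X⦄ (h : twistedRel ℓ T v w) : twistedRel ℓ T w v := by
  rcases v with ⟨i, _ | x⟩ <;> rcases w with ⟨j, _ | y⟩ <;> simp only [twistedRel] at h ⊢
  · exact h.symm
  · exact h.symm
  · rw [T.perm_swap i j, h, Equiv.Perm.inv_def, Equiv.symm_apply_apply]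

lemma twistedGraph_adj {v w : I × Option X} :
    (twistedGraph ℓ T).Adj v w ↔ v ≠ w ∧ twistedRel ℓ T v w := by
  rw [twistedGraph, SimpleGraph.fromRel_adj, or_iff_left_of_imp]
  exact (twistedRel_symm ·)

variable [Fintype I]

lemma ncard_setOf_vertex [Finite X] (p : I × Option X → Prop) :
    {v | p v}.ncard = {i | p (i, none)}.ncard + ∑ i, {x | p (i, some x)}.ncard := by
  have := Fintype.ofFinite X
  simp only [Set.ncard_eq_toFinset_card', Set.toFinset_ofPred, Finset.card_filter,
    Fintype.sum_prod_type, Fintype.sum_option, Finset.sum_add_distrib]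

variable [Fintype S]

lemma sum_ncard_setOf_eq_and (a : I) (Y : I → Set X) :
    ∑ i, {x | a = i ∧ x ∈ Y i}.ncard = (Y a).ncard := by
  rw [Finset.sum_eq_single a (fun i _ hi => by simp [hi.symm]) (by simp)]
  simp

lemma ncard_twistedRel [Finite X] (hℓ : IsAffinePlane_s14 ℓ) (v : I × Option X) :
    {w | twistedRel ℓ T v w}.ncard = Fintype.card S ^ 2 + Fintype.card S + 1 := by
  obtain ⟨a, x⟩ := v
  have : Nonempty I := ⟨a⟩
  rw [ncard_setOf_vertex]
  rcases x with _ | x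
  · have hsum : ∑ i, {_x : X | a = i}.ncard = Fintype.card S ^ 2 := by
      simpa [hℓ.natCard_points] using sum_ncard_setOf_eq_and a fun _ => (Set.univ : Set X)
    simp only [twistedRel, hsum, Set.ofPred_true, Set.ncard_univ, Nat.card_eq_fintype_card,
      hℓ.card_index]
    ring
  · simp only [twistedRel, hℓ.ncard_line, Set.ofPred_eq_eq_singleton', Set.ncard_singleton,
      Finset.sum_const, Finset.card_univ, hℓ.card_index, smul_eq_mul]
    ring

lemma ncard_twistedRel_inter_infinity [Finite X] (hℓ : IsAffinePlane_s14 ℓ) (a b : I) (y : X) :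
    {w | twistedRel ℓ T (a, none) w ∧ twistedRel ℓ T (b, some y) w}.ncard
      = Fintype.card S + 1 := by
  have hsum : ∑ i, {x | a = i ∧ ℓ b x = T.perm b i (ℓ i y)}.ncard = Fintype.card S :=
    (sum_ncard_setOf_eq_and a fun i => {x | ℓ b x = T.perm b i (ℓ i y)}).trans (hℓ.ncard_line b _)
  rw [ncard_setOf_vertex]
  simp only [twistedRel, hsum]
  simp [add_comm]

lemma ncard_twistedRel_inter_of_same_class [Finite X] (hℓ : IsAffinePlane_s14 ℓ) (a : I) {x y : X}
    (hxy : x ≠ y) :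
    {w | twistedRel ℓ T (a, some x) w ∧ twistedRel ℓ T (a, some y) w}.ncard
      = Fintype.card S + 1 := by
  have : Nonempty I := ⟨a⟩
  obtain ⟨j, hj⟩ := hℓ.exists_label_eq x y
  have hinter (i : I) : {z | ℓ a z = T.perm a i (ℓ i x) ∧ ℓ a z = T.perm a i (ℓ i y)}
      = {z | j = i ∧ ℓ a z = T.perm a i (ℓ i x)} := by
    ext z
    refine ⟨fun ⟨hx, hy⟩ => ⟨?_, hx⟩, ?_⟩
    · by_contra hji
      exact hxy (hℓ.ext_of_ne hji hj ((T.perm a i).injective (hx.symm.trans hy)))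
    · rintro ⟨rfl, hx⟩
      exact ⟨hx, hj ▸ hx⟩
  have hsum : ∑ i, {z | j = i ∧ ℓ a z = T.perm a i (ℓ i x)}.ncard = Fintype.card S :=
    (sum_ncard_setOf_eq_and j fun i => {z | ℓ a z = T.perm a i (ℓ i x)}).trans (hℓ.ncard_line a _)
  rw [ncard_setOf_vertex]
  simp only [twistedRel, hinter, hsum]
  simp [add_comm]

lemma ncard_twistedRel_inter [Finite X] (hℓ : IsAffinePlane_s14 ℓ) {v w : I × Option X}
    (hvw : v ≠ w) :
    {u | twistedRel ℓ T v u ∧ twistedRel ℓ T w u}.ncard = Fintype.card S + 1 := by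
  obtain ⟨a, _ | x⟩ := v <;> obtain ⟨b, _ | y⟩ := w
  · have hab (i : I) : ¬ (a = i ∧ b = i) := fun h => hvw (by rw [h.1, h.2])
    rw [ncard_setOf_vertex]
    simp only [twistedRel, hab]
    simp [hℓ.card_index]
  · exact ncard_twistedRel_inter_infinity hℓ a b y
  · simp only [and_comm (a := twistedRel ℓ T (a, some x) _)]
    exact ncard_twistedRel_inter_infinity hℓ b a x
  · by_cases h : a = b
    · subst h
      exact ncard_twistedRel_inter_of_same_class hℓ a (by simpa using hvw)
    · have hab (i : I) : ¬ (a = i ∧ b = i) := fun hi => h (hi.1.trans hi.2.symm)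
      rw [ncard_setOf_vertex]
      simp only [twistedRel, hab, hℓ.ncard_line_inter_line h]
      simp [hℓ.card_index]

variable [Fintype X]

lemma card_vertex [Nonempty I] (hℓ : IsAffinePlane_s14 ℓ) : Fintype.card (I × Option X)
    = Fintype.card S ^ 3 + Fintype.card S ^ 2 + Fintype.card S + 1 := by
  rw [Fintype.card_prod, Fintype.card_option, hℓ.card_index, ← Nat.card_eq_fintype_card (α := X),
    hℓ.natCard_points]
  ring

theorem isSRGWith_twistedGraph [Nonempty I] (hℓ : IsAffinePlane_s14 ℓ) :
    (twistedGraph ℓ T).IsSRGWith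
      (Fintype.card S ^ 3 + Fintype.card S ^ 2 + Fintype.card S + 1)
      (Fintype.card S ^ 2 + Fintype.card S) (Fintype.card S - 1) (Fintype.card S + 1) := by
  rw [← card_vertex hℓ]
  exact isSRGWith_of_adj_iff twistedGraph_adj twistedRel_refl (ncard_twistedRel hℓ)
    fun _ _ => ncard_twistedRel_inter hℓ

end TwistedGraph

section Cluster

variable {I X S : Type*} {ℓ : I → X → S} {T : Twist I S}

lemma isClusterVertex_infinity (i : I) : IsClusterVertex (twistedGraph ℓ T) (i, none) := by
  rintro ⟨a, _ | x⟩ ⟨b, _ | y⟩ ⟨c, _ | z⟩ <;>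
    simp only [twistedGraph_adj, twistedRel] <;> grind [T.perm_self, Equiv.Perm.one_apply]

lemma hasClusterFreeClique_of_twistedRel (x : I → X)
    (hrel : ∀ i j, twistedRel ℓ T (i, some (x i)) (j, some (x j)))
    (hx : ∀ i, ¬IsClusterVertex (twistedGraph ℓ T) (i, some (x i))) :
    HasClusterFreeClique I (twistedGraph ℓ T) :=
  ⟨⟨fun i => (i, some (x i)), fun {i j} hij =>
    twistedGraph_adj.2 ⟨fun h => hij (congrArg Prod.fst h), hrel i j⟩⟩, hx⟩

variable [Fintype I] [Fintype S]

lemma class_eq_of_adj (hℓ : IsAffinePlane_s14 ℓ) {i k : I} {x : X} {y z : Option X}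
    (hy : (twistedGraph ℓ T).Adj (i, some x) (i, y))
    (hz : (twistedGraph ℓ T).Adj (i, some x) (k, z))
    (hyz : (twistedGraph ℓ T).Adj (i, y) (k, z)) : i = k := by
  rw [twistedGraph_adj] at hy hz hyz
  obtain _ | z := z
  · exact hz.2
  obtain _ | y := y
  · exact hyz.2
  by_contra hik
  have hxy : ℓ i x = ℓ i y := by simpa [twistedRel, T.perm_self] using hy.2.symm
  have hxy' : ℓ k x = ℓ k y := (T.perm i k).injective (hz.2.symm.trans hyz.2)
  exact hy.1 (by rw [hℓ.ext_of_ne hik hxy hxy'])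

lemma isClusterVertex_affine (hℓ : IsAffinePlane_s14 ℓ) {i : I} {x : X}
    (h : ∀ ⦃a b c : I⦄ ⦃y z w : X⦄, a ≠ i → b ≠ i → c ≠ i →
      twistedRel ℓ T (i, some x) (a, some y) → twistedRel ℓ T (i, some x) (b, some z) →
      twistedRel ℓ T (i, some x) (c, some w) → twistedRel ℓ T (a, some y) (b, some z) →
      twistedRel ℓ T (b, some z) (c, some w) → twistedRel ℓ T (a, some y) (c, some w)) :
    IsClusterVertex (twistedGraph ℓ T) (i, some x) := by
  rintro ⟨a, y⟩ ⟨b, z⟩ ⟨c, w⟩ hy hz hw hyz hzw hyw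
  refine twistedGraph_adj.2 ⟨hyw, ?_⟩
  by_cases hb : b = i
  · subst hb
    obtain rfl := class_eq_of_adj hℓ hz hy hyz.symm
    obtain rfl := class_eq_of_adj hℓ hz hw hzw
    have hxy := (twistedGraph_adj.1 hy).2
    have hxw := (twistedGraph_adj.1 hw).2
    rcases y with _ | y <;> rcases w with _ | w <;>
      simp_all only [twistedRel, T.perm_self, Equiv.Perm.one_apply]
  have ha : a ≠ i := by
    rintro rfl
    exact hb (class_eq_of_adj hℓ hy hz hyz).symm
  have hc : c ≠ i := by
    rintro rfl
    exact hb (class_eq_of_adj hℓ hw hz hzw.symm).symm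
  rw [twistedGraph_adj] at *
  obtain _ | y := y
  · exact absurd hy.2.symm ha
  obtain _ | z := z
  · exact absurd hz.2.symm hb
  obtain _ | w := w
  · exact absurd hw.2.symm hc
  exact h ha hb hc hy.2 hz.2 hw.2 hyz.2 hzw.2

lemma injective_class_of_clique (hℓ : IsAffinePlane_s14 ℓ)
    (K : (⊤ : SimpleGraph I) →g twistedGraph ℓ T) (hK : ∀ a, (K a).2 ≠ none) :
    Function.Injective fun a => (K a).1 := by
  choose x hx using fun a => Option.ne_none_iff_exists'.1 (hK a)
  have hadj {a b : I} (hab : a ≠ b) :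
      (twistedGraph ℓ T).Adj ((K a).1, some (x a)) ((K b).1, some (x b)) := by
    simpa only [← hx] using K.map_adj hab
  intro a b (hab : (K a).1 = (K b).1)
  by_contra hne
  have hclass (d : I) : (K d).1 = (K a).1 := by
    by_cases hda : d = a
    · rw [hda]
    by_cases hdb : d = b
    · rw [hdb, hab]
    exact (class_eq_of_adj hℓ (hab ▸ hadj hne) (hadj (Ne.symm hda))
      (hab ▸ hadj (Ne.symm hdb))).symm
  have hlabel {d e : I} (hde : d ≠ e) : x d ≠ x e ∧ ℓ (K a).1 (x d) = ℓ (K a).1 (x e) := by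
    simpa [twistedGraph_adj, twistedRel, hclass, T.perm_self, eq_comm] using hadj hde
  have : Nonempty S := ⟨ℓ a (x a)⟩
  obtain ⟨j, hj⟩ := hℓ.exists_index_ne (K a).1
  have hinj : Function.Injective fun d => ℓ j (x d) := by
    intro d e hde
    by_contra hne
    exact (hlabel hne).1 (hℓ.ext_of_ne hj hde (hlabel hne).2)
  have hcard := Fintype.card_le_of_injective _ hinj
  rw [hℓ.card_index] at hcard
  exact Nat.not_succ_le_self _ hcard

lemma exists_points_of_hasClusterFreeClique (hℓ : IsAffinePlane_s14 ℓ)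
    (h : HasClusterFreeClique I (twistedGraph ℓ T)) : ∃ x : I → X,
      (∀ i j, twistedRel ℓ T (i, some (x i)) (j, some (x j))) ∧
      ∀ i, ¬IsClusterVertex (twistedGraph ℓ T) (i, some (x i)) := by
  obtain ⟨K, hK⟩ := h
  have hnone (a : I) : (K a).2 ≠ none := by
    intro h
    apply hK a
    rw [← Prod.mk.eta (p := K a), h]
    exact isClusterVertex_infinity _
  have hsurj := Finite.surjective_of_injective (injective_class_of_clique hℓ K hnone)
  have hpoint (i : I) : ∃ x a, K a = (i, some x) := by
    obtain ⟨a, rfl⟩ := hsurj i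
    obtain ⟨x, hx⟩ := Option.ne_none_iff_exists'.1 (hnone a)
    exact ⟨x, a, Prod.ext rfl hx⟩
  choose x a hx using hpoint
  refine ⟨x, fun i j => ?_, fun i => hx i ▸ hK (a i)⟩
  rw [← hx i, ← hx j]
  by_cases hij : a i = a j
  · rw [hij]
    exact twistedRel_refl _
  · exact (twistedGraph_adj.1 (K.map_adj hij)).2

end Cluster

/-- The twist by `τ` along the ordered pairs of classes in `P`, and by `τ⁻¹` along the
reversed pairs; the two cancel on a pair that `P` contains in both orders. -/
noncomputable def Twist.ofPairs {I S : Type*} (P : Set (I × I)) (τ : Equiv.Perm S) : Twist I S where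
  perm i j := (if (i, j) ∈ P then τ else 1) * (if (j, i) ∈ P then τ else 1)⁻¹
  perm_self _ := mul_inv_cancel _
  perm_swap _ _ := by rw [mul_inv_rev, inv_inv]

namespace Twist

variable {I S : Type*} {P : Set (I × I)} {τ : Equiv.Perm S} {i j : I}

lemma ofPairs_perm_eq_one (hij : (i, j) ∉ P) (hji : (j, i) ∉ P) : (ofPairs P τ).perm i j = 1 := by
  simp [ofPairs, hij, hji]

lemma ofPairs_perm_eq (hij : (i, j) ∈ P) (hji : (j, i) ∉ P) : (ofPairs P τ).perm i j = τ := by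
  simp [ofPairs, hij, hji]

end Twist

section FieldPlane

variable {F : Type*} [Field F]

/-- The affine plane over `F`: the class `none` consists of the vertical lines, and the class
`some m` of the lines of slope `-m`. -/
def lineLabel : Option F → F × F → F
  | none, x => x.1
  | some m, x => x.2 + m * x.1

/-- The cliques of the untwisted graph that meet every class in an affine vertex, given by the
points `transversal t i`. They are the lines of `W(q)` skew to a fixed line, that is, the graphs of
symmetric matrices: `transversal (α, β, γ) i` is the image of `(1, 0)` for `i = none` and of
`(m, 1)` for `i = some m` under `!![β, α; α, γ]`. -/
def transversal : F × F × F → Option F → F × F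
  | (α, β, _), none => (β, α)
  | (α, β, γ), some m => (α + β * m, γ + α * m)

lemma bijective_pair_lineLabel {i j : Option F} (hij : i ≠ j) :
    Function.Bijective fun x : F × F => (lineLabel i x, lineLabel j x) := by
  constructor
  · rintro ⟨x, y⟩ ⟨x', y'⟩ h
    rcases i with _ | m <;> rcases j with _ | n <;> simp only [lineLabel, Prod.mk.injEq] at h ⊢ <;>
      grind
  · rintro ⟨u, w⟩
    rcases i with _ | m <;> rcases j with _ | n
    · exact absurd rfl hij
    · exact ⟨(u, w - n * u), by simp [lineLabel]⟩
    · exact ⟨(w, u - m * w), by simp [lineLabel]⟩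
    · have hmn : m - n ≠ 0 := sub_ne_zero.2 fun h => hij (congrArg some h)
      refine ⟨((u - w) / (m - n), u - m * ((u - w) / (m - n))), ?_⟩
      simp only [lineLabel, Prod.mk.injEq]
      exact ⟨by ring, by field_simp; ring⟩

lemma isAffinePlane_lineLabel [Fintype F] : IsAffinePlane_s14 (lineLabel (F := F)) where
  card_index := Fintype.card_option
  bijective_pair _ _ := bijective_pair_lineLabel

lemma lineLabel_transversal_comm (t : F × F × F) (i j : Option F) :
    lineLabel i (transversal t j) = lineLabel j (transversal t i) := by
  rcases i with _ | m <;> rcases j with _ | n <;> simp only [lineLabel, transversal] <;>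
    ring

lemma exists_transversal {i a b : Option F} (ha : a ≠ i) (hb : b ≠ i) (x : F × F) (w : F) :
    ∃ t, transversal t i = x ∧ lineLabel a (transversal t b) = w := by
  obtain ⟨x, y⟩ := x
  rcases i with _ | n
  · obtain ⟨a, rfl⟩ := Option.ne_none_iff_exists'.1 ha
    obtain ⟨b, rfl⟩ := Option.ne_none_iff_exists'.1 hb
    refine ⟨(y, x, w - y * (a + b) - x * a * b), rfl, ?_⟩
    simp only [lineLabel, transversal]
    ring
  suffices h : ∃ β, lineLabel a (transversal (x - β * n, β, y - (x - β * n) * n) b) = w by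
    obtain ⟨β, h⟩ := h
    exact ⟨_, by simp [transversal], h⟩
  rcases a with _ | a <;> rcases b with _ | b <;> simp only [lineLabel, transversal]
  · exact ⟨w, rfl⟩
  · have hb : b - n ≠ 0 := sub_ne_zero.2 fun h => hb (congrArg some h)
    exact ⟨(w - x) / (b - n), by field_simp; ring⟩
  · have ha : a - n ≠ 0 := sub_ne_zero.2 fun h => ha (congrArg some h)
    exact ⟨(w - x) / (a - n), by field_simp; ring⟩
  · have ha : a - n ≠ 0 := sub_ne_zero.2 fun h => ha (congrArg some h)
    have hb : b - n ≠ 0 := sub_ne_zero.2 fun h => hb (congrArg some h)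
    exact ⟨(w - y - x * (a + b - n)) / ((a - n) * (b - n)), by field_simp; ring⟩

lemma eq_transversal {i j k : Option F} {t : F × F × F} {z : F × F} (hij : i ≠ j)
    (hi : lineLabel i z = lineLabel k (transversal t i))
    (hj : lineLabel j z = lineLabel k (transversal t j)) : z = transversal t k := by
  rw [lineLabel_transversal_comm] at hi hj
  exact (bijective_pair_lineLabel hij).injective (Prod.ext hi hj)

lemma exists_transversal_through {i j : Option F} (hij : i ≠ j) {x y : F × F}
    (h : lineLabel i y = lineLabel j x) : ∃ t, transversal t i = x ∧ transversal t j = y := by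
  obtain ⟨t, rfl, ht⟩ := exists_transversal hij.symm hij.symm x (lineLabel j y)
  exact ⟨t, rfl, (eq_transversal hij h ht.symm).symm⟩

end FieldPlane

section TwistedFieldPlane

variable {F : Type*} [Field F] {T : Twist (Option F) F}

lemma twistedRel_transversal {t : F × F × F} {i j : Option F} :
    twistedRel lineLabel T (i, some (transversal t i)) (j, some (transversal t j)) ↔
      T.perm i j (lineLabel j (transversal t i)) = lineLabel j (transversal t i) := by
  rw [twistedRel, lineLabel_transversal_comm t i j, eq_comm]

lemma not_isClusterVertex_of_perm_ne_one {i a b k : Option F} {x : F × F} (hia : i ≠ a)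
    (hib : i ≠ b) (hik : i ≠ k) (hak : a ≠ k) (hkb : k ≠ b)
    (ha : T.perm i a (lineLabel a x) = lineLabel a x)
    (hb : T.perm i b (lineLabel b x) = lineLabel b x)
    (hk : T.perm i k (lineLabel k x) = lineLabel k x)
    (hak1 : T.perm a k = 1) (hkb1 : T.perm k b = 1) (hab1 : T.perm a b ≠ 1) :
    ¬IsClusterVertex (twistedGraph lineLabel T) (i, some x) := by
  obtain ⟨w, hw⟩ : ∃ w, T.perm a b w ≠ w := not_forall.1 fun h => hab1 (Equiv.ext h)
  have hab : a ≠ b := by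
    rintro rfl
    exact hab1 (T.perm_self a)
  obtain ⟨t, rfl, rfl⟩ := exists_transversal hib.symm hia.symm x w
  have adj {j l : Option F} (hjl : j ≠ l) (h : T.perm j l (lineLabel l (transversal t j)) =
      lineLabel l (transversal t j)) : (twistedGraph lineLabel T).Adj
        (j, some (transversal t j)) (l, some (transversal t l)) :=
    twistedGraph_adj.2 ⟨fun e => hjl (congrArg Prod.fst e), twistedRel_transversal.2 h⟩
  intro hcluster
  have hadj := hcluster (adj hia ha) (adj hik hk) (adj hib hb)
    (adj hak (by rw [hak1, Equiv.Perm.one_apply])) (adj hkb (by rw [hkb1, Equiv.Perm.one_apply]))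
    fun e => hab (congrArg Prod.fst e)
  exact hw (twistedRel_transversal.1 (twistedGraph_adj.1 hadj).2)

lemma perm_apply_lineLabel_of_isClusterVertex {i a b k : Option F} {x : F × F} (hia : i ≠ a)
    (hib : i ≠ b) (hik : i ≠ k) (hab : a ≠ b) (hak : a ≠ k) (hbk : b ≠ k)
    (hb : T.perm i b = 1) (hk : T.perm i k = 1) (hab1 : T.perm a b = 1) (hak1 : T.perm a k = 1)
    (hbk1 : T.perm b k = 1) (h : IsClusterVertex (twistedGraph lineLabel T) (i, some x)) :
    T.perm i a (lineLabel a x) = lineLabel a x := by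
  obtain ⟨t, rfl, -⟩ := exists_transversal hia.symm hia.symm x 0
  obtain ⟨y, hy⟩ := (bijective_pair_lineLabel hib).surjective
    (T.perm i a (lineLabel a (transversal t i)), lineLabel a (transversal t b))
  obtain ⟨hyi, hyb⟩ := Prod.mk.inj hy
  have adj {j l : Option F} {u v : F × F} (hjl : j ≠ l)
      (h : lineLabel j v = T.perm j l (lineLabel l u)) :
      (twistedGraph lineLabel T).Adj (j, some u) (l, some v) :=
    twistedGraph_adj.2 ⟨fun e => hjl (congrArg Prod.fst e), h⟩
  have adj' {j l : Option F} (hjl : j ≠ l) (hone : T.perm j l = 1) :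
      (twistedGraph lineLabel T).Adj (j, some (transversal t j)) (l, some (transversal t l)) :=
    adj hjl (by rw [hone, lineLabel_transversal_comm, Equiv.Perm.one_apply])
  have hyk := h (adj hia hyi) (adj' hib hb) (adj' hik hk)
    (adj hab (by rw [hab1, Equiv.Perm.one_apply, hyb])) (adj' hbk hbk1)
    fun e => hak (congrArg Prod.fst e)
  have hky : lineLabel k y = lineLabel a (transversal t k) := by
    simpa [twistedRel, hak1, eq_comm] using (twistedGraph_adj.1 hyk).2
  rw [← hyi, eq_transversal hbk hyb hky, lineLabel_transversal_comm]

lemma isClusterVertex_of_perm_eq_one [Finite F] {i : Option F} {x : F × F}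
    (hfix : ∀ j, T.perm i j (lineLabel j x) = lineLabel j x)
    (hone : ∀ j k, j ≠ i → k ≠ i → T.perm j k = 1) :
    IsClusterVertex (twistedGraph lineLabel T) (i, some x) := by
  have := Fintype.ofFinite F
  refine isClusterVertex_affine isAffinePlane_lineLabel ?_
  intro a b c y z w ha hb hc hy hz hw hyz hzw
  simp only [twistedRel, hfix, hone a b ha hb, hone b c hb hc, hone a c ha hc,
    Equiv.Perm.one_apply] at *
  obtain ⟨t, rfl, rfl⟩ := exists_transversal_through hb.symm hz
  rw [eq_transversal hb.symm hy hyz.symm, eq_transversal hb.symm hw hzw,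
    lineLabel_transversal_comm]

end TwistedFieldPlane

lemma exists_ne_ne_ne {α : Type*} [Fintype α] (h : 3 < Fintype.card α) (a b c : α) :
    ∃ k, a ≠ k ∧ b ≠ k ∧ c ≠ k := by
  have hcard : ({a, b, c} : Finset α).card < (Finset.univ : Finset α).card :=
    Finset.card_le_three.trans_lt h
  simpa [eq_comm] using Finset.exists_mem_notMem_of_card_lt_card hcard

lemma exists_perm_card_fixed {α : Type*} [Fintype α] {f : ℕ} (hf : f + 2 ≤ Fintype.card α) :
    ∃ τ : Equiv.Perm α, τ ≠ 1 ∧ {w | τ w = w}.ncard = f := by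
  obtain ⟨τ, hτ⟩ := (Equiv.Perm.exists_with_cycleType_iff α (m := {Fintype.card α - f})).2
    ⟨by simp, by simp only [Multiset.mem_singleton, forall_eq]; omega⟩
  refine ⟨τ, ?_, ?_⟩
  · rintro rfl
    simp at hτ
  · have hcard := τ.card_fixedPoints
    rw [hτ, Multiset.sum_singleton, ← Nat.card_eq_fintype_card] at hcard
    exact hcard.trans (by omega)

section PairTwist

variable {F : Type*} [Field F] [Fintype F] {T : Twist (Option F) F} {a b : Option F}

lemma not_isClusterVertex_of_ne (hF : 3 ≤ Fintype.card F)
    (hT : ∀ i j, s(i, j) ≠ s(a, b) → T.perm i j = 1) (hne : T.perm a b ≠ 1) {i : Option F}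
    (hia : i ≠ a) (hib : i ≠ b) (x : F × F) :
    ¬IsClusterVertex (twistedGraph lineLabel T) (i, some x) := by
  obtain ⟨k, hak, hbk, hik⟩ : ∃ k : Option F, a ≠ k ∧ b ≠ k ∧ i ≠ k :=
    exists_ne_ne_ne (by rw [Fintype.card_option]; omega) a b i
  have hone (j : Option F) : T.perm i j = 1 := hT i j (by grind)
  refine not_isClusterVertex_of_perm_ne_one hia hib hik hak hbk.symm ?_ ?_ ?_
    (hT a k (by grind)) (hT k b (by grind)) hne <;>
  rw [hone, Equiv.Perm.one_apply]

lemma isClusterVertex_iff_perm_apply (hF : 3 ≤ Fintype.card F)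
    (hT : ∀ i j, s(i, j) ≠ s(a, b) → T.perm i j = 1) (hab : a ≠ b) (x : F × F) :
    IsClusterVertex (twistedGraph lineLabel T) (a, some x) ↔
      T.perm a b (lineLabel b x) = lineLabel b x := by
  have hcard : 3 < Fintype.card (Option F) := by
    rw [Fintype.card_option]
    omega
  obtain ⟨c, hac, hbc, -⟩ := exists_ne_ne_ne hcard a b b
  obtain ⟨d, had, hbd, hcd⟩ := exists_ne_ne_ne hcard a b c
  constructor
  · exact perm_apply_lineLabel_of_isClusterVertex hab hac had hbc hbd hcd (hT _ _ (by grind))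
      (hT _ _ (by grind)) (hT _ _ (by grind)) (hT _ _ (by grind)) (hT _ _ (by grind))
  · refine fun hx => isClusterVertex_of_perm_eq_one (fun j => ?_) fun j k hj hk =>
      hT j k (by grind)
    by_cases hj : j = b
    · rw [hj, hx]
    · rw [hT a j (by grind), Equiv.Perm.one_apply]

lemma ncard_isClusterVertex (hF : 3 ≤ Fintype.card F)
    (hT : ∀ i j, s(i, j) ≠ s(a, b) → T.perm i j = 1) (hab : a ≠ b) :
    {x | IsClusterVertex (twistedGraph lineLabel T) (a, some x)}.ncard
      = {w | T.perm a b w = w}.ncard * Fintype.card F := by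
  simp only [isClusterVertex_iff_perm_apply hF hT hab]
  exact isAffinePlane_lineLabel.ncard_setOf_label b fun w => T.perm a b w = w

lemma natCard_isClusterVertex (hF : 3 ≤ Fintype.card F)
    (hT : ∀ i j, s(i, j) ≠ s(a, b) → T.perm i j = 1) (hab : a ≠ b) (hne : T.perm a b ≠ 1) :
    Nat.card {v // IsClusterVertex (twistedGraph lineLabel T) v}
      = Fintype.card F + 1 + 2 * Fintype.card F * {w | T.perm a b w = w}.ncard := by
  have hfixed : {w | T.perm b a w = w} = {w | T.perm a b w = w} := by
    ext w
    simp only [Set.mem_ofPred_eq, T.perm_swap a b, Equiv.Perm.inv_eq_iff_eq, eq_comm (a := w)]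
  have hother (i : Option F) (h : i ≠ a ∧ i ≠ b) :
      {x | IsClusterVertex (twistedGraph lineLabel T) (i, some x)}.ncard = 0 := by
    simp [not_isClusterVertex_of_ne hF hT hne h.1 h.2]
  calc _ = _ := ncard_setOf_vertex (IsClusterVertex (twistedGraph lineLabel T))
    _ = Fintype.card (Option F) + ({w | T.perm a b w = w}.ncard * Fintype.card F
          + {w | T.perm b a w = w}.ncard * Fintype.card F) := by
      rw [Fintype.sum_eq_add a b hab hother, ncard_isClusterVertex hF hT hab,
        ncard_isClusterVertex hF (Sym2.eq_swap (a := b) ▸ hT) hab.symm]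
      simp [isClusterVertex_infinity]
    _ = _ := by
      rw [hfixed, Fintype.card_option]
      ring

lemma not_hasClusterFreeClique (hF : 3 ≤ Fintype.card F)
    (hT : ∀ i j, s(i, j) ≠ s(a, b) → T.perm i j = 1) (hab : a ≠ b) :
    ¬HasClusterFreeClique (Option F) (twistedGraph lineLabel T) := by
  intro h
  obtain ⟨x, hx, hcluster⟩ := exists_points_of_hasClusterFreeClique isAffinePlane_lineLabel h
  have hcard : 3 < Fintype.card (Option F) := by
    rw [Fintype.card_option]
    omega
  obtain ⟨c, hac, hbc, -⟩ := exists_ne_ne_ne hcard a b b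
  obtain ⟨d, had, hbd, hcd⟩ := exists_ne_ne_ne hcard a b c
  have hlabel {i j : Option F} (h : s(i, j) ≠ s(a, b)) : lineLabel i (x j) = lineLabel j (x i) := by
    simpa [twistedRel, hT i j h] using hx i j
  obtain ⟨t, hta, htc⟩ := exists_transversal_through hac (hlabel (by grind))
  have hxd : x d = transversal t d :=
    eq_transversal hac (by rw [hta, hlabel (by grind)]) (by rw [htc, hlabel (by grind)])
  have hxb : x b = transversal t b :=
    eq_transversal hcd (by rw [htc, hlabel (by grind)]) (by rw [← hxd, hlabel (by grind)])
  have hrel := hx a b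
  rw [← hta, hxb, twistedRel_transversal, hta] at hrel
  exact hcluster a ((isClusterVertex_iff_perm_apply hF hT hab (x a)).2 hrel)

end PairTwist

section TwoPairTwist

variable {F : Type*} [Field F] {T : Twist (Option F) F} {a b c d : Option F} {t : F × F × F}

lemma not_isClusterVertex_transversal
    (hT : ∀ i j, s(i, j) ≠ s(a, b) → s(i, j) ≠ s(c, d) → T.perm i j = 1) (hab : a ≠ b)
    (hac : a ≠ c) (had : a ≠ d) (hbc : b ≠ c) (hbd : b ≠ d) (hne : T.perm c d ≠ 1)
    (ht : ∀ i j, twistedRel lineLabel T (i, some (transversal t i)) (j, some (transversal t j)))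
    {i : Option F} (hic : i ≠ c) (hid : i ≠ d) :
    ¬IsClusterVertex (twistedGraph lineLabel T) (i, some (transversal t i)) := by
  obtain ⟨k, hk, hik⟩ : ∃ k, (k = a ∨ k = b) ∧ i ≠ k := by
    by_cases hia : i = a
    · exact ⟨b, .inr rfl, hia ▸ hab⟩
    · exact ⟨a, .inl rfl, hia⟩
  simp only [twistedRel_transversal] at ht
  exact not_isClusterVertex_of_perm_ne_one hic hid hik (by grind) (by grind) (ht i c) (ht i d)
    (ht i k) (hT c k (by grind) (by grind)) (hT k d (by grind) (by grind)) hne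

lemma hasClusterFreeClique_of_transversal
    (hT : ∀ i j, s(i, j) ≠ s(a, b) → s(i, j) ≠ s(c, d) → T.perm i j = 1) (hab : a ≠ b)
    (hac : a ≠ c) (had : a ≠ d) (hbc : b ≠ c) (hbd : b ≠ d) (hcd : c ≠ d)
    (hneab : T.perm a b ≠ 1) (hnecd : T.perm c d ≠ 1)
    (htab : T.perm a b (lineLabel b (transversal t a)) = lineLabel b (transversal t a))
    (htcd : T.perm c d (lineLabel d (transversal t c)) = lineLabel d (transversal t c)) :
    HasClusterFreeClique (Option F) (twistedGraph lineLabel T) := by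
  have ht (i j : Option F) :
      twistedRel lineLabel T (i, some (transversal t i)) (j, some (transversal t j)) := by
    by_cases hijab : s(i, j) = s(a, b)
    · rcases Sym2.eq_iff.1 hijab with ⟨rfl, rfl⟩ | ⟨rfl, rfl⟩
      · exact twistedRel_transversal.2 htab
      · exact twistedRel_symm (twistedRel_transversal.2 htab)
    by_cases hijcd : s(i, j) = s(c, d)
    · rcases Sym2.eq_iff.1 hijcd with ⟨rfl, rfl⟩ | ⟨rfl, rfl⟩
      · exact twistedRel_transversal.2 htcd
      · exact twistedRel_symm (twistedRel_transversal.2 htcd)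
    rw [twistedRel_transversal, hT i j hijab hijcd, Equiv.Perm.one_apply]
  refine hasClusterFreeClique_of_twistedRel (transversal t) ht fun i => ?_
  by_cases hi : i ≠ c ∧ i ≠ d
  · exact not_isClusterVertex_transversal hT hab hac had hbc hbd hnecd ht hi.1 hi.2
  · exact not_isClusterVertex_transversal (fun i j h h' => hT i j h' h) hcd hac.symm hbc.symm
      had.symm hbd.symm hneab ht (by grind) (by grind)

end TwoPairTwist

section Family

variable {F : Type*} [Field F] [Fintype F]

lemma exists_twist_natCard_isClusterVertex (hF : 3 ≤ Fintype.card F) {f : ℕ}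
    (hf : f + 2 ≤ Fintype.card F) : ∃ T : Twist (Option F) F,
      (∃ v, ¬IsClusterVertex (twistedGraph lineLabel T) v) ∧
      ¬HasClusterFreeClique (Option F) (twistedGraph lineLabel T) ∧
      Nat.card {v // IsClusterVertex (twistedGraph lineLabel T) v}
        = Fintype.card F + 1 + 2 * Fintype.card F * f := by
  obtain ⟨τ, hτ, rfl⟩ := exists_perm_card_fixed hf
  let T : Twist (Option F) F := .ofPairs {(none, some 0)} τ
  have hT (i j : Option F) (h : s(i, j) ≠ s(none, some 0)) : T.perm i j = 1 :=
    Twist.ofPairs_perm_eq_one (by grind) (by grind)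
  have hTτ : T.perm none (some 0) = τ := Twist.ofPairs_perm_eq rfl (by simp)
  have hab : (none : Option F) ≠ some 0 := (Option.some_ne_none 0).symm
  have hne : T.perm none (some 0) ≠ 1 := hTτ ▸ hτ
  refine ⟨T, ⟨(some 1, some 0), ?_⟩, not_hasClusterFreeClique hF hT hab, ?_⟩
  · exact not_isClusterVertex_of_ne hF hT hne (Option.some_ne_none 1) (by simp) 0
  · rw [natCard_isClusterVertex hF hT hab hne, hTτ]

lemma exists_twist_hasClusterFreeClique (hF : 3 ≤ Fintype.card F) :
    ∃ T : Twist (Option F) F, HasClusterFreeClique (Option F) (twistedGraph lineLabel T) := by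
  obtain ⟨τ, hτ, hfix⟩ := exists_perm_card_fixed (f := 1) hF
  obtain ⟨w, hw : τ w = w⟩ := Set.nonempty_of_ncard_ne_zero (hfix ▸ one_ne_zero)
  obtain ⟨e, he0, he1⟩ : ∃ e : F, e ≠ 0 ∧ e ≠ 1 := by
    have hcard : ({0, 1} : Finset F).card < (Finset.univ : Finset F).card :=
      Finset.card_le_two.trans_lt hF
    simpa using Finset.exists_mem_notMem_of_card_lt_card hcard
  let T : Twist (Option F) F := .ofPairs {(none, some 0), (some 1, some e)} τ
  have hTab : T.perm none (some 0) = τ := Twist.ofPairs_perm_eq (by simp) (by simp)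
  have hTcd : T.perm (some 1) (some e) = τ := Twist.ofPairs_perm_eq (by simp) (by simp [he1])
  refine ⟨T, hasClusterFreeClique_of_transversal (a := none) (b := some 0) (c := some 1)
    (d := some e) (t := (w, 0, w - w * (1 + e))) ?_ ?_ ?_ ?_ ?_ ?_ ?_ (hTab ▸ hτ) (hTcd ▸ hτ) ?_ ?_⟩
  · intro i j h h'
    exact Twist.ofPairs_perm_eq_one (by grind) (by grind)
  · simp
  · simp
  · simp
  · simp
  · simp [he0.symm]
  · simp [he1.symm]
  · simp [hTab, lineLabel, transversal, hw]
  · have : lineLabel (some e) (transversal (w, 0, w - w * (1 + e)) (some 1)) = w := by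
      simp only [lineLabel, transversal]
      ring
    rw [hTcd, this, hw]

lemma exists_pairwise_nonisomorphic_twists (hF : 3 ≤ Fintype.card F) :
    ∃ T : Option (Fin (Fintype.card F - 1)) → Twist (Option F) F,
      (∀ i, ∃ v, ¬IsClusterVertex (twistedGraph lineLabel (T i)) v) ∧
      ∀ i j, Nonempty (twistedGraph lineLabel (T i) ≃g twistedGraph lineLabel (T j)) → i = j := by
  obtain ⟨T₀, h₀⟩ := exists_twist_hasClusterFreeClique hF
  choose T hcluster hclique hcard using fun f : Fin (Fintype.card F - 1) =>
    exists_twist_natCard_isClusterVertex hF (f := f) (by omega)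
  refine ⟨fun i => i.elim T₀ T, ?_, ?_⟩
  · rintro (_ | f)
    · obtain ⟨K, hK⟩ := h₀
      exact ⟨K none, hK none⟩
    · exact hcluster f
  · rintro (_ | f) (_ | g) ⟨φ⟩
    · rfl
    · exact (hclique g (h₀.of_iso φ)).elim
    · exact (hclique f (h₀.of_iso φ.symm)).elim
    · have hfg := natCard_isClusterVertex_congr φ
      simp only [Option.elim_some, hcard, add_right_inj] at hfg
      exact congrArg some (Fin.ext (Nat.eq_of_mul_eq_mul_left (by omega) hfg))

end Family

/-- for `q ≥ 3` there exist `q` pairwise non-isomorphic strongly regular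
graphs with parameters `(q³+q²+q+1, q²+q, q−1, q+1)` (hence cospectral with `Sp(4,q)`),
none of which is the collinearity graph of a generalized quadrangle of order `(q,q)`;
in particular none is isomorphic to `Sp(4,q)`. -/
theorem exists_q_cospectral_mates_of_Wq (F : Type) [Field F] [Fintype F] (q : ℕ)
    (hq : Fintype.card F = q) (hq3 : 3 ≤ q) :
    ∃ G : Fin q → SimpleGraph (Fin (q ^ 3 + q ^ 2 + q + 1)),
      (∀ i, (G i).IsSRGWith (q ^ 3 + q ^ 2 + q + 1) (q ^ 2 + q) (q - 1) (q + 1)) ∧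
      (∀ i j, i ≠ j → ¬ Nonempty (G i ≃g G j)) ∧
      (∀ i, ∀ Q : GenQuadrangle q q, ¬ Nonempty (G i ≃g Q.collinearityGraph)) ∧
      (∀ i, ¬ Nonempty (G i ≃g spGraph F)) := by
  subst hq
  obtain ⟨T, hT, hiso⟩ := exists_pairwise_nonisomorphic_twists hq3
  have e : Fin (Fintype.card F) ≃ Option (Fin (Fintype.card F - 1)) :=
    Fintype.equivOfCardEq (by simp only [Fintype.card_fin, Fintype.card_option]; omega)
  let G (i : Fin (Fintype.card F)) :=
    (twistedGraph lineLabel (T (e i))).overFin (card_vertex isAffinePlane_lineLabel)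
  let φ (i) : twistedGraph lineLabel (T (e i)) ≃g G i := SimpleGraph.overFinIso _ _
  have hmate {V : Type} {H : SimpleGraph V} (hH : ∀ v, IsClusterVertex H v) (i) :
      ¬ Nonempty (G i ≃g H) := by
    rintro ⟨ψ⟩
    obtain ⟨v, hv⟩ := hT (e i)
    exact hv (.of_iso ((φ i).trans ψ) (hH _))
  refine ⟨G, fun i => isSRGWith_of_iso (φ i) (isSRGWith_twistedGraph isAffinePlane_lineLabel),
    ?_, fun i Q => hmate Q.isClusterVertex_collinearityGraph i, hmate isClusterVertex_spGraph⟩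
  rintro i j hij ⟨ψ⟩
  exact hij (e.injective (hiso _ _ ⟨((φ i).trans ψ).trans (φ j).symm⟩))
end
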